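/- (Minimax lower bound over second-order regularly varying distributions.) For every α ∈ (0,1) and every 0 < β < α/2 there exists a constant C(α,β), depending only on (α,β), such that for every n ≥ max(4, (12α)^{1/(1−α)}), every r ≥ 1, every 0 < C ≤ 1/(64π Γ(1−α)), every C' > C(α,β), every measurable estimator θ̂_r : ℕ^n → ℝ, and every measurable h : ℝ → ℝ, one has sup over P ∈ Σ(α,β,C,C') of P_P( √(n^α L_α(P)) · ℓ(θ̂_r(X_n), θ_r(P;X_n)) > √C · min( r/(8√(6α)), n^{α/2}/2 ) ) ≥ 1/4. -/

import Mathlib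

/-!
Consider random distributions in which about `n ^ α` atoms sit on independently chosen rungs of a
geometric ladder of masses `v₀ * exp (-δ * i)`, with `δ` of order `n ^ (-α / 2)`. Given a sample,
move every atom that was not observed one rung up, and scale the unobserved light atoms by `exp δ`
as well, at the expense of a reservoir atom. The sample, hence the estimate, is unchanged, while the
`r`-order missing mass is multiplied by `exp (δ * r)`: the estimate has a large loss before or after
the shift. The probabilities of the rungs are the increments of a sigmoid in the Laplace variable
`n * v`, centred at the critical mass `1 / n`, so that the expected log-likelihood ratio of the
shift telescopes to a small constant of order `δ ^ 2 * n ^ α`. By Hoeffding's inequality the random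
tail function stays within `n ^ (α / 2 + η)` of a power law, which puts a typical distribution into
the class because `β < α / 2`. For bounded `n` it is enough to take a reservoir so heavy that the
sample is constant with positive probability.
-/

open MeasureTheory ProbabilityTheory Real Filter ENNReal

noncomputable section

/-- The law of an i.i.d. sample of size `n` from the discrete distribution `P` on `ℕ`. -/
def sampleMeasure (P : PMF ℕ) (n : ℕ) : Measure (Fin n → ℕ) :=
  Measure.pi fun _ => P.toMeasure

/-- The probability mass of symbol `j` under `P`, as a real number. -/
def pReal (P : PMF ℕ) (j : ℕ) : ℝ := (P j).toReal

/-- Empirical frequency of the symbol `j` in the sample `ω`. -/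
def freq {n : ℕ} (ω : Fin n → ℕ) (j : ℕ) : ℕ :=
  (Finset.univ.filter fun i => ω i = j).card

/-- The `r`-order missing mass `θ_r(P; X_n)`. -/
def missingMass (p : ℕ → ℝ) (r : ℕ) {n : ℕ} (ω : Fin n → ℕ) : ℝ :=
  ∑' j, p j ^ r * (if freq ω j = 0 then 1 else 0)

/-- `M_{n,r}`: the number of distinct symbols appearing exactly `r` times in the sample. -/
def Mcount {n : ℕ} (ω : Fin n → ℕ) (r : ℕ) : ℝ :=
  ∑' j, if freq ω j = r then 1 else 0

/-- The Good–Turing-type estimator `θ̂_r^{GT}(X_n) = M_{n,r} / (n choose r)`. -/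
def gtEst {n : ℕ} (ω : Fin n → ℕ) (r : ℕ) : ℝ := Mcount ω r / (n.choose r)

/-- The multiplicative (relative) loss: `ℓ(t, θ) = |t/θ - 1|` if `θ > 0`, and `h t` otherwise. -/
def mloss (h : ℝ → ℝ) (t θ : ℝ) : ℝ := if 0 < θ then |t / θ - 1| else h t

/-- The tail function `F̄_P(x) = #{j : p_j > x}`. -/
def tailF (P : PMF ℕ) (x : ℝ) : ℕ := Set.ncard {j | x < pReal P j}

/-- `P ∈ Σ(α,β,C,C')` with `Lα = L_α(P) = lim_{x→0} x^α F̄_P(x)`. -/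
def inSigmaClass (α β C C' : ℝ) (P : PMF ℕ) (Lα : ℝ) : Prop :=
  Tendsto (fun x => x ^ α * (tailF P x : ℝ)) (nhdsWithin 0 (Set.Ioi 0)) (nhds Lα) ∧
  C ≤ Lα ∧
  ∀ x ∈ Set.Ioo (0 : ℝ) 1,
    x ^ (-β) * |(tailF P x : ℝ) / (Lα * x ^ (-α)) - 1| ≤ C'

/-! ### A change of measure along a partial injection -/

lemma three_quarters_sub_le_exp (x : ℝ) : 3 / 4 - 4 * (exp x - 1 - x) ≤ exp x := by
  have tangent := add_one_le_exp (x + Real.log (5 / 4))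
  rw [exp_add, Real.exp_log (by norm_num)] at tangent
  have log_bound := one_sub_inv_le_log_of_pos (show (0 : ℝ) < 5 / 4 by norm_num)
  norm_num at log_bound
  linarith

section ChangeOfMeasure

variable {X Y : Type*} [Countable X] [MeasurableSpace X] [MeasurableSingletonClass X]
  [MeasurableSpace Y] [MeasurableSingletonClass Y] {μ : Measure X} {ν : Measure Y}
  {T : X → Y} {E : Set X}

lemma setLIntegral_le_measure_image (hT : E.InjOn T) {f : X → ℝ≥0∞}
    (hf : ∀ x ∈ E, f x * μ {x} ≤ ν {T x}) : ∫⁻ x in E, f x ∂μ ≤ ν (T '' E) := by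
  have image_eq : T '' E = ⋃ x ∈ E, {T x} := by
    rw [← Set.image_eq_iUnion]
  have disj : E.PairwiseDisjoint fun x => ({T x} : Set Y) := fun x hx y hy hxy =>
    Set.disjoint_singleton.2 fun h => hxy (hT hx hy h)
  rw [lintegral_countable _ E.to_countable, image_eq,
    measure_biUnion E.to_countable disj fun _ _ => measurableSet_singleton _]
  exact ENNReal.tsum_le_tsum fun x => hf x x.2

lemma setIntegral_tangent_le_add [IsProbabilityMeasure μ] {l : X → ℝ} (hl : Integrable l μ)
    (hexp : Integrable (fun x => exp (l x)) μ) (A : Set X) :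
    ∫ x in E, (3 / 4 - 4 * (exp (l x) - 1 - l x)) ∂μ
      ≤ ∫ x in E ∩ A, exp (l x) ∂μ + μ.real Aᶜ := by
  set f : X → ℝ := fun x => 3 / 4 - 4 * (exp (l x) - 1 - l x)
  have int_f : Integrable f μ :=
    (integrable_const _).sub (((hexp.sub (integrable_const _)).sub hl).const_mul 4)
  have f_inter : ∫ x in E ∩ A, f x ∂μ ≤ ∫ x in E ∩ A, exp (l x) ∂μ :=
    integral_mono int_f.integrableOn hexp.integrableOn fun x => three_quarters_sub_le_exp _
  have f_le (x : X) : f x ≤ 1 := by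
    have := add_one_le_exp (l x)
    simp only [f]
    linarith
  have f_diff : ∫ x in E \ A, f x ∂μ ≤ μ.real Aᶜ :=
    calc ∫ x in E \ A, f x ∂μ ≤ ∫ _ in E \ A, (1 : ℝ) ∂μ :=
          integral_mono int_f.integrableOn (integrable_const _) f_le
      _ = μ.real (E \ A) := by simp
      _ ≤ μ.real Aᶜ := measureReal_mono fun x hx => hx.2
  linarith [integral_inter_add_sdiff A.to_countable.measurableSet int_f.integrableOn (s := E)]

variable [IsProbabilityMeasure ν]

lemma setIntegral_exp_le_measureReal_image (hT : E.InjOn T) {l : X → ℝ}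
    (hμν : ∀ x ∈ E, ENNReal.ofReal (exp (l x)) * μ {x} ≤ ν {T x}) :
    ∫ x in E, exp (l x) ∂μ ≤ ν.real (T '' E) := by
  rw [integral_eq_lintegral_of_nonneg_ae (ae_of_all _ fun _ => (exp_pos _).le)
    (measurable_of_countable _).aestronglyMeasurable]
  exact ENNReal.toReal_mono (measure_ne_top _ _) (setLIntegral_le_measure_image hT hμν)

/-- Le Cam's two-point bound, where instead of comparing `μ` and `ν` directly one compares `ν` with
the image of `μ` under a map `T` that carries the event `A` outside `B`. -/
theorem le_measureReal_compl_add_measureReal_compl [IsProbabilityMeasure μ] (hT : E.InjOn T)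
    {l : X → ℝ} {K : ℝ} (hl : Integrable l μ) (hlK : ∀ x, l x ≤ K)
    (hμν : ∀ x ∈ E, ENNReal.ofReal (exp (l x)) * μ {x} ≤ ν {T x})
    {A : Set X} {B : Set Y} (hAB : ∀ x ∈ E, x ∈ A → T x ∉ B) :
    3 / 4 + 4 * ∫ x, l x ∂μ - (5 + 4 * K) * μ.real Eᶜ ≤ μ.real Aᶜ + ν.real Bᶜ := by
  have meas_E : MeasurableSet E := E.to_countable.measurableSet
  have int_exp : Integrable (fun x => exp (l x)) μ :=
    .of_bound (measurable_of_countable _).aestronglyMeasurable (exp K)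
      (ae_of_all _ fun x => by simpa using hlK x)
  have exp_E : ∫ x in E, exp (l x) ∂μ ≤ 1 :=
    (setIntegral_exp_le_measureReal_image hT hμν).trans measureReal_le_one
  have exp_inter : ∫ x in E ∩ A, exp (l x) ∂μ ≤ ν.real Bᶜ := by
    refine (setIntegral_exp_le_measureReal_image (hT.mono Set.inter_subset_left)
      fun x hx => hμν x hx.1).trans (measureReal_mono ?_)
    rintro _ ⟨x, hx, rfl⟩
    exact hAB x hx.1 hx.2
  have l_compl : ∫ x in Eᶜ, l x ∂μ ≤ K * μ.real Eᶜ := by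
    have := setIntegral_mono (s := Eᶜ) hl.integrableOn (integrable_const K).integrableOn hlK
    rwa [setIntegral_const, smul_eq_mul, mul_comm] at this
  have l_split := integral_add_compl meas_E hl
  have E_compl := probReal_compl_eq_one_sub (μ := μ) meas_E
  have tangent_eq : ∫ x in E, (3 / 4 - 4 * (exp (l x) - 1 - l x)) ∂μ
      = (3 / 4 + 4) * μ.real E - 4 * ∫ x in E, exp (l x) ∂μ + 4 * ∫ x in E, l x ∂μ := by
    have int_4exp : Integrable (fun x => 4 * exp (l x)) μ := int_exp.const_mul 4
    have int_4l : Integrable (fun x => 4 * l x) μ := hl.const_mul 4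
    have int_left : Integrable (fun x => (3 / 4 + 4) - 4 * exp (l x)) μ :=
      (integrable_const _).sub int_4exp
    rw [← integral_const_mul, ← integral_const_mul, mul_comm, ← smul_eq_mul, ← setIntegral_const,
      ← integral_sub (integrable_const _) int_4exp.integrableOn,
      ← integral_add int_left.integrableOn int_4l.integrableOn]
    exact integral_congr_ae (ae_of_all _ fun x => by ring)
  have tangent_le := setIntegral_tangent_le_add (E := E) hl int_exp A
  have := measureReal_nonneg (μ := μ) (s := Eᶜ)
  linarith

end ChangeOfMeasure

/-! ### Samples, missing mass and loss -/

/-- The distribution on `ℕ` with real point masses `p`. -/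
def pmfOfReal (p : ℕ → ℝ) (hp : ∀ j, 0 ≤ p j) (hp1 : HasSum p 1) : PMF ℕ :=
  ⟨fun j => ENNReal.ofReal (p j), by
    rw [← ENNReal.ofReal_one, ← hp1.tsum_eq, ENNReal.ofReal_tsum_of_nonneg hp hp1.summable]
    exact ENNReal.summable.hasSum⟩

lemma pReal_pmfOfReal (p : ℕ → ℝ) (hp : ∀ j, 0 ≤ p j) (hp1 : HasSum p 1) :
    pReal (pmfOfReal p hp hp1) = p :=
  funext fun j => ENNReal.toReal_ofReal (hp j)

lemma toMeasure_real_singleton (P : PMF ℕ) (j : ℕ) : P.toMeasure.real {j} = pReal P j := by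
  rw [measureReal_def, PMF.toMeasure_apply_singleton _ _ (measurableSet_singleton j), pReal]

lemma toMeasure_real_compl_singleton (P : PMF ℕ) (j : ℕ) :
    P.toMeasure.real {j}ᶜ = 1 - pReal P j := by
  rw [probReal_compl_eq_one_sub (measurableSet_singleton j), toMeasure_real_singleton]

lemma toMeasure_real_range (P : PMF ℕ) {f : ℕ → ℕ} (hf : f.Injective) :
    P.toMeasure.real (Set.range f) = ∑' k, pReal P (f k) := by
  have range_eq : Set.range f = ⋃ k, {f k} := (Set.iUnion_singleton_eq_range f).symm
  rw [measureReal_def, range_eq, measure_iUnion (fun i j hij => by simpa using hf.ne hij)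
    fun k => measurableSet_singleton _, ENNReal.tsum_toReal_eq fun k => measure_ne_top _ _]
  exact tsum_congr fun k => toMeasure_real_singleton P (f k)

section Sample

variable (P : PMF ℕ) {n : ℕ}

instance (n : ℕ) : IsProbabilityMeasure (sampleMeasure P n) := by
  unfold sampleMeasure
  infer_instance

lemma sampleMeasure_real_pi (B : Fin n → Set ℕ) :
    (sampleMeasure P n).real (Set.univ.pi B) = ∏ i, P.toMeasure.real (B i) := by
  rw [measureReal_def, sampleMeasure, Measure.pi_pi, ENNReal.toReal_prod]
  rfl

lemma sampleMeasure_real_singleton (ω : Fin n → ℕ) :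
    (sampleMeasure P n).real {ω} = ∏ i, pReal P (ω i) := by
  rw [← Set.univ_pi_singleton, sampleMeasure_real_pi]
  exact Finset.prod_congr rfl fun i _ => toMeasure_real_singleton P (ω i)

lemma sampleMeasure_real_eval_mem (i : Fin n) (B : Set ℕ) :
    (sampleMeasure P n).real {ω | ω i ∈ B} = P.toMeasure.real B :=
  (measurePreserving_eval (fun _ : Fin n => P.toMeasure) i).measureReal_preimage
    B.to_countable.measurableSet.nullMeasurableSet

/-- The symbol `j` does not occur in the sample `ω`. -/
def Unseen (ω : Fin n → ℕ) (j : ℕ) : Prop := ∀ i, ω i ≠ j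

lemma freq_eq_zero_iff {ω : Fin n → ℕ} {j : ℕ} : freq ω j = 0 ↔ Unseen ω j := by
  simp [freq, Unseen, Finset.filter_eq_empty_iff]

lemma exists_unseen (ω : Fin n → ℕ) : ∃ j, Unseen ω j := by
  obtain ⟨j, hj⟩ := Infinite.exists_notMem_finset (Finset.univ.image ω)
  exact ⟨j, fun i hi => hj (Finset.mem_image.2 ⟨i, Finset.mem_univ _, hi⟩)⟩

lemma sampleMeasure_real_unseen (j : ℕ) :
    (sampleMeasure P n).real {ω | Unseen ω j} = (1 - pReal P j) ^ n := by
  have : {ω : Fin n → ℕ | Unseen ω j} = Set.univ.pi fun _ => {j}ᶜ := by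
    ext
    simp [Unseen]
  rw [this, sampleMeasure_real_pi]
  simp [toMeasure_real_compl_singleton]

lemma sampleMeasure_real_eval_eq_and_unseen (i : Fin n) {k j : ℕ} (hkj : k ≠ j) :
    (sampleMeasure P n).real {ω | ω i = k ∧ Unseen ω j}
      = pReal P k * (1 - pReal P j) ^ (n - 1) := by
  classical
  have : {ω : Fin n → ℕ | ω i = k ∧ Unseen ω j}
      = Set.univ.pi (Function.update (fun _ => {j}ᶜ) i {k}) := by
    ext ω
    rw [Set.mem_ofPred_eq, Set.mem_univ_pi]
    constructor
    · rintro ⟨hi, hj⟩ i'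
      obtain rfl | h := eq_or_ne i' i
      · simpa using hi
      · simpa [h] using hj i'
    · intro h
      have hi : ω i = k := by simpa using h i
      refine ⟨hi, fun i' => ?_⟩
      obtain rfl | h' := eq_or_ne i' i
      · rwa [hi]
      · simpa [h'] using h i'
  rw [this, sampleMeasure_real_pi, ← Finset.mul_prod_erase Finset.univ _ (Finset.mem_univ i),
    Function.update_self, toMeasure_real_singleton,
    Finset.prod_congr rfl (g := fun _ => 1 - pReal P j)]
  · simp
  · intro i' hi'
    rw [Function.update_of_ne (Finset.ne_of_mem_erase hi'), toMeasure_real_compl_singleton]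

variable {P}

lemma missingMass_pos (hP : ∀ j, 0 < pReal P j) {r : ℕ} (hr : 1 ≤ r) (ω : Fin n → ℕ) :
    0 < missingMass (pReal P) r ω := by
  have mass_le_one (j) : pReal P j ≤ 1 := ENNReal.toReal_mono one_ne_top (P.coe_le_one j)
  have term_nonneg (j) : 0 ≤ pReal P j ^ r * (if freq ω j = 0 then 1 else 0) :=
    mul_nonneg (pow_nonneg (hP j).le r) (by split_ifs <;> simp)
  have summable : Summable fun j => pReal P j ^ r * (if freq ω j = 0 then 1 else 0) := by
    refine .of_nonneg_of_le term_nonneg (fun j => ?_) (ENNReal.summable_toReal P.tsum_coe_ne_top)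
    have := pow_le_of_le_one (hP j).le (mass_le_one j) (Nat.one_le_iff_ne_zero.1 hr)
    change _ ≤ pReal P j
    split_ifs
    · rwa [mul_one]
    · rw [mul_zero]
      exact (hP j).le
  obtain ⟨j, hj⟩ := exists_unseen ω
  refine summable.tsum_pos term_nonneg j ?_
  simpa [freq_eq_zero_iff.2 hj] using pow_pos (hP j) r

lemma missingMass_eq_pow_mul {p q : ℕ → ℝ} {a : ℝ} {ω : Fin n → ℕ}
    (hpq : ∀ j, Unseen ω j → q j = a * p j) (r : ℕ) :
    missingMass q r ω = a ^ r * missingMass p r ω := by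
  rw [missingMass, missingMass, ← tsum_mul_left]
  refine tsum_congr fun j => ?_
  split_ifs with hj
  · rw [hpq j (freq_eq_zero_iff.1 hj), mul_pow, mul_assoc]
  · simp only [mul_zero]

end Sample

lemma not_mloss_le_of_one_add_three_mul_le {h : ℝ → ℝ} {t θ θ' ε : ℝ} (hθ : 0 < θ) (hε : 0 < ε)
    (hε' : ε < 1 / 3) (hθθ' : (1 + 3 * ε) * θ ≤ θ') (hloss : mloss h t θ ≤ ε) :
    ¬ mloss h t θ' ≤ ε := by
  intro hloss'
  have hθ' : 0 < θ' := lt_of_lt_of_le (by positivity) hθθ'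
  rw [mloss, if_pos hθ, abs_le] at hloss
  rw [mloss, if_pos hθ', abs_le] at hloss'
  have upper : t ≤ (1 + ε) * θ := by
    rw [← div_le_iff₀ hθ]
    linarith
  have lower : (1 - ε) * θ' ≤ t := by
    rw [← le_div_iff₀ hθ']
    linarith
  have : (1 - ε) * ((1 + 3 * ε) * θ) ≤ (1 - ε) * θ' := by gcongr; linarith
  nlinarith [mul_pos hε hθ, mul_pos (mul_pos hε hθ) (sub_pos.2 hε')]

section SigmaClass

variable {α β L K : ℝ} {P : PMF ℕ}

lemma tendsto_rpow_mul_tailF (hβ : 0 < β)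
    (hP : ∀ x ∈ Set.Ioo (0 : ℝ) 1, |(tailF P x : ℝ) - L * x ^ (-α)| ≤ K * x ^ (β - α)) :
    Tendsto (fun x => x ^ α * (tailF P x : ℝ)) (nhdsWithin 0 (Set.Ioi 0)) (nhds L) := by
  have bound_tendsto : Tendsto (fun x : ℝ => K * x ^ β) (nhdsWithin 0 (Set.Ioi 0)) (nhds 0) := by
    have : Tendsto (fun x : ℝ => K * x ^ β) (nhds 0) (nhds (K * (0 : ℝ) ^ β)) :=
      (continuousAt_rpow_const 0 β (.inr hβ.le)).tendsto.const_mul K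
    rw [zero_rpow hβ.ne', mul_zero] at this
    exact this.mono_left nhdsWithin_le_nhds
  rw [tendsto_iff_norm_sub_tendsto_zero]
  refine squeeze_zero' (.of_forall fun _ => norm_nonneg _) ?_ bound_tendsto
  filter_upwards [Ioo_mem_nhdsGT one_pos] with x hx
  have factor : x ^ α * (tailF P x : ℝ) - L = x ^ α * ((tailF P x : ℝ) - L * x ^ (-α)) := by
    rw [mul_sub, mul_left_comm, ← rpow_add hx.1, add_neg_cancel, Real.rpow_zero, mul_one]
  rw [factor, norm_mul, norm_eq_abs, norm_eq_abs, abs_of_pos (rpow_pos_of_pos hx.1 _)]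
  calc x ^ α * |(tailF P x : ℝ) - L * x ^ (-α)|
      ≤ x ^ α * (K * x ^ (β - α)) :=
        mul_le_mul_of_nonneg_left (hP x hx) (rpow_pos_of_pos hx.1 _).le
    _ = K * x ^ β := by rw [mul_left_comm, ← rpow_add hx.1, add_sub_cancel]

lemma inSigmaClass_of_abs_sub_le (hβ : 0 < β) {C C' : ℝ} (hL : 1 ≤ L) (hC : C ≤ 1) (hC' : K ≤ C')
    (hP : ∀ x ∈ Set.Ioo (0 : ℝ) 1, |(tailF P x : ℝ) - L * x ^ (-α)| ≤ K * x ^ (β - α)) :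
    inSigmaClass α β C C' P L := by
  refine ⟨tendsto_rpow_mul_tailF hβ hP, hC.trans hL, fun x hx => ?_⟩
  have hxα : 0 < x ^ (-α) := rpow_pos_of_pos hx.1 _
  have main_pos : 0 < L * x ^ (-α) := by positivity
  rw [div_sub_one main_pos.ne', abs_div, abs_of_pos main_pos]
  calc x ^ (-β) * (|(tailF P x : ℝ) - L * x ^ (-α)| / (L * x ^ (-α)))
      ≤ x ^ (-β) * (K * x ^ (β - α) / x ^ (-α)) := by
        refine mul_le_mul_of_nonneg_left ?_ (rpow_pos_of_pos hx.1 _).le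
        exact div_le_div₀ ((abs_nonneg _).trans (hP x hx)) (hP x hx) hxα
          (le_mul_of_one_le_left hxα.le hL)
    _ = K * (x ^ (-β) * x ^ (β - α) / x ^ (-α)) := by ring
    _ = K := by
        rw [← rpow_add hx.1, ← rpow_sub hx.1]
        ring_nf
        rw [Real.rpow_zero, mul_one]
    _ ≤ C' := hC'

end SigmaClass

/-! ### The ladder model -/

/-- A family of random distributions on `ℕ`. There are `N` random atoms, each of which sits on a
rung `i ≤ M` drawn independently with probability `w i` and then has mass `v₀ * exp (-(δ * i))`.
The deterministic atoms have masses `c k`, and under the second of the two hypotheses that are to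
be confused those with `S ≤ k` are multiplied by `exp δ`. A reservoir has the remaining mass. -/
structure LadderModel where
  N : ℕ
  M : ℕ
  S : ℕ
  δ : ℝ
  v₀ : ℝ
  c : ℕ → ℝ
  w : ℕ → ℝ
  δ_pos : 0 < δ
  v₀_pos : 0 < v₀
  c_pos : ∀ k, 0 < c k
  summable_c : Summable c
  w_pos : ∀ i, 0 < w i
  sum_w : ∑ i ∈ Finset.range (M + 1), w i = 1
  heavy : N * v₀ + exp δ * ∑' k, c k ≤ 1 / 2

namespace LadderModel

variable (m : LadderModel)

/-- The rungs occupied by the random atoms. -/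
abbrev Config := Fin m.N → Fin (m.M + 1)

/-- The atoms: the reservoir `none`, the random atoms and the deterministic atoms. -/
abbrev Atom := Option (Fin m.N ⊕ ℕ)

/-- An arbitrary enumeration of the atoms by the symbols of the alphabet `ℕ`. -/
def symbol : m.Atom ≃ ℕ := Classical.choice nonempty_equiv_of_countable

/-- The symbol of the reservoir. -/
def reservoir : ℕ := m.symbol none

/-- The symbol of the `j`-th random atom. -/
def ladderSymbol (j : Fin m.N) : ℕ := m.symbol (some (.inl j))

/-- The symbol of the `k`-th deterministic atom. -/
def fixedSymbol (k : ℕ) : ℕ := m.symbol (some (.inr k))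

/-- The mass of an atom on rung `i`. -/
def rung (i : ℕ) : ℝ := m.v₀ * exp (-(m.δ * i))

/-- The scale of the small deterministic atoms under either hypothesis. -/
def scale : Bool → ℝ
  | false => 1
  | true => exp m.δ

/-- The mass of the `k`-th deterministic atom. -/
def fixedMass (s : Bool) (k : ℕ) : ℝ := if k < m.S then m.c k else m.scale s * m.c k

/-- The total mass of the small deterministic atoms under the first hypothesis. -/
def smallMass : ℝ := ∑' k, m.c (k + m.S)

/-- The mass of the reservoir. -/
def reservoirMass (s : Bool) (z : m.Config) : ℝ :=
  1 - (∑ j, m.rung (z j) + ∑' k, m.fixedMass s k)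

/-- The mass of an atom. -/
def mass (s : Bool) (z : m.Config) : m.Atom → ℝ
  | none => m.reservoirMass s z
  | some (.inl j) => m.rung (z j)
  | some (.inr k) => m.fixedMass s k

lemma rung_zero : m.rung 0 = m.v₀ := by simp [rung]

lemma rung_pos (i : ℕ) : 0 < m.rung i := mul_pos m.v₀_pos (exp_pos _)

lemma rung_le (i : ℕ) : m.rung i ≤ m.v₀ :=
  mul_le_of_le_one_right m.v₀_pos.le
    (Real.exp_le_one_iff.2 (neg_nonpos.2 (mul_nonneg m.δ_pos.le i.cast_nonneg)))

lemma rung_eq_exp_mul_rung_succ (i : ℕ) : m.rung i = exp m.δ * m.rung (i + 1) := by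
  rw [rung, rung, mul_left_comm, ← exp_add]
  congr 2
  push_cast
  ring

lemma sum_rung_le (z : m.Config) : ∑ j, m.rung (z j) ≤ m.N * m.v₀ := by
  simpa using Finset.sum_le_card_nsmul Finset.univ _ m.v₀ fun j _ => m.rung_le (z j)

lemma one_lt_exp_δ : 1 < exp m.δ := Real.one_lt_exp_iff.2 m.δ_pos

lemma one_le_scale (s : Bool) : 1 ≤ m.scale s := by
  cases s
  exacts [le_rfl, m.one_lt_exp_δ.le]

lemma scale_le (s : Bool) : m.scale s ≤ exp m.δ := by
  cases s
  exacts [m.one_lt_exp_δ.le, le_rfl]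

lemma fixedMass_of_lt (s : Bool) {k : ℕ} (hk : k < m.S) : m.fixedMass s k = m.c k := if_pos hk

lemma fixedMass_add (s : Bool) (k : ℕ) : m.fixedMass s (k + m.S) = m.scale s * m.c (k + m.S) :=
  if_neg (by simp)

lemma le_fixedMass (s : Bool) (k : ℕ) : m.c k ≤ m.fixedMass s k := by
  unfold fixedMass
  split_ifs
  exacts [le_rfl, le_mul_of_one_le_left (m.c_pos k).le (m.one_le_scale s)]

lemma fixedMass_le (s : Bool) (k : ℕ) : m.fixedMass s k ≤ exp m.δ * m.c k := by
  unfold fixedMass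
  split_ifs
  exacts [le_mul_of_one_le_left (m.c_pos k).le m.one_lt_exp_δ.le,
    mul_le_mul_of_nonneg_right (m.scale_le s) (m.c_pos k).le]

lemma fixedMass_pos (s : Bool) (k : ℕ) : 0 < m.fixedMass s k :=
  (m.c_pos k).trans_le (m.le_fixedMass s k)

lemma summable_fixedMass (s : Bool) : Summable (m.fixedMass s) :=
  .of_nonneg_of_le (fun k => (m.fixedMass_pos s k).le) (m.fixedMass_le s)
    (m.summable_c.mul_left _)

lemma tsum_fixedMass_le (s : Bool) : ∑' k, m.fixedMass s k ≤ exp m.δ * ∑' k, m.c k := by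
  rw [← tsum_mul_left]
  exact (m.summable_fixedMass s).tsum_le_tsum (m.fixedMass_le s) (m.summable_c.mul_left _)

lemma tsum_fixedMass (s : Bool) :
    ∑' k, m.fixedMass s k = ∑ k ∈ Finset.range m.S, m.c k + m.scale s * m.smallMass := by
  rw [← (m.summable_fixedMass s).sum_add_tsum_nat_add m.S, smallMass, ← tsum_mul_left]
  congr 1
  · exact Finset.sum_congr rfl fun k hk => m.fixedMass_of_lt s (Finset.mem_range.1 hk)
  · exact tsum_congr (m.fixedMass_add s)

lemma smallMass_nonneg : 0 ≤ m.smallMass := tsum_nonneg fun _ => (m.c_pos _).le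

lemma smallMass_le : m.smallMass ≤ ∑' k, m.c k := by
  rw [← m.summable_c.sum_add_tsum_nat_add m.S]
  exact le_add_of_nonneg_left (Finset.sum_nonneg fun k _ => (m.c_pos k).le)

lemma one_sub_le_reservoirMass (s : Bool) (z : m.Config) :
    1 - (m.N * m.v₀ + exp m.δ * ∑' k, m.c k) ≤ m.reservoirMass s z :=
  sub_le_sub_left (add_le_add (m.sum_rung_le z) (m.tsum_fixedMass_le s)) 1

lemma half_le_reservoirMass (s : Bool) (z : m.Config) : 1 / 2 ≤ m.reservoirMass s z := by
  linarith [m.one_sub_le_reservoirMass s z, m.heavy]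

lemma reservoirMass_pos (s : Bool) (z : m.Config) : 0 < m.reservoirMass s z :=
  one_half_pos.trans_le (m.half_le_reservoirMass s z)

lemma mass_pos (s : Bool) (z : m.Config) (a : m.Atom) : 0 < m.mass s z a :=
  match a with
  | none => m.reservoirMass_pos s z
  | some (.inl _) => m.rung_pos _
  | some (.inr k) => m.fixedMass_pos s k

lemma hasSum_mass (s : Bool) (z : m.Config) : HasSum (m.mass s z) 1 := by
  have reservoir_part : HasSum (m.mass s z ∘ ((↑) : ({none} : Set m.Atom) → m.Atom))
      (m.reservoirMass s z) := hasSum_unique (β := ({none} : Set m.Atom)) _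
  have other_part : HasSum (m.mass s z ∘ ((↑) : Set.range (some : _ → m.Atom) → m.Atom))
      (∑ j, m.rung (z j) + ∑' k, m.fixedMass s k) :=
    (Option.some_injective _).hasSum_range_iff.2
      ((hasSum_fintype fun j => m.rung (z j)).sum (m.summable_fixedMass s).hasSum)
  have compl : IsCompl ({none} : Set m.Atom) (Set.range some) :=
    (Set.isCompl_range_some_none _).symm
  have := reservoir_part.add_isCompl compl other_part
  rwa [reservoirMass, sub_add_cancel] at this

/-- The distribution on `ℕ` of the symbols under hypothesis `s` for the configuration `z`. -/
def dist (s : Bool) (z : m.Config) : PMF ℕ :=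
  pmfOfReal (m.mass s z ∘ m.symbol.symm) (fun _ => (m.mass_pos s z _).le)
    (m.symbol.symm.hasSum_iff.2 (m.hasSum_mass s z))

lemma pReal_dist_symbol (s : Bool) (z : m.Config) (a : m.Atom) :
    pReal (m.dist s z) (m.symbol a) = m.mass s z a := by
  rw [dist, pReal_pmfOfReal, Function.comp_apply, Equiv.symm_apply_apply]

lemma pReal_dist_reservoir (s : Bool) (z : m.Config) :
    pReal (m.dist s z) m.reservoir = m.reservoirMass s z := m.pReal_dist_symbol s z none

lemma pReal_dist_ladderSymbol (s : Bool) (z : m.Config) (j : Fin m.N) :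
    pReal (m.dist s z) (m.ladderSymbol j) = m.rung (z j) := m.pReal_dist_symbol s z _

lemma pReal_dist_fixedSymbol (s : Bool) (z : m.Config) (k : ℕ) :
    pReal (m.dist s z) (m.fixedSymbol k) = m.fixedMass s k := m.pReal_dist_symbol s z _

lemma pReal_dist_pos (s : Bool) (z : m.Config) (a : ℕ) : 0 < pReal (m.dist s z) a := by
  obtain ⟨a, rfl⟩ := m.symbol.surjective a
  rw [pReal_dist_symbol]
  exact m.mass_pos s z a

/-! ### The shift of the unseen atoms -/

variable {n : ℕ}

open Classical in
/-- The configuration in which each random atom unseen in the sample `ω` has moved one rung up;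
by truncated subtraction, atoms on rung `0` stay there. -/
def shift (z : m.Config) (ω : Fin n → ℕ) : m.Config := fun j =>
  if Unseen ω (m.ladderSymbol j) then ⟨(z j : ℕ) - 1, by omega⟩ else z j

/-- The configurations and samples for which the shift multiplies the masses of all unseen symbols
by `exp δ`, provided that one also passes from the first to the second hypothesis. -/
def Shiftable (z : m.Config) (ω : Fin n → ℕ) : Prop :=
  ¬ Unseen ω m.reservoir ∧ (∀ k < m.S, ¬ Unseen ω (m.fixedSymbol k)) ∧
    ∀ j, Unseen ω (m.ladderSymbol j) → (z j : ℕ) ≠ 0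

variable {m}

lemma shift_of_unseen (z : m.Config) {ω : Fin n → ℕ} {j : Fin m.N}
    (hj : Unseen ω (m.ladderSymbol j)) : (m.shift z ω j : ℕ) = z j - 1 := by
  rw [shift, if_pos hj]

lemma shift_of_not_unseen (z : m.Config) {ω : Fin n → ℕ} {j : Fin m.N}
    (hj : ¬ Unseen ω (m.ladderSymbol j)) : m.shift z ω j = z j := if_neg hj

lemma Shiftable.shift_injective {z z' : m.Config} {ω : Fin n → ℕ} (hz : m.Shiftable z ω)
    (hz' : m.Shiftable z' ω) (h : m.shift z ω = m.shift z' ω) : z = z' := by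
  funext j
  by_cases hj : Unseen ω (m.ladderSymbol j)
  · have := congrArg Fin.val (congrFun h j)
    rw [shift_of_unseen z hj, shift_of_unseen z' hj] at this
    have := hz.2.2 j hj
    have := hz'.2.2 j hj
    omega
  · simpa only [shift_of_not_unseen _ hj] using congrFun h j

lemma Shiftable.pReal_dist_shift {z : m.Config} {ω : Fin n → ℕ} (hz : m.Shiftable z ω) {a : ℕ}
    (ha : Unseen ω a) :
    pReal (m.dist true (m.shift z ω)) a = exp m.δ * pReal (m.dist false z) a := by
  obtain ⟨_ | j | k, rfl⟩ := m.symbol.surjective a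
  · exact absurd ha hz.1
  · have := hz.2.2 j ha
    rw [pReal_dist_symbol, pReal_dist_symbol, mass, mass, shift_of_unseen z ha,
      rung_eq_exp_mul_rung_succ, Nat.sub_add_cancel (Nat.one_le_iff_ne_zero.2 this)]
  · have hk : ¬ k < m.S := fun hk => hz.2.1 k hk ha
    simp only [pReal_dist_symbol, mass, fixedMass, if_neg hk, scale, one_mul]

lemma Shiftable.missingMass_shift {z : m.Config} {ω : Fin n → ℕ} (hz : m.Shiftable z ω) (r : ℕ) :
    missingMass (pReal (m.dist true (m.shift z ω))) r ω
      = exp m.δ ^ r * missingMass (pReal (m.dist false z)) r ω :=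
  missingMass_eq_pow_mul (fun _ ha => hz.pReal_dist_shift ha) r

lemma Shiftable.not_mloss_shift_le {z : m.Config} {ω : Fin n → ℕ} (hz : m.Shiftable z ω)
    {h : ℝ → ℝ} {t ε : ℝ} {r : ℕ} (hr : 1 ≤ r) (hε : 0 < ε) (hε' : ε < 1 / 3)
    (hεδ : 3 * ε ≤ m.δ * r) (hloss : mloss h t (missingMass (pReal (m.dist false z)) r ω) ≤ ε) :
    ¬ mloss h t (missingMass (pReal (m.dist true (m.shift z ω))) r ω) ≤ ε := by
  have growth : 1 + 3 * ε ≤ exp m.δ ^ r := by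
    rw [← Real.exp_nat_mul]
    linarith [add_one_le_exp (r * m.δ)]
  have missing_pos := missingMass_pos (m.pReal_dist_pos false z) hr ω
  refine not_mloss_le_of_one_add_three_mul_le missing_pos hε hε' ?_ hloss
  rw [hz.missingMass_shift]
  exact mul_le_mul_of_nonneg_right growth missing_pos.le

variable (m)

lemma measureReal_unseen_le (s : Bool) (z : m.Config) {a : ℕ} (ha : m.v₀ ≤ pReal (m.dist s z) a) :
    (sampleMeasure (m.dist s z) n).real {ω | Unseen ω a} ≤ exp (-(n * m.v₀)) := by
  have mass_le_one : pReal (m.dist s z) a ≤ 1 :=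
    ENNReal.toReal_mono one_ne_top ((m.dist s z).coe_le_one a)
  have := add_one_le_exp (-m.v₀)
  calc (sampleMeasure (m.dist s z) n).real {ω | Unseen ω a}
      = (1 - pReal (m.dist s z) a) ^ n := sampleMeasure_real_unseen _ a
    _ ≤ exp (-m.v₀) ^ n := pow_le_pow_left₀ (by linarith) (by linarith) n
    _ = exp (-(n * m.v₀)) := by rw [← Real.exp_nat_mul, mul_neg]

lemma measureReal_not_shiftable_le (hv : m.v₀ ≤ 1 / 2) (hS : ∀ k < m.S, m.v₀ ≤ m.c k)
    (z : m.Config) :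
    (sampleMeasure (m.dist false z) n).real {ω | ¬ m.Shiftable z ω}
      ≤ (1 + m.S + m.N) * exp (-(n * m.v₀)) := by
  set μ := sampleMeasure (m.dist false z) n
  have reservoir_unseen : μ.real {ω | Unseen ω m.reservoir} ≤ exp (-(n * m.v₀)) := by
    refine m.measureReal_unseen_le _ z ?_
    rw [pReal_dist_reservoir]
    exact hv.trans (m.half_le_reservoirMass _ z)
  have fixed_unseen : μ.real (⋃ k ∈ Finset.range m.S, {ω | Unseen ω (m.fixedSymbol k)})
      ≤ m.S * exp (-(n * m.v₀)) := by
    refine (measureReal_biUnion_finset_le _ _).trans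
      ((Finset.sum_le_card_nsmul _ _ (exp (-(n * m.v₀))) fun k hk => ?_).trans_eq (by simp))
    refine m.measureReal_unseen_le _ z ?_
    rw [pReal_dist_fixedSymbol, m.fixedMass_of_lt _ (Finset.mem_range.1 hk)]
    exact hS k (Finset.mem_range.1 hk)
  have ladder_unseen : μ.real (⋃ j ∈ Finset.univ,
      {ω | Unseen ω (m.ladderSymbol j) ∧ (z j : ℕ) = 0}) ≤ m.N * exp (-(n * m.v₀)) := by
    refine (measureReal_biUnion_finset_le _ _).trans
      ((Finset.sum_le_card_nsmul _ _ (exp (-(n * m.v₀))) fun j _ => ?_).trans_eq (by simp))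
    by_cases hj : (z j : ℕ) = 0
    · simp only [hj, and_true]
      refine m.measureReal_unseen_le _ z ?_
      rw [pReal_dist_ladderSymbol, hj, rung_zero]
    · simp [hj, (exp_pos _).le]
  have subset : {ω : Fin n → ℕ | ¬ m.Shiftable z ω} ⊆ {ω | Unseen ω m.reservoir} ∪
      ((⋃ k ∈ Finset.range m.S, {ω | Unseen ω (m.fixedSymbol k)}) ∪
        ⋃ j ∈ Finset.univ, {ω | Unseen ω (m.ladderSymbol j) ∧ (z j : ℕ) = 0}) := by
    intro ω hω
    by_contra h
    simp only [Set.mem_union, Set.mem_iUnion, Set.mem_ofPred_eq, Finset.mem_range,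
      Finset.mem_univ, not_or, not_exists, not_and] at h
    exact hω ⟨h.1, h.2.1, fun j => h.2.2 j trivial⟩
  have := (measureReal_mono subset).trans ((measureReal_union_le (μ := μ) _ _).trans
    (add_le_add_right (measureReal_union_le _ _) _))
  linarith

end LadderModel

/-! ### The likelihood ratio along the shift -/

lemma exp_neg_sub_sq_le {y : ℝ} (hy : 0 ≤ y) (hy' : y ≤ 1 / 2) : exp (-y - y ^ 2) ≤ 1 - y := by
  have quadratic := Real.quadratic_le_exp_of_nonneg (x := y + y ^ 2) (by positivity)
  have : (1 - y)⁻¹ ≤ exp (y + y ^ 2) := by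
    rw [inv_le_iff_one_le_mul₀ (by linarith)]
    nlinarith [pow_nonneg hy 3, pow_nonneg hy 4, mul_nonneg (sq_nonneg y) (sub_nonneg.2 hy'),
      mul_nonneg (pow_nonneg hy 3) (sub_nonneg.2 hy'), pow_nonneg hy 5,
      mul_nonneg (pow_nonneg hy 4) (sub_nonneg.2 hy')]
  rw [show -y - y ^ 2 = -(y + y ^ 2) by ring, exp_neg]
  exact inv_le_of_inv_le₀ (by linarith) this

namespace LadderModel

variable (m : LadderModel) {n : ℕ}

/-- The logarithm of the factor by which the prior weight of an atom changes when the atom moves up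
from rung `i`; truncated subtraction makes it vanish for `i = 0`, as it should. -/
def logWeightRatio (i : ℕ) : ℝ := Real.log (m.w (i - 1) / m.w i)

/-- The mass gained by an atom that moves up from rung `i`; it vanishes for `i = 0`. -/
def rungGain (i : ℕ) : ℝ := m.rung (i - 1) - m.rung i

/-- The indicator of the event that the `j`-th random atom is unseen. -/
def unseenInd (j : Fin m.N) : (Fin n → ℕ) → ℝ :=
  {ω | Unseen ω (m.ladderSymbol j)}.indicator 1

/-- The symbols of the small deterministic atoms. -/
def smallSymbols : Set ℕ := Set.range fun k => m.fixedSymbol (k + m.S)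

/-- The mass that the reservoir loses in the shift. -/
def transfer (z : m.Config) (ω : Fin n → ℕ) : ℝ :=
  (exp m.δ - 1) * m.smallMass + ∑ j, m.unseenInd j ω * m.rungGain (z j)

/-- A bound for the fraction of its mass that the reservoir loses in the shift. -/
def lossBound : ℝ := 2 * ((exp m.δ - 1) * (m.smallMass + m.N * m.v₀))

/-- A lower bound for the logarithm of the factor by which the mass of a seen symbol `a`
changes in the shift. -/
def logMassRatio (z : m.Config) (ω : Fin n → ℕ) (a : ℕ) : ℝ :=
  m.δ * m.smallSymbols.indicator 1 a
    - (m.transfer z ω / m.reservoirMass false z + m.lossBound ^ 2) *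
      ({m.reservoir} : Set ℕ).indicator 1 a

/-- A lower bound for the logarithm of the likelihood ratio along the shift. -/
def logRatio (z : m.Config) (ω : Fin n → ℕ) : ℝ :=
  ∑ j, m.unseenInd j ω * m.logWeightRatio (z j) + ∑ i, m.logMassRatio z ω (ω i)

lemma unseenInd_of_unseen {ω : Fin n → ℕ} {j : Fin m.N} (hj : Unseen ω (m.ladderSymbol j)) :
    m.unseenInd j ω = 1 := Set.indicator_of_mem (s := {ω | Unseen ω (m.ladderSymbol j)}) hj 1

lemma unseenInd_of_not_unseen {ω : Fin n → ℕ} {j : Fin m.N}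
    (hj : ¬ Unseen ω (m.ladderSymbol j)) : m.unseenInd j ω = 0 :=
  Set.indicator_of_notMem (s := {ω | Unseen ω (m.ladderSymbol j)}) hj 1

lemma unseenInd_nonneg (j : Fin m.N) (ω : Fin n → ℕ) : 0 ≤ m.unseenInd j ω :=
  Set.indicator_nonneg (fun _ _ => zero_le_one) ω

lemma unseenInd_le_one (j : Fin m.N) (ω : Fin n → ℕ) : m.unseenInd j ω ≤ 1 :=
  Set.indicator_le_self' (fun _ _ => zero_le_one) ω

lemma rungGain_zero : m.rungGain 0 = 0 := sub_self _

lemma rungGain_succ (i : ℕ) : m.rungGain (i + 1) = (exp m.δ - 1) * m.rung (i + 1) := by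
  rw [rungGain, Nat.add_sub_cancel, rung_eq_exp_mul_rung_succ, sub_mul, one_mul]

lemma rungGain_nonneg (i : ℕ) : 0 ≤ m.rungGain i := by
  cases i with
  | zero => exact m.rungGain_zero.ge
  | succ i =>
    rw [rungGain_succ]
    exact mul_nonneg (sub_nonneg.2 m.one_lt_exp_δ.le) (m.rung_pos _).le

lemma rungGain_le (i : ℕ) : m.rungGain i ≤ (exp m.δ - 1) * m.v₀ := by
  have := sub_nonneg.2 m.one_lt_exp_δ.le
  cases i with
  | zero => exact m.rungGain_zero.trans_le (mul_nonneg this m.v₀_pos.le)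
  | succ i =>
    rw [rungGain_succ]
    exact mul_le_mul_of_nonneg_left (m.rung_le _) this

lemma transfer_nonneg (z : m.Config) (ω : Fin n → ℕ) : 0 ≤ m.transfer z ω :=
  add_nonneg (mul_nonneg (sub_nonneg.2 m.one_lt_exp_δ.le) m.smallMass_nonneg)
    (Finset.sum_nonneg fun j _ => mul_nonneg (m.unseenInd_nonneg j ω) (m.rungGain_nonneg _))

lemma transfer_le (z : m.Config) (ω : Fin n → ℕ) :
    m.transfer z ω ≤ (exp m.δ - 1) * (m.smallMass + m.N * m.v₀) := by
  have gain_le (j) : m.unseenInd j ω * m.rungGain (z j) ≤ (exp m.δ - 1) * m.v₀ :=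
    (mul_le_of_le_one_left (m.rungGain_nonneg _) (m.unseenInd_le_one j ω)).trans (m.rungGain_le _)
  have := Finset.sum_le_card_nsmul Finset.univ _ _ fun j _ => gain_le j
  rw [Finset.card_univ, Fintype.card_fin, nsmul_eq_mul] at this
  rw [transfer, mul_add]
  linarith

lemma lossBound_nonneg : 0 ≤ m.lossBound := by
  have := sub_nonneg.2 m.one_lt_exp_δ.le
  have := m.smallMass_nonneg
  have := m.v₀_pos
  unfold lossBound
  positivity

lemma loss_le (z : m.Config) (ω : Fin n → ℕ) :
    m.transfer z ω / m.reservoirMass false z ≤ m.lossBound := by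
  rw [div_le_iff₀ (m.reservoirMass_pos _ z), lossBound]
  have := m.transfer_le z ω
  have := m.transfer_nonneg z ω
  nlinarith [m.half_le_reservoirMass false z]

lemma loss_nonneg (z : m.Config) (ω : Fin n → ℕ) :
    0 ≤ m.transfer z ω / m.reservoirMass false z :=
  div_nonneg (m.transfer_nonneg z ω) (m.reservoirMass_pos _ z).le

lemma lossBound_le (hδ : exp m.δ ≤ 3 / 2) : m.lossBound ≤ 1 / 2 := by
  have fixed_le : m.smallMass ≤ exp m.δ * ∑' k, m.c k :=
    m.smallMass_le.trans (le_mul_of_one_le_left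
      (m.smallMass_nonneg.trans m.smallMass_le) m.one_lt_exp_δ.le)
  have moved_le : m.smallMass + m.N * m.v₀ ≤ 1 / 2 := by linarith [m.heavy]
  have := m.one_lt_exp_δ
  unfold lossBound
  nlinarith

lemma rung_shift (z : m.Config) (ω : Fin n → ℕ) (j : Fin m.N) :
    m.rung (m.shift z ω j) = m.rung (z j) + m.unseenInd j ω * m.rungGain (z j) := by
  by_cases hj : Unseen ω (m.ladderSymbol j)
  · rw [shift_of_unseen z hj, m.unseenInd_of_unseen hj, one_mul, rungGain, add_sub_cancel]
  · rw [shift_of_not_unseen z hj, m.unseenInd_of_not_unseen hj, zero_mul, add_zero]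

lemma reservoirMass_shift (z : m.Config) (ω : Fin n → ℕ) :
    m.reservoirMass true (m.shift z ω) = m.reservoirMass false z - m.transfer z ω := by
  simp only [reservoirMass, tsum_fixedMass, rung_shift, Finset.sum_add_distrib, transfer, scale]
  ring

lemma logMassRatio_reservoir (z : m.Config) (ω : Fin n → ℕ) :
    m.logMassRatio z ω m.reservoir
      = -(m.transfer z ω / m.reservoirMass false z + m.lossBound ^ 2) := by
  simp [logMassRatio, smallSymbols, reservoir, fixedSymbol]

lemma logMassRatio_ladderSymbol (z : m.Config) (ω : Fin n → ℕ) (j : Fin m.N) :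
    m.logMassRatio z ω (m.ladderSymbol j) = 0 := by
  simp [logMassRatio, smallSymbols, reservoir, fixedSymbol, ladderSymbol]

lemma logMassRatio_fixedSymbol (z : m.Config) (ω : Fin n → ℕ) (k : ℕ) :
    m.logMassRatio z ω (m.fixedSymbol k) = if k < m.S then 0 else m.δ := by
  have mem_smallSymbols : m.fixedSymbol k ∈ m.smallSymbols ↔ ¬ k < m.S := by
    simp only [smallSymbols, fixedSymbol, Set.mem_range, EmbeddingLike.apply_eq_iff_eq,
      Option.some.injEq, Sum.inr.injEq, not_lt]
    exact ⟨fun ⟨_, h⟩ => h ▸ Nat.le_add_left _ _, fun h => ⟨k - m.S, Nat.sub_add_cancel h⟩⟩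
  have ne_reservoir : m.fixedSymbol k ≠ m.reservoir := by simp [fixedSymbol, reservoir]
  by_cases hk : k < m.S <;>
    simp [logMassRatio, Set.indicator, mem_smallSymbols, ne_reservoir, hk]

lemma logMassRatio_le (z : m.Config) (ω : Fin n → ℕ) (a : ℕ) : m.logMassRatio z ω a ≤ m.δ := by
  have := m.δ_pos
  obtain ⟨_ | j | k, rfl⟩ := m.symbol.surjective a
  · have := m.logMassRatio_reservoir z ω
    have := m.loss_nonneg z ω
    have := sq_nonneg m.lossBound
    change m.logMassRatio z ω m.reservoir ≤ _
    linarith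
  · exact (m.logMassRatio_ladderSymbol z ω j).trans_le this.le
  · refine (m.logMassRatio_fixedSymbol z ω k).trans_le ?_
    split_ifs
    exacts [this.le, le_rfl]

lemma le_logMassRatio (z : m.Config) (ω : Fin n → ℕ) (a : ℕ) :
    -(m.lossBound + m.lossBound ^ 2) ≤ m.logMassRatio z ω a := by
  have bound_nonneg : 0 ≤ m.lossBound + m.lossBound ^ 2 :=
    add_nonneg m.lossBound_nonneg (sq_nonneg _)
  obtain ⟨_ | j | k, rfl⟩ := m.symbol.surjective a
  · have := m.logMassRatio_reservoir z ω
    have := m.loss_le z ω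
    change _ ≤ m.logMassRatio z ω m.reservoir
    linarith
  · exact (neg_nonpos.2 bound_nonneg).trans_eq (m.logMassRatio_ladderSymbol z ω j).symm
  · refine (neg_nonpos.2 bound_nonneg).trans ?_
    change 0 ≤ m.logMassRatio z ω (m.fixedSymbol k)
    rw [logMassRatio_fixedSymbol]
    split_ifs
    exacts [le_rfl, m.δ_pos.le]

lemma pReal_mul_exp_logMassRatio_le (hδ : exp m.δ ≤ 3 / 2) (z : m.Config) (ω : Fin n → ℕ) {a : ℕ}
    (ha : ¬ Unseen ω a) :
    pReal (m.dist false z) a * exp (m.logMassRatio z ω a)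
      ≤ pReal (m.dist true (m.shift z ω)) a := by
  obtain ⟨_ | j | k, rfl⟩ := m.symbol.surjective a
  · change _ * exp (m.logMassRatio z ω m.reservoir) ≤ _
    set y := m.transfer z ω / m.reservoirMass false z with hy
    have y_nonneg : 0 ≤ y := m.loss_nonneg z ω
    have y_le : y ≤ m.lossBound := m.loss_le z ω
    have mass_eq : m.reservoirMass true (m.shift z ω) = m.reservoirMass false z * (1 - y) := by
      rw [reservoirMass_shift, mul_one_sub, hy, mul_div_cancel₀ _ (m.reservoirMass_pos _ z).ne']
    rw [pReal_dist_symbol, pReal_dist_symbol, mass, mass, mass_eq, logMassRatio_reservoir]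
    refine mul_le_mul_of_nonneg_left ?_ (m.reservoirMass_pos _ z).le
    refine le_trans ?_ (exp_neg_sub_sq_le y_nonneg (y_le.trans (m.lossBound_le hδ)))
    have := pow_le_pow_left₀ y_nonneg y_le 2
    exact exp_le_exp.2 (by linarith)
  · refine le_of_eq ?_
    rw [pReal_dist_symbol, pReal_dist_symbol, mass, mass, shift_of_not_unseen z ha,
      show m.symbol (some (.inl j)) = m.ladderSymbol j from rfl, logMassRatio_ladderSymbol,
      Real.exp_zero, mul_one]
  · refine le_of_eq ?_
    rw [pReal_dist_symbol, pReal_dist_symbol, mass, mass,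
      show m.symbol (some (.inr k)) = m.fixedSymbol k from rfl, logMassRatio_fixedSymbol]
    unfold fixedMass
    split_ifs
    · rw [Real.exp_zero, mul_one]
    · rw [scale, scale, one_mul, mul_comm]

lemma w_shift (z : m.Config) (ω : Fin n → ℕ) (j : Fin m.N) :
    m.w (m.shift z ω j) = m.w (z j) * exp (m.unseenInd j ω * m.logWeightRatio (z j)) := by
  by_cases hj : Unseen ω (m.ladderSymbol j)
  · rw [shift_of_unseen z hj, m.unseenInd_of_unseen hj, one_mul, logWeightRatio,
      Real.exp_log (div_pos (m.w_pos _) (m.w_pos _)), mul_div_cancel₀ _ (m.w_pos _).ne']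
  · rw [shift_of_not_unseen z hj, m.unseenInd_of_not_unseen hj, zero_mul, Real.exp_zero, mul_one]

lemma exp_logRatio_mul_le (hδ : exp m.δ ≤ 3 / 2) (z : m.Config) (ω : Fin n → ℕ) :
    exp (m.logRatio z ω) * ((∏ j, m.w (z j)) * ∏ i, pReal (m.dist false z) (ω i))
      ≤ (∏ j, m.w (m.shift z ω j)) * ∏ i, pReal (m.dist true (m.shift z ω)) (ω i) := by
  calc exp (m.logRatio z ω) * ((∏ j, m.w (z j)) * ∏ i, pReal (m.dist false z) (ω i))
      = (∏ j, m.w (m.shift z ω j)) *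
          ∏ i, pReal (m.dist false z) (ω i) * exp (m.logMassRatio z ω (ω i)) := by
        simp only [w_shift, Finset.prod_mul_distrib, ← Real.exp_sum, logRatio, exp_add]
        ring
    _ ≤ _ := by
        refine mul_le_mul_of_nonneg_left (Finset.prod_le_prod (fun i _ => ?_) fun i _ => ?_)
          (Finset.prod_nonneg fun j _ => (m.w_pos _).le)
        · exact mul_nonneg (m.pReal_dist_pos _ z _).le (exp_pos _).le
        · exact m.pReal_mul_exp_logMassRatio_le hδ z ω fun h => h i rfl

lemma logRatio_le {Λ : ℝ} (hΛ : ∀ i, |m.logWeightRatio i| ≤ Λ) (z : m.Config) (ω : Fin n → ℕ) :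
    m.logRatio z ω ≤ m.N * Λ + n * m.δ := by
  have weight_le (j) : m.unseenInd j ω * m.logWeightRatio (z j) ≤ Λ :=
    calc m.unseenInd j ω * m.logWeightRatio (z j)
        ≤ m.unseenInd j ω * |m.logWeightRatio (z j)| :=
          mul_le_mul_of_nonneg_left (le_abs_self _) (m.unseenInd_nonneg j ω)
      _ ≤ |m.logWeightRatio (z j)| :=
          mul_le_of_le_one_left (abs_nonneg _) (m.unseenInd_le_one j ω)
      _ ≤ Λ := hΛ _
  have weights := Finset.sum_le_card_nsmul Finset.univ _ _ fun j _ => weight_le j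
  have masses := Finset.sum_le_card_nsmul Finset.univ _ _ fun i _ => m.logMassRatio_le z ω (ω i)
  rw [Finset.card_univ, Fintype.card_fin, nsmul_eq_mul] at weights masses
  exact add_le_add weights masses

end LadderModel

section CountableSpace

variable {X : Type*} [Countable X] [MeasurableSpace X] [MeasurableSingletonClass X]

lemma measurableSet_of_countable (s : Set X) : MeasurableSet s := s.to_countable.measurableSet

lemma integrable_indicator_one (μ : Measure X) [IsFiniteMeasure μ] (s : Set X) :
    Integrable (s.indicator (1 : X → ℝ)) μ :=
  (integrable_const (1 : ℝ)).indicator (measurableSet_of_countable s)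

end CountableSpace

namespace LadderModel

variable (m : LadderModel) {n : ℕ}

/-! ### The expected likelihood ratio -/

/-- The expected contribution to the log-likelihood ratio of an atom on rung `i`. -/
def rungInfo (n i : ℕ) : ℝ :=
  m.logWeightRatio i * (1 - m.rung i) ^ n - n * (m.rungGain i * (1 - m.rung i) ^ (n - 1))

lemma toMeasure_real_smallSymbols (z : m.Config) :
    (m.dist false z).toMeasure.real m.smallSymbols = m.smallMass := by
  have inj : Function.Injective fun k => m.fixedSymbol (k + m.S) := fun k k' h => by
    simpa [fixedSymbol] using h
  rw [smallSymbols, toMeasure_real_range _ inj, smallMass]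
  refine tsum_congr fun k => ?_
  rw [pReal_dist_fixedSymbol, fixedMass_add, scale, one_mul]

variable (z : m.Config)

lemma integral_unseenInd (j : Fin m.N) :
    ∫ ω, m.unseenInd j ω ∂sampleMeasure (m.dist false z) n = (1 - m.rung (z j)) ^ n := by
  rw [unseenInd, integral_indicator_one (measurableSet_of_countable _), sampleMeasure_real_unseen,
    pReal_dist_ladderSymbol]

lemma integral_indicator_eval (i : Fin n) (B : Set ℕ) :
    ∫ ω, B.indicator 1 (ω i) ∂sampleMeasure (m.dist false z) n
      = (m.dist false z).toMeasure.real B := by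
  rw [← sampleMeasure_real_eval_mem _ i]
  exact integral_indicator_one (measurableSet_of_countable _)

lemma indicator_reservoir_mul_unseenInd (i : Fin n) (j : Fin m.N) :
    (fun ω : Fin n → ℕ => ({m.reservoir} : Set ℕ).indicator 1 (ω i) * m.unseenInd j ω)
      = {ω : Fin n → ℕ | ω i = m.reservoir ∧ Unseen ω (m.ladderSymbol j)}.indicator 1 :=
  (Set.inter_indicator_one (M₀ := ℝ) (s := {ω : Fin n → ℕ | ω i = m.reservoir})
    (t := {ω | Unseen ω (m.ladderSymbol j)})).symm

lemma integral_indicator_reservoir_mul_unseenInd (i : Fin n) (j : Fin m.N) :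
    ∫ ω : Fin n → ℕ, ({m.reservoir} : Set ℕ).indicator 1 (ω i) * m.unseenInd j ω
        ∂sampleMeasure (m.dist false z) n
      = m.reservoirMass false z * (1 - m.rung (z j)) ^ (n - 1) := by
  have ne : m.reservoir ≠ m.ladderSymbol j := by simp [reservoir, ladderSymbol]
  rw [indicator_reservoir_mul_unseenInd, integral_indicator_one (measurableSet_of_countable _),
    sampleMeasure_real_eval_eq_and_unseen _ i ne, pReal_dist_reservoir, pReal_dist_ladderSymbol]

lemma logMassRatio_eq (ω : Fin n → ℕ) (a : ℕ) :
    m.logMassRatio z ω a = m.δ * m.smallSymbols.indicator 1 a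
      - ((exp m.δ - 1) * m.smallMass / m.reservoirMass false z + m.lossBound ^ 2) *
        ({m.reservoir} : Set ℕ).indicator 1 a
      - ∑ j, m.rungGain (z j) / m.reservoirMass false z *
        (({m.reservoir} : Set ℕ).indicator 1 a * m.unseenInd j ω) := by
  have sum_eq : ∑ j, m.rungGain (z j) / m.reservoirMass false z *
        (({m.reservoir} : Set ℕ).indicator 1 a * m.unseenInd j ω)
      = (∑ j, m.unseenInd j ω * m.rungGain (z j)) / m.reservoirMass false z *
        ({m.reservoir} : Set ℕ).indicator 1 a := by
    rw [Finset.sum_div, Finset.sum_mul]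
    exact Finset.sum_congr rfl fun j _ => by ring
  rw [sum_eq, logMassRatio, transfer]
  ring

lemma integrable_logMassRatio (i : Fin n) :
    Integrable (fun ω => m.logMassRatio z ω (ω i)) (sampleMeasure (m.dist false z) n) := by
  have ind (B : Set ℕ) : Integrable (fun ω : Fin n → ℕ => B.indicator (1 : ℕ → ℝ) (ω i))
      (sampleMeasure (m.dist false z) n) := integrable_indicator_one _ {ω : Fin n → ℕ | ω i ∈ B}
  simp only [logMassRatio_eq]
  refine (((ind _).const_mul _).sub ((ind _).const_mul _)).sub
    (integrable_finsetSum _ fun j _ => Integrable.const_mul ?_ _)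
  rw [indicator_reservoir_mul_unseenInd]
  exact integrable_indicator_one _ _

lemma integral_logMassRatio (i : Fin n) :
    ∫ ω, m.logMassRatio z ω (ω i) ∂sampleMeasure (m.dist false z) n
      = -((exp m.δ - 1 - m.δ) * m.smallMass) - m.lossBound ^ 2 * m.reservoirMass false z
        - ∑ j, m.rungGain (z j) * (1 - m.rung (z j)) ^ (n - 1) := by
  have ind (B : Set ℕ) : Integrable (fun ω : Fin n → ℕ => B.indicator (1 : ℕ → ℝ) (ω i))
      (sampleMeasure (m.dist false z) n) := integrable_indicator_one _ {ω : Fin n → ℕ | ω i ∈ B}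
  have ind_mul (j) : Integrable (fun ω : Fin n → ℕ =>
      ({m.reservoir} : Set ℕ).indicator (1 : ℕ → ℝ) (ω i) * m.unseenInd j ω)
      (sampleMeasure (m.dist false z) n) := by
    rw [indicator_reservoir_mul_unseenInd]
    exact integrable_indicator_one _ _
  have pos := (m.reservoirMass_pos false z).ne'
  simp only [logMassRatio_eq]
  have ind_sub (c c' : ℝ) (B B' : Set ℕ) : Integrable (fun ω : Fin n → ℕ =>
      c * B.indicator 1 (ω i) - c' * B'.indicator 1 (ω i)) (sampleMeasure (m.dist false z) n) :=
    ((ind B).const_mul c).sub ((ind B').const_mul c')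
  rw [integral_sub (ind_sub _ _ _ _)
      (integrable_finsetSum _ fun j _ => (ind_mul j).const_mul _),
    integral_sub ((ind _).const_mul _) ((ind _).const_mul _),
    integral_finsetSum _ fun j _ => (ind_mul j).const_mul _]
  simp only [integral_const_mul, integral_indicator_eval, toMeasure_real_smallSymbols,
    toMeasure_real_singleton, pReal_dist_reservoir, integral_indicator_reservoir_mul_unseenInd]
  have sum_eq : ∑ j, m.rungGain (z j) / m.reservoirMass false z *
      (m.reservoirMass false z * (1 - m.rung (z j)) ^ (n - 1))
      = ∑ j, m.rungGain (z j) * (1 - m.rung (z j)) ^ (n - 1) :=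
    Finset.sum_congr rfl fun j _ => by field_simp
  rw [sum_eq]
  field_simp
  ring

lemma le_integral_logRatio :
    ∑ j, m.rungInfo n (z j) - n * (exp m.δ - 1 - m.δ) * m.smallMass - n * m.lossBound ^ 2
      ≤ ∫ ω, m.logRatio z ω ∂sampleMeasure (m.dist false z) n := by
  have int_unseen (j) : Integrable (fun ω => m.unseenInd j ω * m.logWeightRatio (z j))
      (sampleMeasure (m.dist false z) n) := (integrable_indicator_one _ _).mul_const _
  have reservoirMass_le : m.reservoirMass false z ≤ 1 :=
    le_hasSum (m.hasSum_mass false z) none fun a _ => (m.mass_pos false z a).le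
  have expand : ∫ ω, m.logRatio z ω ∂sampleMeasure (m.dist false z) n
      = ∑ j, m.rungInfo n (z j) - n * (exp m.δ - 1 - m.δ) * m.smallMass
        - n * m.lossBound ^ 2 * m.reservoirMass false z := by
    simp only [logRatio]
    rw [integral_add (integrable_finsetSum _ fun j _ => int_unseen j)
        (integrable_finsetSum _ fun i _ => m.integrable_logMassRatio z i),
      integral_finsetSum _ fun j _ => int_unseen j,
      integral_finsetSum _ fun i _ => m.integrable_logMassRatio z i]
    simp only [integral_mul_const, integral_unseenInd, integral_logMassRatio, Finset.sum_const,
      Finset.card_univ, Fintype.card_fin, nsmul_eq_mul, rungInfo, Finset.sum_sub_distrib,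
      mul_comm (m.logWeightRatio _), ← Finset.mul_sum]
    ring
  rw [expand]
  have := mul_le_of_le_one_right (a := n * m.lossBound ^ 2) (by positivity) reservoirMass_le
  linarith

/-! ### The Bayes risk -/

/-- The law of the rung of a random atom. -/
def rungLaw : PMF (Fin (m.M + 1)) :=
  PMF.ofFintype (fun i => ENNReal.ofReal (m.w i)) <| by
    rw [← ENNReal.ofReal_sum_of_nonneg fun i _ => (m.w_pos _).le,
      Fin.sum_univ_eq_sum_range (fun i => m.w i), m.sum_w, ENNReal.ofReal_one]

/-- The law of the configuration. -/
def prior : Measure m.Config := Measure.pi fun _ => m.rungLaw.toMeasure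

instance : IsProbabilityMeasure m.prior := by
  unfold prior
  infer_instance

/-- The joint law of the configuration and of a sample of size `n` under hypothesis `s`. -/
def joint (n : ℕ) (s : Bool) : Measure (m.Config × (Fin n → ℕ)) :=
  m.prior ⊗ₘ Kernel.ofFunOfCountable fun z => sampleMeasure (m.dist s z) n

instance (s : Bool) : IsMarkovKernel
    (Kernel.ofFunOfCountable fun z : m.Config => sampleMeasure (m.dist s z) n) :=
  ⟨fun z => inferInstanceAs (IsProbabilityMeasure (sampleMeasure (m.dist s z) n))⟩

instance (s : Bool) : IsProbabilityMeasure (m.joint n s) := by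
  unfold joint
  infer_instance

lemma rungLaw_toReal (i : Fin (m.M + 1)) : (m.rungLaw i).toReal = m.w i :=
  ENNReal.toReal_ofReal (m.w_pos i).le

lemma prior_real_singleton : m.prior.real {z} = ∏ j, m.w (z j) := by
  rw [measureReal_def, prior, Measure.pi_singleton, ENNReal.toReal_prod]
  refine Finset.prod_congr rfl fun j _ => ?_
  rw [PMF.toMeasure_apply_singleton _ _ (measurableSet_singleton _), rungLaw_toReal]

lemma integral_prior_eval (j : Fin m.N) (g : ℕ → ℝ) :
    ∫ z, g (z j) ∂m.prior = ∑ i ∈ Finset.range (m.M + 1), m.w i * g i := by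
  rw [← Fin.sum_univ_eq_sum_range fun i => m.w i * g i, prior,
    integral_comp_eval (X := fun _ : Fin m.N => Fin (m.M + 1)) (f := fun i => g i)
      (measurable_of_countable _).aestronglyMeasurable, PMF.integral_eq_sum]
  simp only [rungLaw_toReal, smul_eq_mul]

lemma joint_real_singleton (s : Bool) (ω : Fin n → ℕ) :
    (m.joint n s).real {(z, ω)} = (∏ j, m.w (z j)) * ∏ i, pReal (m.dist s z) (ω i) := by
  rw [← prior_real_singleton, ← sampleMeasure_real_singleton, ← Set.singleton_prod_singleton,
    measureReal_def, joint, Measure.compProd_apply_prod (measurableSet_singleton _)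
      (measurableSet_singleton _), lintegral_singleton, ENNReal.toReal_mul, mul_comm]
  rfl

lemma joint_real (s : Bool) (B : Set (m.Config × (Fin n → ℕ))) :
    (m.joint n s).real B
      = ∫ z, (sampleMeasure (m.dist s z) n).real {ω | (z, ω) ∈ B} ∂m.prior := by
  rw [measureReal_def, joint, Measure.compProd_apply (measurableSet_of_countable _)]
  exact (integral_toReal (measurable_of_countable _).aemeasurable
    (ae_of_all _ fun z => measure_lt_top _ _)).symm

variable {z}

lemma joint_real_le {G : Set m.Config} {ρ : ℝ} {s : Bool} {B : Set (m.Config × (Fin n → ℕ))}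
    (hB : ∀ z ∈ G, (sampleMeasure (m.dist s z) n).real {ω | (z, ω) ∈ B} ≤ ρ) (hρ : 0 ≤ ρ) :
    (m.joint n s).real B ≤ ρ + m.prior.real Gᶜ := by
  have int_bound : Integrable (fun z => ρ + Gᶜ.indicator 1 z) m.prior :=
    (integrable_const ρ).add (integrable_indicator_one _ _)
  calc (m.joint n s).real B
      ≤ ∫ z, (ρ + Gᶜ.indicator 1 z) ∂m.prior := by
        rw [joint_real]
        refine integral_mono .of_finite int_bound fun z => ?_
        by_cases hz : z ∈ G
        · simpa [hz] using hB z hz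
        · simpa [hz] using measureReal_le_one.trans (le_add_of_nonneg_left hρ)
    _ = ρ + m.prior.real Gᶜ := by
        rw [integral_add (integrable_const ρ) (integrable_indicator_one _ _),
          integral_indicator_one (measurableSet_of_countable _)]
        simp

lemma integrable_logRatio (n : ℕ) :
    Integrable (fun p : m.Config × (Fin n → ℕ) => m.logRatio p.1 p.2) (m.joint n false) := by
  refine .add (integrable_finsetSum _ fun j _ => ?_) (integrable_finsetSum _ fun i _ => ?_)
  · refine .of_bound (measurable_of_countable _).aestronglyMeasurable
      (∑ i ∈ Finset.range (m.M + 1), |m.logWeightRatio i|) (ae_of_all _ fun p => ?_)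
    rw [Real.norm_eq_abs, abs_mul, abs_of_nonneg (m.unseenInd_nonneg j p.2)]
    exact (mul_le_of_le_one_left (abs_nonneg _) (m.unseenInd_le_one j p.2)).trans
      (Finset.single_le_sum (f := fun i => |m.logWeightRatio i|) (fun _ _ => abs_nonneg _)
        (Finset.mem_range.2 (p.1 j).isLt))
  · refine .of_bound (measurable_of_countable _).aestronglyMeasurable
      (m.δ + m.lossBound + m.lossBound ^ 2) (ae_of_all _ fun p => ?_)
    have := m.logMassRatio_le p.1 p.2 (p.2 i)
    have := m.le_logMassRatio p.1 p.2 (p.2 i)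
    have := m.lossBound_nonneg
    have := m.δ_pos
    rw [Real.norm_eq_abs, abs_le]
    constructor <;> nlinarith

variable {h : ℝ → ℝ} {est : (Fin n → ℕ) → ℝ} {r : ℕ} {ε : ℝ}

/-- The configurations and samples for which the estimator has a loss exceeding `ε`. -/
def lossEvent (est : (Fin n → ℕ) → ℝ) (h : ℝ → ℝ) (r : ℕ) (ε : ℝ) (s : Bool) :
    Set (m.Config × (Fin n → ℕ)) :=
  {p | ε < mloss h (est p.2) (missingMass (pReal (m.dist s p.1)) r p.2)}

/-- A bound for the expected log-likelihood ratio, up to sign. -/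
def information (n : ℕ) : ℝ :=
  -(m.N * ∑ i ∈ Finset.range (m.M + 1), m.w i * m.rungInfo n i)
    + n * (exp m.δ - 1 - m.δ) * m.smallMass + n * m.lossBound ^ 2

lemma neg_information_le :
    -m.information n ≤ ∫ p, m.logRatio p.1 p.2 ∂m.joint n false := by
  have sum_eq : ∫ z, ∑ j, m.rungInfo n (z j) ∂m.prior
      = m.N * ∑ i ∈ Finset.range (m.M + 1), m.w i * m.rungInfo n i := by
    rw [integral_finsetSum _ fun _ _ => .of_finite]
    simp only [integral_prior_eval, Finset.sum_const, Finset.card_univ, Fintype.card_fin,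
      nsmul_eq_mul]
  calc -m.information n
      = ∫ z, (∑ j, m.rungInfo n (z j)
          - (n * (exp m.δ - 1 - m.δ) * m.smallMass + n * m.lossBound ^ 2)) ∂m.prior := by
        rw [integral_sub .of_finite .of_finite, sum_eq, information]
        simp only [integral_const, probReal_univ, one_smul]
        ring
    _ ≤ ∫ z, ∫ ω, m.logRatio z ω ∂sampleMeasure (m.dist false z) n ∂m.prior :=
        integral_mono .of_finite .of_finite fun z => by
          simpa only [sub_sub] using m.le_integral_logRatio z
    _ = ∫ p, m.logRatio p.1 p.2 ∂m.joint n false :=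
        (Measure.integral_compProd (m.integrable_logRatio n)).symm

lemma joint_real_not_shiftable_le (hv : m.v₀ ≤ 1 / 2) (hS : ∀ k < m.S, m.v₀ ≤ m.c k) :
    (m.joint n false).real {p | m.Shiftable p.1 p.2}ᶜ
      ≤ (1 + m.S + m.N) * exp (-(n * m.v₀)) := by
  rw [joint_real]
  refine (integral_mono .of_finite (integrable_const _)
    fun z => m.measureReal_not_shiftable_le hv hS z).trans_eq ?_
  simp

/-- The shift confuses the two hypotheses: it multiplies the missing mass by `exp (δ * r)`, so the
estimator fails before or after it, and it changes the likelihood by little. -/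
theorem le_joint_real_lossEvent_add {Λ : ℝ} (hδ : exp m.δ ≤ 3 / 2) (hv : m.v₀ ≤ 1 / 2)
    (hS : ∀ k < m.S, m.v₀ ≤ m.c k) (hΛ : ∀ i, |m.logWeightRatio i| ≤ Λ) (hr : 1 ≤ r)
    (hε : 0 < ε) (hε' : ε < 1 / 3) (hεδ : 3 * ε ≤ m.δ * r) :
    3 / 4 - 4 * m.information n
        - (5 + 4 * (m.N * Λ + n * m.δ)) * ((1 + m.S + m.N) * exp (-(n * m.v₀)))
      ≤ (m.joint n false).real (m.lossEvent est h r ε false)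
        + (m.joint n true).real (m.lossEvent est h r ε true) := by
  have shift_mass (p : m.Config × (Fin n → ℕ)) : ENNReal.ofReal (exp (m.logRatio p.1 p.2)) *
      m.joint n false {p} ≤ m.joint n true {(m.shift p.1 p.2, p.2)} := by
    rw [← ofReal_measureReal, ← ofReal_measureReal, ← ENNReal.ofReal_mul (exp_pos _).le,
      joint_real_singleton, joint_real_singleton]
    exact ENNReal.ofReal_le_ofReal (m.exp_logRatio_mul_le hδ _ _)
  have confused (p : m.Config × (Fin n → ℕ)) (hp : m.Shiftable p.1 p.2)
      (hloss : p ∈ (m.lossEvent est h r ε false)ᶜ) :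
      (m.shift p.1 p.2, p.2) ∉ (m.lossEvent est h r ε true)ᶜ := by
    simp only [lossEvent, Set.mem_compl_iff, Set.mem_ofPred_eq, not_lt] at hloss ⊢
    exact hp.not_mloss_shift_le hr hε hε' hεδ hloss
  have key := le_measureReal_compl_add_measureReal_compl (μ := m.joint n false)
    (ν := m.joint n true) (T := fun p => (m.shift p.1 p.2, p.2)) (E := {p | m.Shiftable p.1 p.2})
    (fun p hp p' hp' h => ?_) (m.integrable_logRatio n) (fun p => m.logRatio_le hΛ p.1 p.2)
    (fun p _ => shift_mass p) confused
  · rw [compl_compl, compl_compl] at key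
    have := m.neg_information_le (n := n)
    have := mul_le_mul_of_nonneg_left (m.joint_real_not_shiftable_le (n := n) hv hS)
      (show 0 ≤ 5 + 4 * (m.N * Λ + n * m.δ) by
        have := (abs_nonneg _).trans (hΛ 0)
        have := m.δ_pos
        positivity)
    linarith
  · obtain ⟨z, ω⟩ := p
    obtain ⟨z', ω'⟩ := p'
    obtain ⟨hz, rfl⟩ := Prod.mk.inj h
    exact Prod.ext (Shiftable.shift_injective hp hp' hz) rfl

end LadderModel

/-! ### Tail counts and their concentration -/

lemma abs_ncard_sub_max_le (y : ℝ) : |({k : ℕ | (k : ℝ) < y}.ncard : ℝ) - max y 0| ≤ 1 := by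
  have eq_range : {k : ℕ | (k : ℝ) < y} = (Finset.range ⌈y⌉₊ : Set ℕ) := by
    ext k
    simp [Nat.lt_ceil]
  rw [eq_range, Set.ncard_coe_finset, Finset.card_range]
  rcases le_or_gt y 0 with hy | hy
  · simp [Nat.ceil_eq_zero.2 hy, max_eq_right hy]
  · rw [max_eq_left hy.le, abs_of_nonneg (sub_nonneg.2 (Nat.le_ceil y))]
    linarith [Nat.ceil_lt_add_one hy.le]

lemma measureReal_lt_abs_sum_sub_integral_le {Ω ι : Type*} [Fintype ι] [MeasurableSpace Ω]
    {μ : Measure Ω} [IsProbabilityMeasure μ] {X : ι → Ω → ℝ} (indep : iIndepFun X μ)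
    (meas : ∀ j, AEMeasurable (X j) μ) (mem : ∀ j, ∀ᵐ ω ∂μ, X j ω ∈ Set.Icc 0 1)
    {t : ℝ} (ht : 0 ≤ t) :
    μ.real {ω | t < |∑ j, (X j ω - ∫ ω', X j ω' ∂μ)|}
      ≤ 2 * exp (-(2 * t ^ 2 / Fintype.card ι)) := by
  let Y : ι → Ω → ℝ := fun j ω => X j ω - ∫ ω', X j ω' ∂μ
  have subG (j) : HasSubgaussianMGF (Y j) ((‖(1 : ℝ) - 0‖₊ / 2) ^ 2) μ :=
    hasSubgaussianMGF_of_mem_Icc (meas j) (mem j)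
  have indep_Y : iIndepFun Y μ :=
    indep.comp (fun j (x : ℝ) => x - ∫ ω', X j ω' ∂μ) fun _ => measurable_id.sub_const _
  have indep_neg : iIndepFun (fun j => -Y j) μ :=
    indep_Y.comp (fun _ x => -x) fun _ => measurable_neg
  have exponent : -t ^ 2 / (2 * ((∑ _ : ι, (‖(1 : ℝ) - 0‖₊ / 2) ^ 2 : NNReal) : ℝ))
      = -(2 * t ^ 2 / Fintype.card ι) := by
    norm_num
    ring
  have upper := HasSubgaussianMGF.measure_sum_ge_le_of_iIndepFun indep_Y
    (fun j (_ : j ∈ Finset.univ) => subG j) ht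
  have lower := HasSubgaussianMGF.measure_sum_ge_le_of_iIndepFun indep_neg
    (fun j (_ : j ∈ Finset.univ) => (subG j).neg) ht
  rw [exponent] at upper lower
  calc μ.real {ω | t < |∑ j, Y j ω|}
      ≤ μ.real ({ω | t ≤ ∑ j, Y j ω} ∪ {ω | t ≤ ∑ j, (-Y j) ω}) := by
        refine measureReal_mono fun ω hω => ?_
        simp only [Set.mem_ofPred_eq, Set.mem_union, Pi.neg_apply, Finset.sum_neg_distrib] at hω ⊢
        exact (lt_abs.1 hω).imp le_of_lt le_of_lt
    _ ≤ _ := (measureReal_union_le _ _).trans (by linarith)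

namespace LadderModel

variable (m : LadderModel)

lemma finite_lt_fixedMass (s : Bool) {x : ℝ} (hx : 0 < x) : {k | x < m.fixedMass s k}.Finite := by
  have eventually_lt := (m.summable_fixedMass s).tendsto_cofinite_zero.eventually (gt_mem_nhds hx)
  exact (eventually_cofinite.1 eventually_lt).subset fun k hk => not_lt.2 (le_of_lt hk)

lemma abs_tailF_dist_sub_le (s : Bool) (z : m.Config) {x : ℝ} (hx : 0 < x) :
    |(tailF (m.dist s z) x : ℝ) - ({j | x < m.rung (z j)}.ncard
      + {k | x < m.fixedMass s k}.ncard)| ≤ 1 := by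
  have split : (m.symbol ⁻¹' {j | x < pReal (m.dist s z) j}).ncard
      = {a : m.Atom | a = none ∧ x < m.mass s z none}.ncard
        + ({j | x < m.rung (z j)}.ncard + {k | x < m.fixedMass s k}.ncard) := by
    have preimage_eq : m.symbol ⁻¹' {j | x < pReal (m.dist s z) j}
        = {a | a = none ∧ x < m.mass s z none} ∪ ((some ∘ Sum.inl) '' {j | x < m.rung (z j)} ∪
          (some ∘ Sum.inr) '' {k | x < m.fixedMass s k}) := by
      ext (_ | j | k) <;> simp [pReal_dist_symbol, mass]
    have fin_ladder := ({j | x < m.rung (z j)}.toFinite).image (some ∘ Sum.inl : _ → m.Atom)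
    have fin_fixed := (m.finite_lt_fixedMass s hx).image (some ∘ Sum.inr : _ → m.Atom)
    rw [preimage_eq,
      Set.ncard_union_eq ?_ ((Set.finite_singleton none).subset fun a ha => ha.1)
        (fin_ladder.union fin_fixed),
      Set.ncard_union_eq ?_ fin_ladder fin_fixed,
      Set.ncard_image_of_injective _ ((Option.some_injective _).comp Sum.inl_injective),
      Set.ncard_image_of_injective _ ((Option.some_injective _).comp Sum.inr_injective)]
    · rw [Set.disjoint_left]
      rintro _ ⟨j, _, rfl⟩ ⟨k, _, h⟩
      simp at h
    · rw [Set.disjoint_left]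
      rintro _ ⟨rfl, _⟩ (⟨j, _, h⟩ | ⟨k, _, h⟩) <;> simp at h
  have reservoir_le : {a : m.Atom | a = none ∧ x < m.mass s z none}.ncard ≤ 1 :=
    (Set.ncard_le_ncard (t := {none}) fun a ha => ha.1).trans_eq (Set.ncard_singleton _)
  have tailF_eq : tailF (m.dist s z) x
      = (m.symbol ⁻¹' {j | x < pReal (m.dist s z) j}).ncard :=
    (Set.ncard_preimage_of_injective_subset_range m.symbol.injective
      fun a _ => m.symbol.surjective a).symm
  rw [tailF_eq, split, Nat.cast_add, Nat.cast_add, add_sub_cancel_right, Nat.abs_cast]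
  exact_mod_cast reservoir_le

/-- The probability that a random atom is on one of the rungs `0, …, i`. -/
def cumWeight (i : ℕ) : ℝ := ∑ k ∈ Finset.range (i + 1), m.w k

/-- The configurations whose numbers of atoms on the rungs `0, …, i` deviate by at most `t` from
their expectations. -/
def Typical (t : ℝ) (z : m.Config) : Prop :=
  ∀ i ≤ m.M, |({j | (z j : ℕ) ≤ i}.ncard : ℝ) - m.N * m.cumWeight i| ≤ t

lemma sum_indicator_Iic (z : m.Config) (i : ℕ) :
    ∑ j, (Set.Iic i).indicator (1 : ℕ → ℝ) (z j) = {j | (z j : ℕ) ≤ i}.ncard := by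
  classical
  rw [Set.ncard_eq_toFinset_card', Set.toFinset_ofPred, Finset.natCast_card_filter]
  simp only [Set.indicator_apply, Set.mem_Iic, Pi.one_apply]

lemma integral_prior_indicator_Iic {i : ℕ} (hi : i ≤ m.M) (j : Fin m.N) :
    ∫ z, (Set.Iic i).indicator (1 : ℕ → ℝ) (z j) ∂m.prior = m.cumWeight i := by
  rw [integral_prior_eval, cumWeight, ← Finset.sum_subset
    (Finset.range_subset_range.2 (Nat.succ_le_succ hi)) fun k _ hk => ?_]
  · refine Finset.sum_congr rfl fun k hk => ?_
    rw [Set.indicator_of_mem (Set.mem_Iic.2 (Nat.lt_succ_iff.1 (Finset.mem_range.1 hk))),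
      Pi.one_apply, mul_one]
  · have notMem : k ∉ Set.Iic i := fun h => hk (Finset.mem_range.2 (Nat.lt_succ_of_le h))
    rw [Set.indicator_of_notMem notMem, mul_zero]

lemma prior_real_not_typical_le {t : ℝ} (ht : 0 ≤ t) :
    m.prior.real {z | m.Typical t z}ᶜ ≤ (m.M + 1) * (2 * exp (-(2 * t ^ 2 / m.N))) := by
  let ind (i : ℕ) (j : Fin m.N) (z : m.Config) : ℝ := (Set.Iic i).indicator 1 (z j : ℕ)
  have indep (i) : iIndepFun (ind i) m.prior :=
    iIndepFun_pi fun _ => (measurable_of_countable fun k : Fin (m.M + 1) =>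
      (Set.Iic i).indicator (1 : ℕ → ℝ) k).aemeasurable
  have mem (i j) : ∀ᵐ z ∂m.prior, ind i j z ∈ Set.Icc 0 1 := ae_of_all _ fun z =>
    ⟨Set.indicator_nonneg (fun _ _ => zero_le_one) _,
      Set.indicator_le_self' (fun _ _ => zero_le_one) _⟩
  have deviation {i} (hi : i ≤ m.M) (z : m.Config) :
      ({j | (z j : ℕ) ≤ i}.ncard : ℝ) - m.N * m.cumWeight i
        = ∑ j, (ind i j z - ∫ z', ind i j z' ∂m.prior) := by
    rw [Finset.sum_sub_distrib, sum_indicator_Iic]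
    simp only [ind, integral_prior_indicator_Iic m hi, Finset.sum_const, Finset.card_univ,
      Fintype.card_fin, nsmul_eq_mul]
  have single {i} (hi : i ≤ m.M) : m.prior.real
      {z | t < |({j | (z j : ℕ) ≤ i}.ncard : ℝ) - m.N * m.cumWeight i|}
        ≤ 2 * exp (-(2 * t ^ 2 / m.N)) := by
    simp only [deviation hi]
    simpa only [Fintype.card_fin] using measureReal_lt_abs_sum_sub_integral_le (indep i)
      (fun j => (measurable_of_countable _).aemeasurable) (mem i) ht
  calc m.prior.real {z | m.Typical t z}ᶜ
      ≤ m.prior.real (⋃ i ∈ Finset.range (m.M + 1),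
          {z | t < |({j | (z j : ℕ) ≤ i}.ncard : ℝ) - m.N * m.cumWeight i|}) := by
        refine measureReal_mono (fun z hz => ?_) (measure_ne_top _ _)
        simp only [Typical, Set.mem_compl_iff, Set.mem_ofPred_eq, not_forall, not_le] at hz
        obtain ⟨i, hi, hti⟩ := hz
        exact Set.mem_biUnion (Finset.mem_coe.2 (Finset.mem_range.2 (Nat.lt_succ_of_le hi))) hti
    _ ≤ ∑ i ∈ Finset.range (m.M + 1), 2 * exp (-(2 * t ^ 2 / m.N)) :=
        (measureReal_biUnion_finset_le _ _).trans
          (Finset.sum_le_sum fun i hi => single (Nat.lt_succ_iff.1 (Finset.mem_range.1 hi)))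
    _ = (m.M + 1) * (2 * exp (-(2 * t ^ 2 / m.N))) := by simp

lemma prior_real_not_typical_le_of_le {t K : ℝ} (ht : 0 ≤ t) (hK : m.N ≤ K) :
    m.prior.real {z | m.Typical t z}ᶜ ≤ (m.M + 1) * (2 * exp (-(2 * t ^ 2 / K))) := by
  rcases Nat.eq_zero_or_pos m.N with hN | hN
  · have : IsEmpty (Fin m.N) := hN ▸ Fin.isEmpty
    have typical (z : m.Config) : m.Typical t z := fun i _ => by
      simpa [hN, Set.eq_empty_of_isEmpty] using ht
    simp only [typical, Set.ofPred_true, Set.compl_univ, measureReal_empty]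
    positivity
  · refine (m.prior_real_not_typical_le ht).trans ?_
    have : (0 : ℝ) < m.N := Nat.cast_pos.2 hN
    gcongr

end LadderModel

/-! ### Series and the Laplace sigmoid -/

lemma inv_inv_sub_one {a : ℝ} (ha : a ≠ 0) : (a⁻¹ - 1)⁻¹ = a / (1 - a) := by
  rw [← one_div_div, sub_div, div_self ha, one_div, one_div]

section Series

variable {s x : ℝ}

lemma sum_add_natCast_rpow_neg_le (hs : 1 < s) (hx : 0 < x) (K : ℕ) :
    ∑ k ∈ Finset.range K, (x + (k + 1 : ℕ)) ^ (-s) ≤ x ^ (1 - s) / (s - 1) := by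
  have hanti : AntitoneOn (fun t : ℝ => t ^ (-s)) (Set.Icc x (x + K)) := fun a ha b _ hab =>
    Real.rpow_le_rpow_of_nonpos (hx.trans_le ha.1) hab (by linarith)
  have hzero : (0 : ℝ) ∉ Set.uIcc x (x + K) := Set.notMem_uIcc_of_lt hx (by positivity)
  have hend : 0 ≤ (x + K) ^ (1 - s) := by positivity
  have : 0 < s - 1 := by linarith
  calc ∑ k ∈ Finset.range K, (x + (k + 1 : ℕ)) ^ (-s)
      ≤ ∫ t in x..x + K, t ^ (-s) := hanti.sum_le_integral
    _ = (x ^ (1 - s) - (x + K) ^ (1 - s)) / (s - 1) := by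
        rw [integral_rpow (.inr ⟨by linarith, hzero⟩), show -s + 1 = 1 - s by ring,
          ← neg_sub s 1, div_neg, ← neg_div, neg_sub]
    _ ≤ x ^ (1 - s) / (s - 1) := by gcongr; linarith

lemma summable_add_natCast_rpow_neg (hs : 1 < s) (hx : 0 < x) :
    Summable fun k : ℕ => (x + (k + 1 : ℕ)) ^ (-s) :=
  summable_of_sum_range_le (fun _ => by positivity) (sum_add_natCast_rpow_neg_le hs hx)

lemma sum_add_natCast_rpow_neg_inv_le {α : ℝ} (hα : α ∈ Set.Ioo 0 1) (hx : 0 < x) (K : ℕ) :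
    ∑ k ∈ Finset.range K, (x + (k + 1 : ℕ)) ^ (-α⁻¹) ≤ α / (1 - α) * x ^ (1 - α⁻¹) := by
  refine (sum_add_natCast_rpow_neg_le ((one_lt_inv₀ hα.1).2 hα.2) hx K).trans_eq ?_
  rw [div_eq_mul_inv, inv_inv_sub_one hα.1.ne', mul_comm]

lemma tsum_add_natCast_rpow_neg_inv_le {α : ℝ} (hα : α ∈ Set.Ioo 0 1) (hx : 0 < x) :
    ∑' k : ℕ, (x + (k + 1 : ℕ)) ^ (-α⁻¹) ≤ α / (1 - α) * x ^ (1 - α⁻¹) :=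
  Real.tsum_le_of_sum_range_le (fun _ => by positivity) (sum_add_natCast_rpow_neg_inv_le hα hx)

end Series

/-- Twice the distribution function of the standard Laplace law. The rung weights are increments of
this sigmoid: it agrees with `exp` on the negative half-line, and there it reproduces the power
law. -/
def laplaceSigmoid (t : ℝ) : ℝ := exp (min t 0) + 1 - exp (-max t 0)

lemma laplaceSigmoid_of_nonpos {t : ℝ} (ht : t ≤ 0) : laplaceSigmoid t = exp t := by
  simp [laplaceSigmoid, ht]

lemma laplaceSigmoid_of_nonneg {t : ℝ} (ht : 0 ≤ t) : laplaceSigmoid t = 2 - exp (-t) := by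
  rw [laplaceSigmoid, min_eq_right ht, max_eq_left ht, Real.exp_zero]; ring

lemma laplaceSigmoid_le_two (t : ℝ) : laplaceSigmoid t ≤ 2 := by
  have hmin : exp (min t 0) ≤ 1 := Real.exp_le_one_iff.2 (min_le_right t 0)
  unfold laplaceSigmoid
  linarith [exp_pos (-max t 0)]

lemma exp_sub_exp_le_of_nonpos {a b : ℝ} (hab : a ≤ b) (hb : b ≤ 0) : exp b - exp a ≤ b - a := by
  have hexp : exp a = exp b * exp (a - b) := by rw [← exp_add]; ring_nf
  nlinarith [Real.add_one_le_exp (a - b), exp_pos b, Real.exp_le_one_iff.2 hb]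

lemma monotone_laplaceSigmoid : Monotone laplaceSigmoid := fun a b hab => by
  unfold laplaceSigmoid; gcongr

lemma abs_laplaceSigmoid_sub_le (a b : ℝ) : |laplaceSigmoid a - laplaceSigmoid b| ≤ |a - b| := by
  wlog hab : b ≤ a generalizing a b
  · rw [abs_sub_comm, abs_sub_comm a]; exact this b a (le_of_not_ge hab)
  rw [abs_of_nonneg (sub_nonneg.2 (monotone_laplaceSigmoid hab)), abs_of_nonneg (sub_nonneg.2 hab)]
  have hmin := exp_sub_exp_le_of_nonpos (min_le_min_right 0 hab) (min_le_right a 0)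
  have hmax := exp_sub_exp_le_of_nonpos (neg_le_neg (max_le_max_right 0 hab))
    (neg_nonpos.2 (le_max_right b 0))
  unfold laplaceSigmoid
  linarith [min_add_max a 0, min_add_max b 0]

lemma exp_sub_laplaceSigmoid (t : ℝ) : exp t - laplaceSigmoid t = 2 * (cosh (max t 0) - 1) := by
  rcases le_total t 0 with ht | ht
  · simp [laplaceSigmoid_of_nonpos ht, max_eq_right ht]
  · rw [laplaceSigmoid_of_nonneg ht, max_eq_left ht, Real.cosh_eq]; ring

lemma one_add_two_mul_le_exp_arcosh {a : ℝ} (ha : 0 ≤ a) : 1 + 2 * a ≤ exp (arcosh (1 + a)) := by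
  have hsqrt : a ≤ √((1 + a) ^ 2 - 1) := Real.le_sqrt_of_sq_le (by nlinarith)
  rw [Real.exp_arcosh (by linarith)]
  linarith

lemma arcosh_one_add_lt_iff {a t : ℝ} (ha : 0 < a) :
    arcosh (1 + a) < t ↔ 2 * a < exp t - laplaceSigmoid t := by
  rw [exp_sub_laplaceSigmoid]
  rcases le_total t 0 with ht | ht
  · simp only [max_eq_right ht, Real.cosh_zero, sub_self, mul_zero]
    exact iff_of_false (not_lt.2 (ht.trans (Real.arcosh_nonneg (by linarith)))) (by linarith)
  · rw [max_eq_left ht, ← Real.arcosh_cosh ht, Real.arcosh_lt_arcosh (by linarith)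
      (Real.cosh_pos _), Real.arcosh_cosh ht]
    constructor <;> intro h <;> linarith

/-! ### Power law ladders -/

/-- Parameters of the ladder models whose masses follow a power law of index `α` at sample size `n`:
the ladder starts `z₀` rungs above the critical mass `1 / n`, and the `k₀` largest masses of the
power law are left out so that the total mass stays below `1 / 2`. -/
structure PowerLawLadder where
  (α δ : ℝ)
  (n z₀ M k₀ : ℕ)
  α_pos : 0 < α
  α_lt_one : α < 1
  δ_pos : 0 < δ
  n_pos : 0 < n
  z₀_pos : 0 < z₀
  z₀_le : z₀ ≤ M
  log_n_le : Real.log n ≤ δ * (M + 1 - z₀)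
  k₀_pos : 0 < k₀
  mass_le : 2 * (n : ℝ) ^ α * (exp (δ * z₀) / n)
    + exp δ * (α / (1 - α) * ((k₀ : ℝ) ^ (1 - α⁻¹) + (n : ℝ) ^ α / n)) ≤ 1 / 2

namespace PowerLawLadder

variable (p : PowerLawLadder)

/-- The number of symbols a power law of index `α` places above the critical mass `1 / n`. -/
def intensity : ℝ := (p.n : ℝ) ^ p.α

/-- The mass of the top rung. -/
def topRung : ℝ := exp (p.δ * p.z₀) / p.n

/-- The number of rungs separating rung `i` from the two rungs `z₀ - 1` and `z₀` adjacent to the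
critical mass. -/
def offset (i : ℕ) : ℕ := if i < p.z₀ then p.z₀ - 1 - i else i - p.z₀

/-- The expected number of random atoms on rung `i`. -/
def weight (i : ℕ) : ℝ :=
  p.intensity * (1 - exp (-(p.α * p.δ))) * exp (-(p.α * p.δ * p.offset i))

/-- The expected number of random atoms, before rounding. -/
def totalWeight : ℝ := ∑ i ∈ Finset.range (p.M + 1), p.weight i

/-- The number of deterministic atoms heavier than the ladder. -/
def numHeavy : ℕ := ⌊p.topRung ^ (-p.α)⌋₊ - p.k₀

/-- The masses `c` of the ladder model: the quantiles of the power law above the ladder, and below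
it the quantiles of what the sigmoid misses of the power law, which is `2 (cosh - 1)` on the
logarithmic scale. -/
def baseMass (k : ℕ) : ℝ :=
  if k < p.numHeavy then (p.k₀ + (k + 1 : ℕ) : ℝ) ^ (-p.α⁻¹)
  else 1 / p.n *
    exp (arcosh (1 + (k - p.numHeavy + 1 : ℕ) / (2 * p.intensity))) ^ (-p.α⁻¹)

lemma natCast_n_pos : (0 : ℝ) < p.n := Nat.cast_pos.2 p.n_pos

lemma intensity_pos : 0 < p.intensity := Real.rpow_pos_of_pos p.natCast_n_pos _

lemma topRung_pos : 0 < p.topRung := div_pos (exp_pos _) p.natCast_n_pos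

lemma α_mul_δ_pos : 0 < p.α * p.δ := mul_pos p.α_pos p.δ_pos

lemma one_lt_inv_α : 1 < p.α⁻¹ := (one_lt_inv₀ p.α_pos).2 p.α_lt_one

lemma intensity_rpow_neg_inv : p.intensity ^ (-p.α⁻¹) = (p.n : ℝ)⁻¹ := by
  rw [intensity, ← Real.rpow_mul p.natCast_n_pos.le, mul_neg, mul_inv_cancel₀ p.α_pos.ne',
    Real.rpow_neg_one]

lemma topRung_rpow : p.topRung ^ (-p.α) = p.intensity * exp (-(p.α * p.δ * p.z₀)) := by
  rw [topRung, intensity, Real.div_rpow (exp_pos _).le p.natCast_n_pos.le, ← Real.exp_mul,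
    Real.rpow_neg p.natCast_n_pos.le, div_inv_eq_mul, mul_comm]
  congr 2; ring

section Weights

lemma one_sub_exp_pos : 0 < 1 - exp (-(p.α * p.δ)) :=
  sub_pos.2 (Real.exp_lt_one_iff.2 (neg_lt_zero.2 p.α_mul_δ_pos))

lemma weight_pos (i : ℕ) : 0 < p.weight i :=
  mul_pos (mul_pos p.intensity_pos p.one_sub_exp_pos) (exp_pos _)

lemma totalWeight_pos : 0 < p.totalWeight :=
  Finset.sum_pos (fun i _ => p.weight_pos i) (Finset.nonempty_range_iff.2 (by omega))

lemma one_sub_exp_mul_exp_offset {a : ℝ} (ha : 0 ≤ a) (i : ℕ) :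
    (1 - exp (-a)) * exp (-(a * p.offset i)) =
      laplaceSigmoid (a * (i + 1 - p.z₀)) - laplaceSigmoid (a * (i - p.z₀)) := by
  rw [offset]
  rcases lt_or_ge i p.z₀ with h | h
  · have h' : (i : ℝ) + 1 ≤ p.z₀ := by exact_mod_cast h
    rw [if_pos h, laplaceSigmoid_of_nonpos (mul_nonpos_of_nonneg_of_nonpos ha (by linarith)),
      laplaceSigmoid_of_nonpos (mul_nonpos_of_nonneg_of_nonpos ha (by linarith)), sub_mul,
      one_mul, ← exp_add, Nat.sub_sub, Nat.cast_sub (by omega)]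
    push_cast
    ring_nf
  · have h' : (p.z₀ : ℝ) ≤ i := by exact_mod_cast h
    rw [if_neg h.not_gt, laplaceSigmoid_of_nonneg (mul_nonneg ha (by linarith)),
      laplaceSigmoid_of_nonneg (mul_nonneg ha (by linarith)), sub_mul, one_mul, ← exp_add,
      Nat.cast_sub h]
    ring_nf

lemma weight_eq_sigmoid_sub (i : ℕ) : p.weight i = p.intensity *
    (laplaceSigmoid (p.α * p.δ * (i + 1 - p.z₀)) - laplaceSigmoid (p.α * p.δ * (i - p.z₀))) := by
  rw [weight, mul_assoc, p.one_sub_exp_mul_exp_offset p.α_mul_δ_pos.le]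

lemma weight_le (i : ℕ) : p.weight i ≤ p.intensity * (p.α * p.δ) := by
  rw [weight_eq_sigmoid_sub]
  refine mul_le_mul_of_nonneg_left ((le_abs_self _).trans
    ((abs_laplaceSigmoid_sub_le _ _).trans_eq ?_)) p.intensity_pos.le
  rw [← mul_sub, show (i + 1 - p.z₀ : ℝ) - (i - p.z₀) = 1 by ring, mul_one,
    abs_of_pos p.α_mul_δ_pos]

lemma intensity_mul_sigmoid :
    p.intensity * laplaceSigmoid (-(p.α * p.δ * p.z₀)) = p.topRung ^ (-p.α) := by
  have := mul_nonneg p.α_mul_δ_pos.le p.z₀.cast_nonneg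
  rw [topRung_rpow, laplaceSigmoid_of_nonpos (by linarith)]

lemma sum_weight (i : ℕ) : ∑ k ∈ Finset.range i, p.weight k =
    p.intensity * laplaceSigmoid (p.α * p.δ * (i - p.z₀)) - p.topRung ^ (-p.α) := by
  rw [← intensity_mul_sigmoid, ← mul_sub]
  induction i with
  | zero => simp
  | succ i ih => rw [Finset.sum_range_succ, ih, weight_eq_sigmoid_sub]; push_cast; ring

lemma totalWeight_le : p.totalWeight ≤ 2 * p.intensity := by
  have := Real.rpow_pos_of_pos p.topRung_pos (-p.α)
  have := mul_le_mul_of_nonneg_left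
    (laplaceSigmoid_le_two (p.α * p.δ * ((p.M + 1 : ℕ) - p.z₀))) p.intensity_pos.le
  rw [totalWeight, sum_weight]
  linarith

lemma natFloor_totalWeight_le : (⌊p.totalWeight⌋₊ : ℝ) ≤ 2 * p.intensity :=
  (Nat.floor_le p.totalWeight_pos.le).trans p.totalWeight_le

lemma abs_offset_sub_le (i : ℕ) : |(p.offset i : ℝ) - p.offset (i - 1)| ≤ 1 := by
  have h : p.offset i ≤ p.offset (i - 1) + 1 ∧ p.offset (i - 1) ≤ p.offset i + 1 := by
    unfold offset; split_ifs <;> omega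
  have h₁ : (p.offset i : ℝ) ≤ p.offset (i - 1) + 1 := by exact_mod_cast h.1
  have h₂ : (p.offset (i - 1) : ℝ) ≤ p.offset i + 1 := by exact_mod_cast h.2
  rw [abs_le]; constructor <;> linarith

end Weights

section BaseMass

lemma baseMass_of_lt {k : ℕ} (hk : k < p.numHeavy) :
    p.baseMass k = (p.k₀ + (k + 1 : ℕ) : ℝ) ^ (-p.α⁻¹) := if_pos hk

lemma baseMass_add (k : ℕ) : p.baseMass (k + p.numHeavy) =
    1 / p.n * exp (arcosh (1 + (k + 1 : ℕ) / (2 * p.intensity))) ^ (-p.α⁻¹) := by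
  rw [baseMass, if_neg (by omega), Nat.add_sub_cancel]

lemma baseMass_pos (k : ℕ) : 0 < p.baseMass k := by
  have := p.natCast_n_pos
  unfold baseMass
  split_ifs <;> positivity

lemma baseMass_add_le (k : ℕ) :
    p.baseMass (k + p.numHeavy) ≤ (p.intensity + (k + 1 : ℕ)) ^ (-p.α⁻¹) := by
  have hI := p.intensity_pos
  have hα : -p.α⁻¹ ≤ 0 := by linarith [p.one_lt_inv_α]
  have harg : 1 + ((k + 1 : ℕ) : ℝ) / p.intensity = 1 + 2 * ((k + 1 : ℕ) / (2 * p.intensity)) := by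
    field_simp
  calc p.baseMass (k + p.numHeavy)
      ≤ 1 / p.n * (1 + (k + 1 : ℕ) / p.intensity) ^ (-p.α⁻¹) := by
        rw [baseMass_add, harg]
        gcongr ?_ * ?_
        exact Real.rpow_le_rpow_of_nonpos (by positivity)
          (one_add_two_mul_le_exp_arcosh (by positivity)) hα
    _ = (p.intensity + (k + 1 : ℕ)) ^ (-p.α⁻¹) := by
        rw [one_div, ← intensity_rpow_neg_inv, ← Real.mul_rpow hI.le (by positivity)]
        congr 1
        field_simp

lemma summable_baseMass : Summable p.baseMass :=
  (summable_nat_add_iff p.numHeavy).1 <| Summable.of_nonneg_of_le (fun _ => (p.baseMass_pos _).le)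
    p.baseMass_add_le (summable_add_natCast_rpow_neg p.one_lt_inv_α p.intensity_pos)

lemma tsum_baseMass_add_le :
    ∑' k, p.baseMass (k + p.numHeavy) ≤ p.α / (1 - p.α) * (p.intensity / p.n) := by
  refine (((summable_nat_add_iff p.numHeavy).2 p.summable_baseMass).tsum_le_tsum p.baseMass_add_le
    (summable_add_natCast_rpow_neg p.one_lt_inv_α p.intensity_pos)).trans ?_
  refine (tsum_add_natCast_rpow_neg_inv_le ⟨p.α_pos, p.α_lt_one⟩ p.intensity_pos).trans_eq ?_
  rw [sub_eq_add_neg 1 p.α⁻¹, Real.rpow_add p.intensity_pos, Real.rpow_one, intensity_rpow_neg_inv,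
    div_eq_mul_inv p.intensity]

lemma tsum_baseMass_le : ∑' k, p.baseMass k ≤
    p.α / (1 - p.α) * ((p.k₀ : ℝ) ^ (1 - p.α⁻¹) + p.intensity / p.n) := by
  rw [← p.summable_baseMass.sum_add_tsum_nat_add p.numHeavy, mul_add]
  refine add_le_add ?_ p.tsum_baseMass_add_le
  rw [Finset.sum_congr rfl fun k hk => p.baseMass_of_lt (Finset.mem_range.1 hk)]
  exact sum_add_natCast_rpow_neg_inv_le ⟨p.α_pos, p.α_lt_one⟩ (Nat.cast_pos.2 p.k₀_pos) _

end BaseMass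

/-- The ladder model with power law masses. -/
def ladder : LadderModel where
  N := ⌊p.totalWeight⌋₊
  M := p.M
  S := p.numHeavy
  δ := p.δ
  v₀ := p.topRung
  c := p.baseMass
  w i := p.weight i / p.totalWeight
  δ_pos := p.δ_pos
  v₀_pos := p.topRung_pos
  c_pos := p.baseMass_pos
  summable_c := p.summable_baseMass
  w_pos i := div_pos (p.weight_pos i) p.totalWeight_pos
  sum_w := by rw [← Finset.sum_div]; exact div_self p.totalWeight_pos.ne'
  heavy := le_trans (add_le_add
    (mul_le_mul_of_nonneg_right p.natFloor_totalWeight_le p.topRung_pos.le)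
    (mul_le_mul_of_nonneg_left p.tsum_baseMass_le (exp_pos _).le)) p.mass_le

lemma smallMass_ladder_le : p.ladder.smallMass ≤ p.α / (1 - p.α) * (p.intensity / p.n) :=
  p.tsum_baseMass_add_le

lemma logWeightRatio_ladder (i : ℕ) : p.ladder.logWeightRatio i =
    p.α * p.δ * (p.offset i - p.offset (i - 1)) := by
  have hI := (mul_pos p.intensity_pos p.one_sub_exp_pos).ne'
  change Real.log (p.weight (i - 1) / p.totalWeight / (p.weight i / p.totalWeight)) = _
  rw [div_div_div_cancel_right₀ p.totalWeight_pos.ne', weight, weight, mul_div_mul_left _ _ hI,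
    ← Real.exp_sub, Real.log_exp]
  ring

lemma abs_logWeightRatio_ladder_le (i : ℕ) : |p.ladder.logWeightRatio i| ≤ p.α * p.δ := by
  rw [logWeightRatio_ladder, abs_mul, abs_of_pos p.α_mul_δ_pos]
  exact mul_le_of_le_one_right p.α_mul_δ_pos.le (p.abs_offset_sub_le i)

end PowerLawLadder

/-! ### Membership in the class -/

lemma abs_ncard_lt_sub_sub_le {b y : ℝ} (hb : 0 ≤ b) (hy : 0 ≤ y) :
    |({k : ℕ | (k : ℝ) < y - b}.ncard : ℝ) - y| ≤ b + 1 := by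
  have hmax : |max (y - b) 0 - y| ≤ b := by
    rw [← max_sub_sub_right, abs_le]
    exact ⟨le_max_of_le_left (by linarith), max_le (by linarith) (by linarith)⟩
  linarith [abs_sub_le ({k : ℕ | (k : ℝ) < y - b}.ncard : ℝ) (max (y - b) 0) y,
    abs_ncard_sub_max_le (y - b)]

namespace LadderModel

variable (m : LadderModel) {x : ℝ}

lemma ncard_lt_fixedMass (s : Bool) (hx : 0 < x) :
    {k | x < m.fixedMass s k}.ncard =
      {k | k < m.S ∧ x < m.c k}.ncard + {k | x < m.scale s * m.c (k + m.S)}.ncard := by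
  have hheavy : {k | x < m.fixedMass s k} ∩ {k | k < m.S} = {k | k < m.S ∧ x < m.c k} := by
    ext k
    simp only [Set.mem_inter_iff, Set.mem_ofPred_eq, and_comm (a := x < _)]
    exact and_congr_right fun hk => by rw [m.fixedMass_of_lt s hk]
  have hlight : {k | x < m.fixedMass s k} \ {k | k < m.S} =
      (· + m.S) '' {k | x < m.scale s * m.c (k + m.S)} := by
    ext k
    simp only [Set.mem_sdiff, Set.mem_image, Set.mem_ofPred_eq, ← m.fixedMass_add]
    constructor
    · rintro ⟨hxk, hk⟩
      have hsub : k - m.S + m.S = k := Nat.sub_add_cancel (not_lt.1 hk)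
      exact ⟨k - m.S, by rwa [hsub], hsub⟩
    · rintro ⟨i, hi, rfl⟩
      exact ⟨hi, by omega⟩
  rw [← Set.ncard_inter_add_ncard_sdiff_eq_ncard _ {k | k < m.S} (m.finite_lt_fixedMass s hx),
    hheavy, hlight, Set.ncard_image_of_injective _ (add_left_injective m.S)]

/-- The real number of rungs between the top of the ladder and the mass `x`. -/
def depth (x : ℝ) : ℝ := Real.log (m.v₀ / x) / m.δ

lemma lt_rung_iff (hx : 0 < x) (i : ℕ) : x < m.rung i ↔ i < m.depth x := by
  rw [depth, lt_div_iff₀ m.δ_pos, Real.lt_log_iff_exp_lt (div_pos m.v₀_pos hx), lt_div_iff₀ hx,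
    rung, exp_neg, ← div_eq_mul_inv, lt_div_iff₀ (exp_pos _), mul_comm m.δ, mul_comm x]

/-- The lowest rung above the mass `x`, for `x < v₀`. -/
def rungAbove (x : ℝ) : ℕ := min (⌈m.depth x⌉₊ - 1) m.M

lemma depth_pos (hx : 0 < x) (hx' : x < m.v₀) : 0 < m.depth x :=
  div_pos (Real.log_pos ((one_lt_div hx).2 hx')) m.δ_pos

lemma setOf_lt_rung_eq (hx : 0 < x) (hx' : x < m.v₀) (z : m.Config) :
    {j | x < m.rung (z j)} = {j | (z j : ℕ) ≤ m.rungAbove x} := by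
  ext j
  have hceil := Nat.ceil_pos.2 (m.depth_pos hx hx')
  have hz := (z j).is_lt
  simp only [Set.mem_ofPred_eq, m.lt_rung_iff hx, ← Nat.lt_ceil, rungAbove]
  omega

lemma cumWeight_nonneg (i : ℕ) : 0 ≤ m.cumWeight i :=
  Finset.sum_nonneg fun k _ => (m.w_pos k).le

lemma cumWeight_le_one {i : ℕ} (hi : i ≤ m.M) : m.cumWeight i ≤ 1 := by
  rw [← m.sum_w]
  exact Finset.sum_le_sum_of_subset_of_nonneg (Finset.range_mono (by omega))
    fun k _ _ => (m.w_pos k).le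

end LadderModel

lemma lt_rpow_neg_inv_iff {α x y : ℝ} (hα : 0 < α) (hx : 0 < x) (hy : 0 < y) :
    x < y ^ (-α⁻¹) ↔ y < x ^ (-α) := by
  rw [← inv_neg, Real.lt_rpow_inv_iff_of_neg hx hy (neg_lt_zero.2 hα)]

namespace PowerLawLadder

variable (p : PowerLawLadder) {x t : ℝ}

lemma topRung_le_baseMass {k : ℕ} (hk : k < p.numHeavy) : p.topRung ≤ p.baseMass k := by
  have hfloor : p.k₀ + (k + 1) ≤ ⌊p.topRung ^ (-p.α)⌋₊ := by unfold numHeavy at hk; omega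
  rw [p.baseMass_of_lt hk, ← inv_neg, Real.le_rpow_inv_iff_of_neg p.topRung_pos (by positivity)
    (neg_lt_zero.2 p.α_pos)]
  exact_mod_cast (Nat.le_floor_iff (by positivity [p.topRung_pos])).1 hfloor

lemma abs_numHeavy_sub_le : |(p.numHeavy : ℝ) - p.topRung ^ (-p.α)| ≤ p.k₀ + 1 := by
  have hfloor := Nat.floor_le (Real.rpow_nonneg p.topRung_pos.le (-p.α))
  have hlt := Nat.lt_floor_add_one (p.topRung ^ (-p.α))
  have hle : (p.numHeavy : ℝ) ≤ ⌊p.topRung ^ (-p.α)⌋₊ := Nat.cast_le.2 (Nat.sub_le _ _)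
  have hge : (⌊p.topRung ^ (-p.α)⌋₊ : ℝ) ≤ p.numHeavy + p.k₀ := by
    exact_mod_cast (show ⌊p.topRung ^ (-p.α)⌋₊ ≤ p.numHeavy + p.k₀ by unfold numHeavy; omega)
  rw [abs_le]; constructor <;> linarith

lemma ncard_heavy_of_lt (hx : x < p.topRung) :
    {k | k < p.numHeavy ∧ x < p.baseMass k}.ncard = p.numHeavy := by
  have hall : {k | k < p.numHeavy ∧ x < p.baseMass k} = Finset.range p.numHeavy := by
    ext k
    simpa using fun hk => hx.trans_le (p.topRung_le_baseMass hk)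
  rw [hall, Set.ncard_coe_finset, Finset.card_range]

lemma abs_ncard_heavy_sub_le (hx : p.topRung ≤ x) :
    |({k | k < p.numHeavy ∧ x < p.baseMass k}.ncard : ℝ) - x ^ (-p.α)| ≤ p.k₀ + 2 := by
  have hx0 := p.topRung_pos.trans_le hx
  have hset : {k | k < p.numHeavy ∧ x < p.baseMass k} =
      {k : ℕ | (k : ℝ) < x ^ (-p.α) - (p.k₀ + 1)} := by
    ext k
    have hiff : x < (p.k₀ + (k + 1 : ℕ) : ℝ) ^ (-p.α⁻¹) ↔ (k : ℝ) < x ^ (-p.α) - (p.k₀ + 1) := by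
      rw [lt_rpow_neg_inv_iff p.α_pos hx0 (by positivity), lt_sub_iff_add_lt]
      push_cast; ring_nf
    have hheavy (h : (k : ℝ) < x ^ (-p.α) - (p.k₀ + 1)) : k < p.numHeavy := by
      have hpow : x ^ (-p.α) ≤ p.topRung ^ (-p.α) :=
        Real.rpow_le_rpow_of_nonpos p.topRung_pos hx (by linarith [p.α_pos])
      have hfloor : p.k₀ + (k + 1) ≤ ⌊p.topRung ^ (-p.α)⌋₊ :=
        Nat.le_floor (by push_cast; linarith)
      unfold numHeavy; omega
    simp only [Set.mem_ofPred_eq]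
    refine ⟨fun h => hiff.1 (p.baseMass_of_lt h.1 ▸ h.2), fun h => ⟨hheavy h, ?_⟩⟩
    rw [p.baseMass_of_lt (hheavy h)]
    exact hiff.2 h
  rw [hset]
  linarith [abs_ncard_lt_sub_sub_le (show (0 : ℝ) ≤ p.k₀ + 1 by positivity)
    (Real.rpow_nonneg hx0.le (-p.α))]

/-- The logarithm of the target tail count at `x`, in units of the intensity. -/
def level (s : Bool) (x : ℝ) : ℝ := -(p.α * Real.log (p.n * x / p.ladder.scale s))

lemma scale_pos (s : Bool) : 0 < p.ladder.scale s := one_pos.trans_le (p.ladder.one_le_scale s)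

lemma exp_level (s : Bool) (hx : 0 < x) :
    exp (p.level s x) = (p.n * x / p.ladder.scale s) ^ (-p.α) := by
  have := p.scale_pos s
  have := p.natCast_n_pos
  rw [Real.rpow_def_of_pos (by positivity), level]
  ring_nf

lemma intensity_mul_exp_level (s : Bool) (hx : 0 < x) :
    p.intensity * exp (p.level s x) = p.ladder.scale s ^ p.α * x ^ (-p.α) := by
  have hs := p.scale_pos s
  have hn := p.natCast_n_pos
  rw [p.exp_level s hx, Real.div_rpow (by positivity) hs.le, Real.mul_rpow hn.le hx.le, intensity,
    Real.rpow_neg hn.le, Real.rpow_neg hs.le]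
  field_simp

lemma lt_scale_mul_baseMass_iff (s : Bool) (hx : 0 < x) (k : ℕ) :
    x < p.ladder.scale s * p.baseMass (k + p.numHeavy) ↔
      (k : ℝ) < p.intensity * (exp (p.level s x) - laplaceSigmoid (p.level s x)) - 1 := by
  have hs := p.scale_pos s
  have hn := p.natCast_n_pos
  have hI := p.intensity_pos
  calc x < p.ladder.scale s * p.baseMass (k + p.numHeavy)
      ↔ p.n * x / p.ladder.scale s
          < exp (arcosh (1 + (k + 1 : ℕ) / (2 * p.intensity))) ^ (-p.α⁻¹) := by
        rw [baseMass_add, div_lt_iff₀ hs, mul_left_comm, one_div_mul_eq_div, lt_div_iff₀ hn,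
          mul_comm x, mul_comm (p.ladder.scale s)]
    _ ↔ arcosh (1 + (k + 1 : ℕ) / (2 * p.intensity)) < p.level s x := by
        rw [lt_rpow_neg_inv_iff p.α_pos (by positivity) (exp_pos _), ← p.exp_level s hx,
          Real.exp_lt_exp]
    _ ↔ _ := by
        rw [arcosh_one_add_lt_iff (by positivity), mul_div_assoc', mul_div_mul_left _ _ two_ne_zero,
          div_lt_iff₀' hI, lt_sub_iff_add_lt, Nat.cast_add_one]

lemma abs_ncard_small_sub_le (s : Bool) (hx : 0 < x) :
    |({k | x < p.ladder.scale s * p.baseMass (k + p.numHeavy)}.ncard : ℝ) -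
      p.intensity * (exp (p.level s x) - laplaceSigmoid (p.level s x))| ≤ 2 := by
  have hcosh : 0 ≤ exp (p.level s x) - laplaceSigmoid (p.level s x) := by
    rw [exp_sub_laplaceSigmoid]
    linarith [Real.one_le_cosh (max (p.level s x) 0)]
  simp only [p.lt_scale_mul_baseMass_iff s hx]
  linarith [abs_ncard_lt_sub_sub_le zero_le_one (mul_nonneg p.intensity_pos.le hcosh)]

lemma level_nonpos (s : Bool) (hx : p.topRung ≤ x) : p.level s x ≤ 0 := by
  have hs := p.scale_pos s
  have hz : exp p.δ ≤ exp (p.δ * p.z₀) :=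
    exp_le_exp.2 (le_mul_of_one_le_right p.δ_pos.le (by exact_mod_cast p.z₀_pos))
  have hle : p.ladder.scale s ≤ p.n * x :=
    calc p.ladder.scale s ≤ exp p.δ := p.ladder.scale_le s
      _ ≤ p.n * p.topRung := hz.trans_eq (mul_div_cancel₀ _ p.natCast_n_pos.ne').symm
      _ ≤ p.n * x := mul_le_mul_of_nonneg_left hx p.natCast_n_pos.le
  exact neg_nonpos.2 (mul_nonneg p.α_pos.le (Real.log_nonneg ((one_le_div hs).2 hle)))

lemma abs_scale_rpow_sub_one_le (s : Bool) (h : p.α * p.δ ≤ 1) :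
    |p.ladder.scale s ^ p.α - 1| ≤ 2 * (p.α * p.δ) := by
  have hαδ := p.α_mul_δ_pos
  cases s with
  | false => simpa [LadderModel.scale] using hαδ.le
  | true =>
    change |exp p.δ ^ p.α - 1| ≤ _
    rw [← Real.exp_mul, mul_comm p.δ]
    simpa [abs_of_pos hαδ] using Real.abs_exp_sub_one_le (x := p.α * p.δ) (by rwa [abs_of_pos hαδ])

lemma ncard_lt_rung_eq_zero (hx : p.topRung ≤ x) (z : p.ladder.Config) :
    {j | x < p.ladder.rung (z j)}.ncard = 0 := by
  have hempty : {j | x < p.ladder.rung (z j)} = ∅ :=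
    Set.eq_empty_of_forall_notMem fun j hj => absurd (hj.trans_le (p.ladder.rung_le _)) hx.not_gt
  rw [hempty, Set.ncard_empty]

lemma abs_tailF_sub_add_le (s : Bool) (z : p.ladder.Config) (hx : 0 < x) :
    |(tailF (p.ladder.dist s z) x : ℝ) - ({j | x < p.ladder.rung (z j)}.ncard +
      ({k | k < p.numHeavy ∧ x < p.baseMass k}.ncard +
        {k | x < p.ladder.scale s * p.baseMass (k + p.numHeavy)}.ncard))| ≤ 1 := by
  have htail := p.ladder.abs_tailF_dist_sub_le s z hx
  rw [p.ladder.ncard_lt_fixedMass s hx, Nat.cast_add] at htail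
  exact htail

lemma abs_tailF_sub_le_of_topRung_le (s : Bool) (z : p.ladder.Config) (h : p.α * p.δ ≤ 1)
    (hx : p.topRung ≤ x) :
    |(tailF (p.ladder.dist s z) x : ℝ) - p.ladder.scale s ^ p.α * x ^ (-p.α)| ≤
      p.k₀ + 5 + 2 * (p.α * p.δ) * x ^ (-p.α) := by
  have hx0 := p.topRung_pos.trans_le hx
  have htail := p.abs_tailF_sub_add_le s z hx0
  have hsmall := p.abs_ncard_small_sub_le s hx0
  have hscale : |p.ladder.scale s ^ p.α * x ^ (-p.α) - x ^ (-p.α)| ≤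
      2 * (p.α * p.δ) * x ^ (-p.α) := by
    have hpow := Real.rpow_nonneg hx0.le (-p.α)
    rw [← sub_one_mul, abs_mul, abs_of_nonneg hpow]
    exact mul_le_mul_of_nonneg_right (p.abs_scale_rpow_sub_one_le s h) hpow
  rw [p.ncard_lt_rung_eq_zero hx z, Nat.cast_zero] at htail
  rw [laplaceSigmoid_of_nonpos (p.level_nonpos s hx), sub_self, mul_zero] at hsmall
  have hheavy := p.abs_ncard_heavy_sub_le hx
  simp only [abs_le] at htail hsmall hscale hheavy ⊢
  constructor <;> linarith

lemma abs_mul_cumWeight_sub_le {i : ℕ} (hi : i ≤ p.M) :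
    |(p.ladder.N : ℝ) * p.ladder.cumWeight i -
      (p.intensity * laplaceSigmoid (p.α * p.δ * (i + 1 - p.z₀)) - p.topRung ^ (-p.α))| ≤ 1 := by
  have hcum : p.totalWeight * p.ladder.cumWeight i =
      p.intensity * laplaceSigmoid (p.α * p.δ * (i + 1 - p.z₀)) - p.topRung ^ (-p.α) := by
    have hsum : p.ladder.cumWeight i = (∑ k ∈ Finset.range (i + 1), p.weight k) / p.totalWeight :=
      (Finset.sum_div ..).symm
    rw [hsum, mul_div_cancel₀ _ p.totalWeight_pos.ne', sum_weight, Nat.cast_add_one]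
  have hround : |(p.ladder.N : ℝ) - p.totalWeight| ≤ 1 := by
    have := Nat.floor_le p.totalWeight_pos.le
    have := Nat.lt_floor_add_one p.totalWeight
    change |(⌊p.totalWeight⌋₊ : ℝ) - p.totalWeight| ≤ 1
    rw [abs_le]; constructor <;> linarith
  have hcum₀ := p.ladder.cumWeight_nonneg i
  rw [← hcum, ← sub_mul, abs_mul, abs_of_nonneg hcum₀]
  exact mul_le_one₀ hround hcum₀ (p.ladder.cumWeight_le_one hi)

lemma level_false_eq (hx : 0 < x) :
    p.level false x = p.α * p.δ * (p.ladder.depth x - p.z₀) := by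
  have hn := p.natCast_n_pos
  have hδ := p.δ_pos
  have hlog : Real.log (p.topRung / x) = p.δ * p.z₀ - Real.log (p.n * x) := by
    rw [topRung, div_div, Real.log_div (exp_pos _).ne' (by positivity), Real.log_exp]
  change -(p.α * Real.log (p.n * x / 1)) =
    p.α * p.δ * (Real.log (p.topRung / x) / p.δ - p.z₀)
  rw [hlog, div_one]
  field_simp
  ring

lemma two_sub_le_laplaceSigmoid :
    2 - 1 / p.intensity ≤ laplaceSigmoid (p.α * p.δ * (p.M + 1 - p.z₀)) := by
  have hz : (p.z₀ : ℝ) ≤ p.M := Nat.cast_le.2 p.z₀_le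
  have hlog := mul_le_mul_of_nonneg_left p.log_n_le p.α_pos.le
  have hI : exp (-(p.α * Real.log p.n)) = 1 / p.intensity := by
    rw [exp_neg, intensity, Real.rpow_def_of_pos p.natCast_n_pos, one_div, mul_comm p.α]
  rw [laplaceSigmoid_of_nonneg (mul_nonneg p.α_mul_δ_pos.le (by linarith)), ← hI]
  linarith [exp_le_exp.2 (neg_le_neg (hlog.trans_eq (mul_assoc ..).symm))]

lemma abs_laplaceSigmoid_rungAbove_sub_le (hx : 0 < x) (hx' : x < p.topRung) :
    |p.intensity * laplaceSigmoid (p.α * p.δ * (p.ladder.rungAbove x + 1 - p.z₀)) -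
      p.intensity * laplaceSigmoid (p.level false x)| ≤ 1 + p.intensity * (p.α * p.δ) := by
  have hI := p.intensity_pos
  have hαδ := p.α_mul_δ_pos
  have hdepth := p.ladder.depth_pos hx hx'
  have hceil := Nat.ceil_pos.2 hdepth
  rw [p.level_false_eq hx, ← mul_sub, abs_mul, abs_of_pos hI]
  rcases le_or_gt (⌈p.ladder.depth x⌉₊ - 1) p.M with h | h
  · have hrung : (p.ladder.rungAbove x : ℝ) + 1 = ⌈p.ladder.depth x⌉₊ := by
      rw [LadderModel.rungAbove, show min _ p.ladder.M = _ from min_eq_left h]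
      exact_mod_cast Nat.sub_add_cancel hceil
    have hround : |(⌈p.ladder.depth x⌉₊ : ℝ) - p.z₀ - (p.ladder.depth x - p.z₀)| ≤ 1 := by
      have := Nat.le_ceil (p.ladder.depth x)
      have := Nat.ceil_lt_add_one hdepth.le
      rw [abs_le]; constructor <;> linarith
    have hlip := abs_laplaceSigmoid_sub_le (p.α * p.δ * (⌈p.ladder.depth x⌉₊ - p.z₀))
      (p.α * p.δ * (p.ladder.depth x - p.z₀))
    rw [← mul_sub, abs_mul, abs_of_pos hαδ] at hlip
    rw [hrung]
    linarith [mul_le_mul_of_nonneg_left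
      (hlip.trans (mul_le_of_le_one_right hαδ.le hround)) hI.le]
  · have hrung : p.ladder.rungAbove x = p.M := min_eq_right h.le
    have hM : (p.M : ℝ) + 1 ≤ p.ladder.depth x := by
      exact_mod_cast (Nat.lt_ceil.1 (show p.M + 1 < ⌈p.ladder.depth x⌉₊ by omega)).le
    have hmono := monotone_laplaceSigmoid (show p.α * p.δ * (p.M + 1 - p.z₀) ≤
      p.α * p.δ * (p.ladder.depth x - p.z₀) by gcongr)
    have hgap := mul_le_mul_of_nonneg_left (show
      laplaceSigmoid (p.α * p.δ * (p.ladder.depth x - p.z₀)) -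
        laplaceSigmoid (p.α * p.δ * (p.M + 1 - p.z₀)) ≤ 1 / p.intensity by
      linarith [p.two_sub_le_laplaceSigmoid,
        laplaceSigmoid_le_two (p.α * p.δ * (p.ladder.depth x - p.z₀))]) hI.le
    rw [mul_one_div_cancel hI.ne'] at hgap
    rw [hrung, abs_sub_comm, abs_of_nonneg (sub_nonneg.2 hmono)]
    linarith [mul_pos hI hαδ]

lemma abs_ncard_lt_rung_sub_le {z : p.ladder.Config} (hz : p.ladder.Typical t z) (hx : 0 < x)
    (hx' : x < p.topRung) :
    |({j | x < p.ladder.rung (z j)}.ncard : ℝ) -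
      (p.intensity * laplaceSigmoid (p.level false x) - p.topRung ^ (-p.α))| ≤
      t + 2 + p.intensity * (p.α * p.δ) := by
  have hi : p.ladder.rungAbove x ≤ p.M := min_le_right _ _
  have hcount := hz _ hi
  have hcum := p.abs_mul_cumWeight_sub_le hi
  have hsigmoid := p.abs_laplaceSigmoid_rungAbove_sub_le hx hx'
  rw [p.ladder.setOf_lt_rung_eq hx hx' z]
  simp only [abs_le] at hcount hcum hsigmoid ⊢
  constructor <;> linarith

lemma abs_level_sub_le (s : Bool) (hx : 0 < x) :
    |p.level s x - p.level false x| ≤ p.α * p.δ := by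
  have hn := p.natCast_n_pos
  cases s with
  | false => simpa using p.α_mul_δ_pos.le
  | true =>
    change |-(p.α * Real.log (p.n * x / exp p.δ)) - -(p.α * Real.log (p.n * x / 1))| ≤ _
    rw [Real.log_div (by positivity) (exp_pos _).ne', Real.log_exp, div_one,
      show ∀ l : ℝ, -(p.α * (l - p.δ)) - -(p.α * l) = p.α * p.δ by intro l; ring,
      abs_of_pos p.α_mul_δ_pos]

lemma abs_tailF_sub_le_of_lt_topRung (s : Bool) {z : p.ladder.Config}
    (hz : p.ladder.Typical t z) (hx : 0 < x) (hx' : x < p.topRung) :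
    |(tailF (p.ladder.dist s z) x : ℝ) - p.ladder.scale s ^ p.α * x ^ (-p.α)| ≤
      p.k₀ + 6 + t + 2 * (p.intensity * (p.α * p.δ)) := by
  have htail := p.abs_tailF_sub_add_le s z hx
  have hheavy := p.abs_numHeavy_sub_le
  have hsmall := p.abs_ncard_small_sub_le s hx
  have hrung := p.abs_ncard_lt_rung_sub_le hz hx hx'
  have hlevel : |p.intensity * laplaceSigmoid (p.level s x) -
      p.intensity * laplaceSigmoid (p.level false x)| ≤ p.intensity * (p.α * p.δ) := by
    rw [← mul_sub, abs_mul, abs_of_pos p.intensity_pos]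
    exact mul_le_mul_of_nonneg_left
      ((abs_laplaceSigmoid_sub_le _ _).trans (p.abs_level_sub_le s hx)) p.intensity_pos.le
  rw [p.ncard_heavy_of_lt hx'] at htail
  rw [mul_sub, p.intensity_mul_exp_level s hx] at hsmall
  simp only [abs_le] at htail hheavy hsmall hrung hlevel ⊢
  constructor <;> linarith

end PowerLawLadder

/-! ### The information of a power law ladder -/

lemma sub_div_one_sub_le_log_sub_log {u v : ℝ} (hu : u < 1) (hv : v < 1) :
    (v - u) / (1 - u) ≤ Real.log (1 - u) - Real.log (1 - v) := by
  have hu' : 0 < 1 - u := sub_pos.2 hu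
  have hv' : 0 < 1 - v := sub_pos.2 hv
  have hlog := Real.one_sub_inv_le_log_of_pos (div_pos hu' hv')
  rw [Real.log_div hu'.ne' hv'.ne', inv_div] at hlog
  refine le_trans (le_of_eq ?_) hlog
  field_simp
  ring

lemma sq_mul_exp_neg_le_div {y : ℝ} (hy : 0 < y) : y ^ 2 * exp (-y) ≤ 3 / 2 * (1 / y) := by
  have hcube : (y / 3) ^ 3 ≤ exp y * (exp 1 ^ 3)⁻¹ := by
    calc (y / 3) ^ 3 ≤ exp (y / 3 - 1) ^ 3 :=
          pow_le_pow_left₀ (by positivity) (by linarith [Real.add_one_le_exp (y / 3 - 1)]) 3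
      _ = exp y * (exp 1 ^ 3)⁻¹ := by
          rw [← Real.exp_nat_mul, ← Real.exp_nat_mul, ← exp_neg, ← exp_add]
          congr 1; push_cast; ring
  have he : (18 : ℝ) ≤ exp 1 ^ 3 := by
    refine le_trans (by norm_num) (pow_le_pow_left₀ (by norm_num : (0 : ℝ) ≤ 2.7) ?_ 3)
    linarith [Real.exp_one_gt_d9]
  have hinv := mul_le_mul_of_nonneg_left (inv_anti₀ (by norm_num) he) (exp_pos y).le
  rw [exp_neg, ← div_eq_mul_inv, mul_one_div, div_le_div_iff₀ (exp_pos y) hy]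
  linarith

lemma sq_mul_exp_neg_le_mul {y : ℝ} (hy : 0 ≤ y) : y ^ 2 * exp (-y) ≤ y := by
  rw [exp_neg, ← div_eq_mul_inv, div_le_iff₀ (exp_pos y), sq]
  exact mul_le_mul_of_nonneg_left (by linarith [Real.add_one_le_exp y]) hy

lemma div_one_add_le_one_sub_exp_neg {a : ℝ} (ha : 0 ≤ a) : a / (1 + a) ≤ 1 - exp (-a) := by
  have hinv : (exp a)⁻¹ ≤ (1 + a)⁻¹ :=
    inv_anti₀ (by linarith) (by linarith [Real.add_one_le_exp a])
  have hdiv : a / (1 + a) = 1 - (1 + a)⁻¹ := by field_simp; ring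
  rw [exp_neg]
  linarith

namespace PowerLawLadder

variable (p : PowerLawLadder)

lemma sum_exp_neg_offset_le {a : ℝ} (ha : 0 < a) (K : ℕ) :
    ∑ i ∈ Finset.range K, exp (-(a * p.offset i)) ≤ 2 * (1 + a) / a := by
  have htelescope : (1 - exp (-a)) * ∑ i ∈ Finset.range K, exp (-(a * p.offset i)) =
      laplaceSigmoid (a * (K - p.z₀)) - laplaceSigmoid (a * ((0 : ℕ) - p.z₀)) := by
    rw [Finset.mul_sum, ← Finset.sum_range_sub fun i : ℕ => laplaceSigmoid (a * (i - p.z₀))]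
    exact Finset.sum_congr rfl fun i _ => by
      rw [p.one_sub_exp_mul_exp_offset ha.le, Nat.cast_add_one]
  have hle : (1 - exp (-a)) * ∑ i ∈ Finset.range K, exp (-(a * p.offset i)) ≤ 2 := by
    have hnonpos : a * ((0 : ℕ) - p.z₀ : ℝ) ≤ 0 := by simp [mul_nonneg ha.le]
    rw [htelescope, laplaceSigmoid_of_nonpos hnonpos]
    linarith [laplaceSigmoid_le_two (a * (K - p.z₀)), exp_pos (a * ((0 : ℕ) - p.z₀ : ℝ))]
  have hsum : 0 ≤ ∑ i ∈ Finset.range K, exp (-(a * p.offset i)) :=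
    Finset.sum_nonneg fun _ _ => (exp_pos _).le
  have hdiv := (mul_le_mul_of_nonneg_right (div_one_add_le_one_sub_exp_neg ha.le) hsum).trans hle
  rw [div_mul_eq_mul_div, div_le_iff₀ (by linarith)] at hdiv
  rw [le_div_iff₀ ha]
  linarith

/-- The expected number of unseen random atoms on rung `i`. -/
def unseenWeight (i : ℕ) : ℝ := p.weight i * (1 - p.ladder.rung i) ^ p.n

/-- The logarithm of `unseenWeight (i + 1) / unseenWeight i`. -/
def logUnseenRatio (i : ℕ) : ℝ := -p.ladder.logWeightRatio (i + 1) +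
  p.n * (Real.log (1 - p.ladder.rung (i + 1)) - Real.log (1 - p.ladder.rung i))

lemma exp_neg_logWeightRatio (i : ℕ) :
    exp (-p.ladder.logWeightRatio (i + 1)) = p.weight (i + 1) / p.weight i := by
  have hi := p.weight_pos i
  have hi' := p.weight_pos (i + 1)
  change exp (-Real.log (p.weight i / p.totalWeight / (p.weight (i + 1) / p.totalWeight))) = _
  rw [div_div_div_cancel_right₀ p.totalWeight_pos.ne', exp_neg, Real.exp_log (div_pos hi hi'),
    inv_div]

lemma natCast_n_mul_rung (i : ℕ) : p.n * p.ladder.rung i = exp (p.δ * (p.z₀ - i)) := by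
  change p.n * (exp (p.δ * p.z₀) / p.n * exp (-(p.δ * i))) = _
  rw [← mul_assoc, mul_div_cancel₀ _ p.natCast_n_pos.ne', ← exp_add]
  ring_nf

lemma sq_mul_exp_neg_rung_le (i : ℕ) :
    (p.n * p.ladder.rung i) ^ 2 * exp (-(p.n * p.ladder.rung i)) ≤
      3 / 2 * exp (-(p.δ * p.offset i)) := by
  have hpos : 0 < p.n * p.ladder.rung i := p.natCast_n_mul_rung i ▸ exp_pos _
  rw [offset]
  split_ifs with hi
  · refine (sq_mul_exp_neg_le_div hpos).trans ?_
    rw [natCast_n_mul_rung, one_div, ← exp_neg, Nat.sub_sub, Nat.cast_sub (by omega)]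
    refine mul_le_mul_of_nonneg_left (exp_le_exp.2 ?_) (by norm_num)
    push_cast
    linarith [p.δ_pos]
  · refine (sq_mul_exp_neg_le_mul hpos.le).trans ?_
    rw [natCast_n_mul_rung, Nat.cast_sub (not_lt.1 hi), ← mul_neg, neg_sub]
    linarith [exp_pos (p.δ * (p.z₀ - i))]

section HalfTopRung

variable (hv : p.topRung ≤ 1 / 2)

include hv

lemma rung_lt_one (i : ℕ) : p.ladder.rung i < 1 :=
  ((p.ladder.rung_le i).trans hv).trans_lt (by norm_num)

lemma unseenWeight_pos (i : ℕ) : 0 < p.unseenWeight i :=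
  mul_pos (p.weight_pos i) (pow_pos (sub_pos.2 (p.rung_lt_one hv i)) _)

lemma unseenWeight_le (i : ℕ) :
    p.unseenWeight i ≤ p.weight i * exp (-(p.n * p.ladder.rung i)) := by
  refine mul_le_mul_of_nonneg_left ?_ (p.weight_pos i).le
  rw [← mul_neg, Real.exp_nat_mul]
  exact pow_le_pow_left₀ (sub_nonneg.2 (p.rung_lt_one hv i).le) (Real.one_sub_le_exp_neg _) _

lemma unseenWeight_succ (i : ℕ) :
    p.unseenWeight (i + 1) = p.unseenWeight i * exp (p.logUnseenRatio i) := by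
  have hi : 0 < 1 - p.ladder.rung i := sub_pos.2 (p.rung_lt_one hv i)
  have hi' : 0 < 1 - p.ladder.rung (i + 1) := sub_pos.2 (p.rung_lt_one hv (i + 1))
  have hw := p.weight_pos i
  rw [unseenWeight, unseenWeight, logUnseenRatio, exp_add, Real.exp_nat_mul, Real.exp_sub,
    Real.exp_log hi, Real.exp_log hi', exp_neg_logWeightRatio, div_pow]
  field_simp

lemma rungGain_div_le (i : ℕ) :
    p.ladder.rungGain (i + 1) / (1 - p.ladder.rung (i + 1)) ≤
      Real.log (1 - p.ladder.rung (i + 1)) - Real.log (1 - p.ladder.rung i) := by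
  refine le_trans (le_of_eq ?_)
    (sub_div_one_sub_le_log_sub_log (p.rung_lt_one hv (i + 1)) (p.rung_lt_one hv i))
  rw [p.ladder.rungGain_succ, p.ladder.rung_eq_exp_mul_rung_succ i, sub_one_mul]

lemma log_one_sub_rung_sub_le (i : ℕ) :
    Real.log (1 - p.ladder.rung (i + 1)) - Real.log (1 - p.ladder.rung i) ≤
      2 * p.δ * p.ladder.rung i := by
  have hpos := p.ladder.rung_pos i
  have hhalf := (p.ladder.rung_le i).trans hv
  have hlog := sub_div_one_sub_le_log_sub_log (p.rung_lt_one hv i) (p.rung_lt_one hv (i + 1))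
  have hstep : p.ladder.rung i - p.ladder.rung (i + 1) ≤ p.δ * p.ladder.rung i := by
    have hsucc : p.ladder.rung (i + 1) = exp (-p.δ) * p.ladder.rung i := by
      rw [p.ladder.rung_eq_exp_mul_rung_succ i, ← mul_assoc, ← exp_add]
      simp [ladder]
    rw [hsucc]
    nlinarith [Real.one_sub_le_exp_neg p.δ]
  have hdiv : (p.ladder.rung i - p.ladder.rung (i + 1)) / (1 - p.ladder.rung i) ≤
      2 * p.δ * p.ladder.rung i := by
    rw [div_le_iff₀ (sub_pos.2 (p.rung_lt_one hv i))]
    nlinarith [mul_nonneg p.δ_pos.le hpos.le, show p.ladder.rung i ≤ 1 / 2 from hhalf]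
  rw [← neg_sub, neg_div] at hlog
  linarith

lemma abs_logUnseenRatio_le (i : ℕ) :
    |p.logUnseenRatio i| ≤ p.δ * (p.α + 2 * (p.n * p.ladder.rung i)) := by
  have hn := p.natCast_n_pos.le
  have hweight := p.abs_logWeightRatio_ladder_le (i + 1)
  have hnonneg : 0 ≤ Real.log (1 - p.ladder.rung (i + 1)) - Real.log (1 - p.ladder.rung i) :=
    (div_nonneg (p.ladder.rungGain_nonneg _)
      (sub_nonneg.2 (p.rung_lt_one hv _).le)).trans (p.rungGain_div_le hv i)
  have hle := mul_le_mul_of_nonneg_left (p.log_one_sub_rung_sub_le hv i) hn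
  refine (abs_add_le _ _).trans ?_
  rw [abs_neg, abs_of_nonneg (mul_nonneg hn hnonneg)]
  linarith

/-- The second-order term comes from `-(b - a) - a * (b / a - 1) ^ 2 ≤ -b * log (b / a)`. -/
lemma neg_sub_sub_le_weight_mul_rungInfo (i : ℕ) :
    -(p.unseenWeight (i + 1) - p.unseenWeight i) -
      p.unseenWeight i * (exp (p.logUnseenRatio i) - 1) ^ 2 ≤
        p.weight (i + 1) * p.ladder.rungInfo p.n (i + 1) := by
  have hpos : 0 < 1 - p.ladder.rung (i + 1) := sub_pos.2 (p.rung_lt_one hv (i + 1))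
  have hinfo : p.ladder.rungInfo p.n (i + 1) = (1 - p.ladder.rung (i + 1)) ^ p.n *
      (p.ladder.logWeightRatio (i + 1) -
        p.n * (p.ladder.rungGain (i + 1) / (1 - p.ladder.rung (i + 1)))) := by
    rw [LadderModel.rungInfo, ← pow_sub_one_mul p.n_pos.ne' (1 - p.ladder.rung (i + 1))]
    field_simp
  have hlog : p.unseenWeight (i + 1) * -p.logUnseenRatio i ≤
      p.weight (i + 1) * p.ladder.rungInfo p.n (i + 1) := by
    rw [hinfo, ← mul_assoc]
    refine mul_le_mul_of_nonneg_left ?_ (p.unseenWeight_pos hv (i + 1)).le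
    rw [logUnseenRatio]
    linarith [mul_le_mul_of_nonneg_left (p.rungGain_div_le hv i) p.natCast_n_pos.le]
  refine le_trans ?_ hlog
  rw [p.unseenWeight_succ hv i]
  have hmul := mul_pos (p.unseenWeight_pos hv i) (exp_pos (p.logUnseenRatio i))
  nlinarith [mul_le_mul_of_nonneg_left (show p.logUnseenRatio i ≤ exp (p.logUnseenRatio i) - 1 by
    linarith [Real.add_one_le_exp (p.logUnseenRatio i)]) hmul.le]

lemma unseenWeight_mul_sq_le (h : p.δ * (p.α + 2 * (p.n * p.topRung)) ≤ 1) (i : ℕ) :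
    p.unseenWeight i * (exp (p.logUnseenRatio i) - 1) ^ 2 ≤ 8 * p.δ ^ 2 * p.α ^ 2 * p.weight i
      + 48 * p.δ ^ 2 * (p.intensity * (p.α * p.δ)) * exp (-(p.δ * p.offset i)) := by
  have hδ := p.δ_pos
  have hI := p.intensity_pos
  have hαδ := p.α_mul_δ_pos
  have hw := p.weight_pos i
  have hratio := p.abs_logUnseenRatio_le hv i
  have htop : p.n * p.ladder.rung i ≤ p.n * p.topRung :=
    mul_le_mul_of_nonneg_left (p.ladder.rung_le i) p.natCast_n_pos.le
  have hcount := p.unseenWeight_le hv i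
  have hpeak := p.sq_mul_exp_neg_rung_le i
  have hy : 0 < p.n * p.ladder.rung i := p.natCast_n_mul_rung i ▸ exp_pos _
  set y := p.n * p.ladder.rung i
  have hsq : (exp (p.logUnseenRatio i) - 1) ^ 2 ≤ 8 * p.δ ^ 2 * p.α ^ 2 + 32 * p.δ ^ 2 * y ^ 2 := by
    have hexp := Real.abs_exp_sub_one_le (hratio.trans (le_trans (by gcongr) h))
    calc (exp (p.logUnseenRatio i) - 1) ^ 2 ≤ (2 * (p.δ * (p.α + 2 * y))) ^ 2 := by
          rw [← sq_abs]
          exact pow_le_pow_left₀ (abs_nonneg _) (by linarith) 2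
      _ ≤ _ := by nlinarith [show 0 ≤ p.δ ^ 2 * (p.α - 2 * y) ^ 2 by positivity]
  calc p.unseenWeight i * (exp (p.logUnseenRatio i) - 1) ^ 2
      ≤ p.weight i * exp (-y) * (8 * p.δ ^ 2 * p.α ^ 2 + 32 * p.δ ^ 2 * y ^ 2) :=
        mul_le_mul hcount hsq (sq_nonneg _) (by positivity)
    _ = 8 * p.δ ^ 2 * p.α ^ 2 * (p.weight i * exp (-y)) +
          32 * p.δ ^ 2 * (p.weight i * (y ^ 2 * exp (-y))) := by ring
    _ ≤ 8 * p.δ ^ 2 * p.α ^ 2 * (p.weight i * 1) + 32 * p.δ ^ 2 *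
          (p.intensity * (p.α * p.δ) * (3 / 2 * exp (-(p.δ * p.offset i)))) := by
        gcongr
        · exact Real.exp_le_one_iff.2 (neg_nonpos.2 hy.le)
        · exact p.weight_le i
    _ = _ := by ring

lemma unseenWeight_le_weight (i : ℕ) : p.unseenWeight i ≤ p.weight i :=
  mul_le_of_le_one_right (p.weight_pos i).le
    (pow_le_one₀ (sub_nonneg.2 (p.rung_lt_one hv i).le) (by linarith [p.ladder.rung_pos i]))

end HalfTopRung

lemma weight_M_le (hδ : exp p.δ ≤ 3 / 2) : p.weight p.M ≤ 3 / 2 * (p.α * p.δ) := by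
  have hI := p.intensity_pos
  have hlog := mul_le_mul_of_nonneg_left p.log_n_le p.α_pos.le
  have hαδ : p.α * p.δ ≤ p.δ := mul_le_of_le_one_left p.δ_pos.le p.α_lt_one.le
  have hexp : exp (-(p.α * p.δ * p.offset p.M)) ≤ 1 / p.intensity * (3 / 2) :=
    calc exp (-(p.α * p.δ * p.offset p.M))
        ≤ exp (-(p.α * Real.log p.n)) * exp p.δ := by
          rw [← exp_add, offset, if_neg p.z₀_le.not_gt, Nat.cast_sub p.z₀_le, exp_le_exp]
          linarith
      _ = 1 / p.intensity * exp p.δ := by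
          rw [exp_neg, intensity, Real.rpow_def_of_pos p.natCast_n_pos, one_div, mul_comm p.α]
      _ ≤ 1 / p.intensity * (3 / 2) := by gcongr
  calc p.weight p.M
      ≤ p.intensity * (p.α * p.δ) * (1 / p.intensity * (3 / 2)) := by
        unfold weight
        gcongr
        · exact (mul_pos hI p.α_mul_δ_pos).le
        · linarith [Real.one_sub_le_exp_neg (p.α * p.δ)]
    _ = 3 / 2 * (p.α * p.δ) := by field_simp

lemma rungInfo_zero : p.ladder.rungInfo p.n 0 = 0 := by
  rw [LadderModel.rungInfo, logWeightRatio_ladder, LadderModel.rungGain_zero]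
  simp

lemma neg_sum_weight_mul_rungInfo_le (hv : p.topRung ≤ 1 / 2) (hδ : exp p.δ ≤ 3 / 2)
    (h : p.δ * (p.α + 2 * (p.n * p.topRung)) ≤ 1) :
    -∑ i ∈ Finset.range (p.M + 1), p.weight i * p.ladder.rungInfo p.n i ≤
      3 / 2 * (p.α * p.δ) + 16 * p.α ^ 2 * (p.δ ^ 2 * p.intensity) +
        96 * p.α * (p.δ ^ 2 * p.intensity) * (1 + p.δ) := by
  have hI := p.intensity_pos
  have hδ₀ := p.δ_pos
  have hα := p.α_pos
  have hfirst := Finset.sum_le_sum fun i (_ : i ∈ Finset.range p.M) =>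
    p.neg_sub_sub_le_weight_mul_rungInfo hv i
  rw [Finset.sum_sub_distrib, Finset.sum_neg_distrib, Finset.sum_range_sub] at hfirst
  have hsecond : ∑ i ∈ Finset.range p.M,
      p.unseenWeight i * (exp (p.logUnseenRatio i) - 1) ^ 2 ≤
        8 * p.δ ^ 2 * p.α ^ 2 * (2 * p.intensity) +
          48 * p.δ ^ 2 * (p.intensity * (p.α * p.δ)) * (2 * (1 + p.δ) / p.δ) := by
    refine (Finset.sum_le_sum fun i _ => p.unseenWeight_mul_sq_le hv h i).trans ?_
    rw [Finset.sum_add_distrib, ← Finset.mul_sum, ← Finset.mul_sum]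
    have hweight : ∑ i ∈ Finset.range p.M, p.weight i ≤ 2 * p.intensity :=
      (Finset.sum_le_sum_of_subset_of_nonneg (Finset.range_mono p.M.le_succ)
        fun i _ _ => (p.weight_pos i).le).trans p.totalWeight_le
    gcongr
    exact p.sum_exp_neg_offset_le hδ₀ p.M
  have hcancel : 48 * p.δ ^ 2 * (p.intensity * (p.α * p.δ)) * (2 * (1 + p.δ) / p.δ) =
      96 * p.α * (p.δ ^ 2 * p.intensity) * (1 + p.δ) := by
    field_simp; ring
  rw [Finset.sum_range_succ', rungInfo_zero, mul_zero, add_zero]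
  linarith [p.weight_M_le hδ, p.unseenWeight_le_weight hv p.M, p.unseenWeight_pos hv 0]

theorem neg_mul_sum_w_mul_rungInfo_le (hv : p.topRung ≤ 1 / 2) (hδ : exp p.δ ≤ 3 / 2)
    (h : p.δ * (p.α + 2 * (p.n * p.topRung)) ≤ 1) :
    -(p.ladder.N * ∑ i ∈ Finset.range (p.M + 1), p.ladder.w i * p.ladder.rungInfo p.n i) ≤
      3 / 2 * (p.α * p.δ) + 16 * p.α ^ 2 * (p.δ ^ 2 * p.intensity) +
        96 * p.α * (p.δ ^ 2 * p.intensity) * (1 + p.δ) := by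
  have hI := p.intensity_pos
  have hδ₀ := p.δ_pos
  have hα := p.α_pos
  have hfraction : (p.ladder.N : ℝ) / p.totalWeight ≤ 1 :=
    (div_le_one p.totalWeight_pos).2 (Nat.floor_le p.totalWeight_pos.le)
  have hfraction₀ : 0 ≤ (p.ladder.N : ℝ) / p.totalWeight :=
    div_nonneg (Nat.cast_nonneg _) p.totalWeight_pos.le
  have hsum : -(p.ladder.N *
      ∑ i ∈ Finset.range (p.M + 1), p.ladder.w i * p.ladder.rungInfo p.n i) =
      p.ladder.N / p.totalWeight *
        -∑ i ∈ Finset.range (p.M + 1), p.weight i * p.ladder.rungInfo p.n i := by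
    rw [mul_neg, Finset.mul_sum, Finset.mul_sum]
    exact congrArg _ (Finset.sum_congr rfl fun i _ => by simp only [ladder]; ring)
  rw [hsum]
  refine (mul_le_mul_of_nonneg_left (p.neg_sum_weight_mul_rungInfo_le hv hδ h) hfraction₀).trans ?_
  exact mul_le_of_le_one_left (by positivity) hfraction

end PowerLawLadder

/-- The lower bound for one estimator: its loss exceeds `ε` with probability at least `1 / 4` under
some distribution of the class whose `L_α` is at least `1`. -/
def IsDefeated (α β C C' : ℝ) (h : ℝ → ℝ) (r : ℕ) {n : ℕ} (est : (Fin n → ℕ) → ℝ) (ε : ℝ) : Prop :=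
  ∃ P L, 1 ≤ L ∧ inSigmaClass α β C C' P L ∧
    1 / 4 ≤ (sampleMeasure P n).real {ω | ε < mloss h (est ω) (missingMass (pReal P) r ω)}

lemma eventually_mul_natCast_rpow_le {s c : ℝ} (a : ℝ) (hs : s < 0) (hc : 0 < c) :
    ∀ᶠ k : ℕ in atTop, a * (k : ℝ) ^ s ≤ c := by
  have tendsto_zero : Tendsto (fun k : ℕ => a * (k : ℝ) ^ s) atTop (nhds 0) := by
    simpa only [mul_zero, neg_neg, Function.comp_def] using ((tendsto_rpow_neg_atTop
      (neg_pos.2 hs)).comp tendsto_natCast_atTop_atTop).const_mul a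
  exact tendsto_zero.eventually_le_const hc

lemma exists_mul_natCast_rpow_le {s c : ℝ} (a : ℝ) (hs : s < 0) (hc : 0 < c) :
    ∃ k : ℕ, 0 < k ∧ a * (k : ℝ) ^ s ≤ c :=
  ((eventually_gt_atTop 0).and (eventually_mul_natCast_rpow_le a hs hc)).exists

/-! ### Small samples -/

lemma exp_one_mul_tsum_le {α x : ℝ} (hα : α ∈ Set.Ioo 0 1) (hx : 0 < x) :
    exp 1 * ∑' k : ℕ, (x + (k + 1 : ℕ)) ^ (-α⁻¹) ≤ 3 * (α / (1 - α) * x ^ (1 - α⁻¹)) := by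
  gcongr
  · exact Real.exp_one_lt_three.le
  · exact tsum_add_natCast_rpow_neg_inv_le hα hx

namespace LadderModel

variable {α β C C' : ℝ} {h : ℝ → ℝ} {r n : ℕ} {est : (Fin n → ℕ) → ℝ} {ε : ℝ}

lemma isDefeated_of_shiftable {m : LadderModel} {z : m.Config} {ω : Fin n → ℕ}
    (hz : m.Shiftable z ω) (hr : 1 ≤ r) (hε : 0 < ε) (hε' : ε < 1 / 3) (hεδ : 3 * ε ≤ m.δ * r)
    (hclass : ∀ s z, ∃ L, 1 ≤ L ∧ inSigmaClass α β C C' (m.dist s z) L)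
    (hω : ∀ s z, 1 / 4 ≤ (sampleMeasure (m.dist s z) n).real {ω}) :
    IsDefeated α β C C' h r est ε := by
  have defeated {s z} (hloss : ε < mloss h (est ω) (missingMass (pReal (m.dist s z)) r ω)) :
      IsDefeated α β C C' h r est ε := by
    obtain ⟨L, hL, hmem⟩ := hclass s z
    exact ⟨_, L, hL, hmem, (hω s z).trans (measureReal_mono (Set.singleton_subset_iff.2 hloss))⟩
  by_cases hloss : mloss h (est ω) (missingMass (pReal (m.dist false z)) r ω) ≤ ε
  · exact defeated (not_le.1 (hz.not_mloss_shift_le hr hε hε' hεδ hloss))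
  · exact defeated (not_le.1 hloss)

/-- The ladder model without ladder: a power law and its multiple by `exp 1`, without their `k₀`
largest masses. -/
def powerLawPair (α : ℝ) (k₀ : ℕ) (hα : α ∈ Set.Ioo 0 1) (hk₀ : 0 < k₀)
    (hsum : α / (1 - α) * (k₀ : ℝ) ^ (1 - α⁻¹) ≤ 1 / 6) : LadderModel where
  N := 0
  M := 0
  S := 0
  δ := 1
  v₀ := 1
  c k := (k₀ + (k + 1 : ℕ) : ℝ) ^ (-α⁻¹)
  w _ := 1
  δ_pos := one_pos
  v₀_pos := one_pos
  c_pos k := by positivity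
  summable_c :=
    summable_add_natCast_rpow_neg ((one_lt_inv₀ hα.1).2 hα.2) (Nat.cast_pos.2 hk₀)
  w_pos _ := one_pos
  sum_w := by simp
  heavy := by
    rw [Nat.cast_zero, zero_mul, zero_add]
    linarith [exp_one_mul_tsum_le hα (x := k₀) (Nat.cast_pos.2 hk₀)]

lemma one_sub_le_sampleMeasure_reservoir (m : LadderModel) (s : Bool) (z : m.Config) :
    1 - n * (m.N * m.v₀ + exp m.δ * ∑' k, m.c k)
      ≤ (sampleMeasure (m.dist s z) n).real {fun _ => m.reservoir} := by
  have bernoulli := one_add_mul_le_pow (a := m.reservoirMass s z - 1)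
    (by linarith [m.reservoirMass_pos s z]) n
  have := mul_le_mul_of_nonneg_left (m.one_sub_le_reservoirMass s z) n.cast_nonneg
  simp only [sampleMeasure_real_singleton, pReal_dist_reservoir, Finset.prod_const,
    Finset.card_univ, Fintype.card_fin]
  rw [add_sub_cancel] at bernoulli
  linarith

section NoLadder

variable {m : LadderModel} {k₀ : ℕ} (hN : m.N = 0) (hα : α ∈ Set.Ioo 0 1)

include hN hα

lemma abs_tailF_dist_sub_le_of_no_ladder (hS : m.S = 0)
    (hc : ∀ k, m.c k = (k₀ + (k + 1 : ℕ) : ℝ) ^ (-α⁻¹)) (s : Bool) (z : m.Config) {x : ℝ}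
    (hx : 0 < x) : |(tailF (m.dist s z) x : ℝ) - m.scale s ^ α * x ^ (-α)| ≤ k₀ + 3 := by
  have scale_pos : 0 < m.scale s := one_pos.trans_le (m.one_le_scale s)
  have no_ladder : {j | x < m.rung (z j)}.ncard = 0 := by
    have : IsEmpty (Fin m.N) := hN ▸ Fin.isEmpty
    rw [Set.eq_empty_of_isEmpty {j | _}, Set.ncard_empty]
  have mass_iff (k : ℕ) :
      x < m.fixedMass s k ↔ (k : ℝ) < m.scale s ^ α * x ^ (-α) - (k₀ + 1) := by
    rw [fixedMass, if_neg (hS ▸ Nat.not_lt_zero k), hc, ← div_lt_iff₀' scale_pos,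
      lt_rpow_neg_inv_iff hα.1 (div_pos hx scale_pos) (by positivity),
      Real.div_rpow hx.le scale_pos.le, Real.rpow_neg scale_pos.le, div_inv_eq_mul, mul_comm,
      lt_sub_iff_add_lt]
    push_cast
    rw [add_left_comm]
  have count := abs_ncard_lt_sub_sub_le (b := k₀ + 1) (y := m.scale s ^ α * x ^ (-α))
    (by positivity) (by positivity)
  have tail := m.abs_tailF_dist_sub_le s z hx
  simp only [no_ladder, mass_iff, Nat.cast_zero, zero_add] at tail
  linarith [(abs_sub_le _ _ _).trans (add_le_add tail count)]

lemma inSigmaClass_of_no_ladder (hS : m.S = 0)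
    (hc : ∀ k, m.c k = (k₀ + (k + 1 : ℕ) : ℝ) ^ (-α⁻¹)) (s : Bool) (z : m.Config) (hβ : 0 < β)
    (hβα : β ≤ α) (hC : C ≤ 1) (hC' : k₀ + 3 ≤ C') :
    inSigmaClass α β C C' (m.dist s z) (m.scale s ^ α) := by
  refine inSigmaClass_of_abs_sub_le hβ (Real.one_le_rpow (m.one_le_scale s) hα.1.le) hC hC'
    fun x hx => (abs_tailF_dist_sub_le_of_no_ladder hN hα hS hc s z hx.1).trans ?_
  exact le_mul_of_one_le_right (by positivity)
    (Real.one_le_rpow_of_pos_of_le_one_of_nonpos hx.1 hx.2.le (by linarith))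

end NoLadder

end LadderModel

/-- For bounded sample sizes a heavy reservoir makes the sample constant with probability at least
`1 / 4`, and then nothing is known about the scale of the other masses. -/
theorem exists_forall_isDefeated_of_le {α β : ℝ} (hα : α ∈ Set.Ioo 0 1) (hβ : 0 < β) (hβα : β ≤ α)
    (n₀ : ℕ) : ∃ K : ℝ, ∀ n, 1 ≤ n → n ≤ n₀ → ∀ C ≤ 1, ∀ C' ≥ K, ∀ r : ℕ, 1 ≤ r → ∀ ε : ℝ, 0 < ε →
      ε < 1 / 3 → ∀ (h : ℝ → ℝ) (est : (Fin n → ℕ) → ℝ), IsDefeated α β C C' h r est ε := by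
  obtain ⟨k₀, hk₀, hsum⟩ := exists_mul_natCast_rpow_le (s := 1 - α⁻¹) (c := 1 / (6 * (n₀ + 1)))
    (α / (1 - α)) (sub_neg.2 ((one_lt_inv₀ hα.1).2 hα.2)) (by positivity)
  rw [le_div_iff₀ (by positivity)] at hsum
  have sum_nonneg : 0 ≤ α / (1 - α) * (k₀ : ℝ) ^ (1 - α⁻¹) := by
    have := sub_pos.2 hα.2
    have := hα.1
    positivity
  have hsum' : α / (1 - α) * (k₀ : ℝ) ^ (1 - α⁻¹) ≤ 1 / 6 := by nlinarith
  refine ⟨k₀ + 3, fun n hn hn₀ C hC C' hC' r hr ε hε hε' h est => ?_⟩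
  let m := LadderModel.powerLawPair α k₀ hα hk₀ hsum'
  have shiftable : m.Shiftable (fun j => j.elim0) fun _ : Fin n => m.reservoir :=
    ⟨fun h => h ⟨0, hn⟩ rfl, fun k hk => absurd hk (Nat.not_lt_zero k), fun j => j.elim0⟩
  refine LadderModel.isDefeated_of_shiftable shiftable hr hε hε' ?_ (fun s z => ⟨_,
    Real.one_le_rpow (m.one_le_scale s) hα.1.le, LadderModel.inSigmaClass_of_no_ladder rfl hα rfl
      (fun _ => rfl) s z hβ hβα hC hC'⟩)
    fun s z => le_trans ?_ (m.one_sub_le_sampleMeasure_reservoir s z)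
  · have : (1 : ℝ) ≤ r := Nat.one_le_cast.2 hr
    change 3 * ε ≤ 1 * r
    linarith
  · have : (n : ℝ) ≤ n₀ := Nat.cast_le.2 hn₀
    have := exp_one_mul_tsum_le hα (x := k₀) (Nat.cast_pos.2 hk₀)
    change 1 / 4 ≤ 1 - n * (((0 : ℕ) : ℝ) * 1 + exp 1 * ∑' k : ℕ, (k₀ + (k + 1 : ℕ) : ℝ) ^ (-α⁻¹))
    rw [Nat.cast_zero, zero_mul, zero_add]
    nlinarith

/-! ### Large samples -/

section Defeat

variable {α β C C' : ℝ} {h : ℝ → ℝ} {r n : ℕ} {est : (Fin n → ℕ) → ℝ} {ε : ℝ}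

lemma LadderModel.isDefeated_of_lt {m : LadderModel} {Λ : ℝ} {G : Set m.Config}
    (hδ : exp m.δ ≤ 3 / 2) (hv : m.v₀ ≤ 1 / 2) (hS : ∀ k < m.S, m.v₀ ≤ m.c k)
    (hΛ : ∀ i, |m.logWeightRatio i| ≤ Λ) (hr : 1 ≤ r) (hε : 0 < ε) (hε' : ε < 1 / 3)
    (hεδ : 3 * ε ≤ m.δ * r)
    (hG : ∀ s, ∀ z ∈ G, ∃ L, 1 ≤ L ∧ inSigmaClass α β C C' (m.dist s z) L)
    (hlt : 4 * m.information n + (5 + 4 * (m.N * Λ + n * m.δ)) * ((1 + m.S + m.N)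
      * exp (-(n * m.v₀))) + 2 * m.prior.real Gᶜ < 1 / 4) :
    IsDefeated α β C C' h r est ε := by
  by_contra undefeated
  have joint_le (s) :
      (m.joint n s).real (m.lossEvent est h r ε s) ≤ 1 / 4 + m.prior.real Gᶜ := by
    refine m.joint_real_le (fun z hz => ?_) (by norm_num)
    obtain ⟨L, hL, hmem⟩ := hG s z hz
    by_contra! hlarge
    exact undefeated ⟨_, L, hL, hmem, hlarge.le⟩
  have := m.le_joint_real_lossEvent_add (est := est) (h := h) hδ hv hS hΛ hr hε hε' hεδ
  linarith [joint_le false, joint_le true]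

lemma exp_le_three_div_two {x : ℝ} (hx : x ≤ 1 / 1000) : exp x ≤ 3 / 2 := by
  have := (abs_le.1 (Real.abs_exp_sub_one_le (x := 1 / 1000) (by norm_num))).2
  rw [abs_of_pos (by norm_num)] at this
  linarith [Real.exp_le_exp.2 hx]

namespace PowerLawLadder

variable (p : PowerLawLadder)

lemma natCast_mul_topRung : p.n * p.topRung = exp (p.δ * p.z₀) :=
  mul_div_cancel₀ _ p.natCast_n_pos.ne'

lemma numHeavy_le : (p.numHeavy : ℝ) ≤ p.intensity := by
  have top_le : p.topRung ^ (-p.α) ≤ p.intensity := by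
    rw [topRung_rpow]
    refine mul_le_of_le_one_right p.intensity_pos.le (Real.exp_le_one_iff.2 (neg_nonpos.2 ?_))
    exact mul_nonneg p.α_mul_δ_pos.le p.z₀.cast_nonneg
  calc (p.numHeavy : ℝ) ≤ ⌊p.topRung ^ (-p.α)⌋₊ := Nat.cast_le.2 (Nat.sub_le _ _)
    _ ≤ p.topRung ^ (-p.α) := Nat.floor_le (Real.rpow_nonneg p.topRung_pos.le _)
    _ ≤ p.intensity := top_le

lemma lossBound_ladder_le (hδ : p.δ ≤ 1) : p.ladder.lossBound
    ≤ 4 * p.δ * (p.intensity / p.n * (p.α / (1 - p.α) + 2 * exp (p.δ * p.z₀))) := by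
  have exp_sub_one_le : exp p.δ - 1 ≤ 2 * p.δ := by
    have := (abs_le.1 (Real.abs_exp_sub_one_le (x := p.δ) (by rwa [abs_of_pos p.δ_pos]))).2
    rwa [abs_of_pos p.δ_pos] at this
  have atoms_le : p.ladder.N * p.ladder.v₀ ≤ 2 * p.intensity * (exp (p.δ * p.z₀) / p.n) :=
    mul_le_mul_of_nonneg_right p.natFloor_totalWeight_le p.topRung_pos.le
  calc p.ladder.lossBound
      ≤ 2 * (2 * p.δ * (p.α / (1 - p.α) * (p.intensity / p.n)
          + 2 * p.intensity * (exp (p.δ * p.z₀) / p.n))) := by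
        have := p.ladder.smallMass_nonneg
        have := p.ladder.v₀_pos
        unfold LadderModel.lossBound
        gcongr
        · exact mul_nonneg zero_le_two p.δ_pos.le
        · exact exp_sub_one_le
        · exact p.smallMass_ladder_le
    _ = _ := by ring

lemma information_ladder_le (hv : p.topRung ≤ 1 / 2) (hδ : exp p.δ ≤ 3 / 2)
    (hδE : p.δ * (p.α + 2 * exp (p.δ * p.z₀)) ≤ 1) : p.ladder.information p.n
      ≤ 3 / 2 * (p.α * p.δ) + 16 * p.α ^ 2 * (p.δ ^ 2 * p.intensity)
        + 96 * p.α * (p.δ ^ 2 * p.intensity) * (1 + p.δ)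
        + p.δ ^ 2 * p.intensity * (p.α / (1 - p.α))
        + 16 * (p.δ ^ 2 * p.intensity)
          * (p.intensity / p.n * (p.α / (1 - p.α) + 2 * exp (p.δ * p.z₀)) ^ 2) := by
  have δ_le : p.δ ≤ 1 := by linarith [add_one_le_exp p.δ]
  have second_order : exp p.δ - 1 - p.δ ≤ p.δ ^ 2 :=
    (le_abs_self _).trans (Real.abs_exp_sub_one_sub_id_le (by rwa [abs_of_pos p.δ_pos]))
  have rungs := p.neg_mul_sum_w_mul_rungInfo_le hv hδ (by rwa [natCast_mul_topRung])
  have small : p.n * (exp p.δ - 1 - p.δ) * p.ladder.smallMass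
      ≤ p.n * p.δ ^ 2 * (p.α / (1 - p.α) * (p.intensity / p.n)) := by
    gcongr
    · exact p.ladder.smallMass_nonneg
    · exact p.smallMass_ladder_le
  have loss := mul_le_mul_of_nonneg_left
    (pow_le_pow_left₀ p.ladder.lossBound_nonneg (p.lossBound_ladder_le δ_le) 2) p.n.cast_nonneg
  have n_ne := p.natCast_n_pos.ne'
  have small_eq : p.n * p.δ ^ 2 * (p.α / (1 - p.α) * (p.intensity / p.n))
      = p.δ ^ 2 * p.intensity * (p.α / (1 - p.α)) := by field_simp
  have loss_eq (y : ℝ) : p.n * (4 * p.δ * (p.intensity / p.n * y)) ^ 2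
      = 16 * (p.δ ^ 2 * p.intensity) * (p.intensity / p.n * y ^ 2) := by
    field_simp
    ring
  rw [small_eq] at small
  rw [loss_eq] at loss
  unfold LadderModel.information
  exact add_le_add (add_le_add rungs small) loss

lemma information_ladder_le_const (hv : p.topRung ≤ 1 / 2) (hδ : p.δ ≤ 1 / 1000)
    (hδE : p.δ * (p.α + 2 * exp (p.δ * p.z₀)) ≤ 1)
    (hD : p.α * (p.δ ^ 2 * p.intensity) ≤ (1 - p.α) / 4096)
    (hloss : 16 * (p.δ ^ 2 * p.intensity)
      * (p.intensity / p.n * (p.α / (1 - p.α) + 2 * exp (p.δ * p.z₀)) ^ 2) ≤ 1 / 10000) :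
    p.ladder.information p.n ≤ 3 / 100 := by
  have := p.information_ladder_le hv (exp_le_three_div_two hδ) hδE
  have := p.α_pos
  have := p.α_lt_one
  have : p.δ ^ 2 * p.intensity * (p.α / (1 - p.α)) ≤ 1 / 4096 := by
    rw [mul_div_assoc', div_le_iff₀ (by linarith), mul_comm _ p.α]
    linarith
  have : p.α * p.δ ≤ 1 / 1000 := by nlinarith [p.δ_pos]
  have : p.α ^ 2 * (p.δ ^ 2 * p.intensity) ≤ 1 / 4096 := by nlinarith
  have : p.α * (p.δ ^ 2 * p.intensity) * (1 + p.δ) ≤ 1001 / 1000 / 4096 := by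
    nlinarith [p.δ_pos]
  linarith

lemma inSigmaClass_of_typical (s : Bool) {z : p.ladder.Config} {t : ℝ} (hz : p.ladder.Typical t z)
    (hβ : 0 < β) (hαδ : p.α * p.δ ≤ 1) (hC : C ≤ 1)
    (hlarge : ∀ x, p.topRung ≤ x → x < 1 →
      p.k₀ + 5 + 2 * (p.α * p.δ) * x ^ (-p.α) ≤ C' * x ^ (β - p.α))
    (hsmall : ∀ x, 0 < x → x < p.topRung →
      p.k₀ + 6 + t + 2 * (p.intensity * (p.α * p.δ)) ≤ C' * x ^ (β - p.α)) :
    inSigmaClass p.α β C C' (p.ladder.dist s z) (p.ladder.scale s ^ p.α) := by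
  refine inSigmaClass_of_abs_sub_le hβ (Real.one_le_rpow (p.ladder.one_le_scale s) p.α_pos.le) hC
    le_rfl fun x hx => ?_
  rcases le_or_gt p.topRung x with hx' | hx'
  · exact (p.abs_tailF_sub_le_of_topRung_le s z hαδ hx').trans (hlarge x hx' hx.2)
  · exact (p.abs_tailF_sub_le_of_lt_topRung s hz hx.1 hx').trans (hsmall x hx.1 hx')

lemma intensity_le : p.intensity ≤ p.n :=
  Real.rpow_le_self_of_one_le (Nat.one_le_cast.2 p.n_pos) p.α_lt_one.le

lemma exceptional_term_le (hδ : p.δ ≤ 1 / 1000) :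
    (5 + 4 * (p.ladder.N * (p.α * p.δ) + p.n * p.δ))
        * ((1 + p.ladder.S + p.ladder.N) * exp (-(p.n * p.ladder.v₀)))
      ≤ 24 * (p.n : ℝ) ^ 2 * exp (-exp (p.δ * p.z₀)) := by
  have one_le_n : (1 : ℝ) ≤ p.n := Nat.one_le_cast.2 p.n_pos
  have N_le : (p.ladder.N : ℝ) ≤ 2 * p.n :=
    p.natFloor_totalWeight_le.trans (mul_le_mul_of_nonneg_left p.intensity_le zero_le_two)
  have S_le : (p.ladder.S : ℝ) ≤ p.n := p.numHeavy_le.trans p.intensity_le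
  have αδ_le : p.α * p.δ ≤ 1 / 1000 := by nlinarith [p.δ_pos, p.α_lt_one]
  have gain_le : 5 + 4 * (p.ladder.N * (p.α * p.δ) + p.n * p.δ) ≤ 6 * p.n := by
    have := mul_le_mul N_le αδ_le p.α_mul_δ_pos.le (by positivity)
    nlinarith
  have v₀_eq : p.n * p.ladder.v₀ = exp (p.δ * p.z₀) := p.natCast_mul_topRung
  calc _ ≤ 6 * p.n * (4 * p.n * exp (-exp (p.δ * p.z₀))) := by
        rw [v₀_eq]
        have := p.α_mul_δ_pos
        have := p.δ_pos
        gcongr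
        linarith
    _ = 24 * (p.n : ℝ) ^ 2 * exp (-exp (p.δ * p.z₀)) := by ring

theorem isDefeated {t : ℝ} (hr : 1 ≤ r) (hε : 0 < ε) (hε' : ε < 1 / 3) (hεδ : 3 * ε ≤ p.δ * r)
    (ht : 0 ≤ t) (hv : p.topRung ≤ 1 / 2) (hδ : p.δ ≤ 1 / 1000)
    (hδE : p.δ * (p.α + 2 * exp (p.δ * p.z₀)) ≤ 1)
    (hD : p.α * (p.δ ^ 2 * p.intensity) ≤ (1 - p.α) / 4096)
    (hloss : 16 * (p.δ ^ 2 * p.intensity)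
      * (p.intensity / p.n * (p.α / (1 - p.α) + 2 * exp (p.δ * p.z₀)) ^ 2) ≤ 1 / 10000)
    (hE : 24 * (p.n : ℝ) ^ 2 * exp (-exp (p.δ * p.z₀)) ≤ 1 / 100)
    (htyp : 4 * (p.M + 1) * exp (-(t ^ 2 / p.intensity)) ≤ 1 / 100)
    (hclass : ∀ s z, p.ladder.Typical t z →
      inSigmaClass p.α β C C' (p.ladder.dist s z) (p.ladder.scale s ^ p.α))
    (h : ℝ → ℝ) (est : (Fin p.n → ℕ) → ℝ) : IsDefeated p.α β C C' h r est ε := by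
  have atypical := p.ladder.prior_real_not_typical_le_of_le ht p.natFloor_totalWeight_le
  have information_le := p.information_ladder_le_const hv hδ hδE hD hloss
  have exceptional_le := p.exceptional_term_le hδ
  have M_eq : (p.ladder.M : ℝ) = p.M := rfl
  have δ_eq : p.ladder.δ = p.δ := rfl
  rw [mul_div_mul_left _ _ two_ne_zero, M_eq] at atypical
  refine LadderModel.isDefeated_of_lt (exp_le_three_div_two hδ) hv
    (fun k hk => p.topRung_le_baseMass hk) p.abs_logWeightRatio_ladder_le hr hε hε' hεδ
    (G := {z | p.ladder.Typical t z})
    (fun s z hz => ⟨_, Real.one_le_rpow (p.ladder.one_le_scale s) p.α_pos.le, hclass s z hz⟩) ?_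
  rw [δ_eq]
  linarith

end PowerLawLadder

end Defeat

/-- The sample sizes `n` for which the lower bound comes from a ladder of step `D n^(-α/2)` that
starts a factor `n^ζ` above the critical mass `1 / n`; the empirical counts of the rungs deviate
from their means by less than `n^(α/2+η)`. -/
structure IsLargeSample (α β D ζ η : ℝ) (k₀ n : ℕ) : Prop where
  α_mem : α ∈ Set.Ioo 0 1
  β_pos : 0 < β
  D_pos : 0 < D
  ζ_pos : 0 < ζ
  ζ_le_η : ζ ≤ η
  β_add_le : β + 2 * η ≤ α / 2
  α_mul_sq_D_le : α * D ^ 2 ≤ (1 - α) / 4096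
  k₀_pos : 0 < k₀
  heavy_le : α / (1 - α) * (k₀ : ℝ) ^ (1 - α⁻¹) ≤ 1 / 8
  two_le_n : 2 ≤ n
  step_le : 4000 * D * (n : ℝ) ^ (ζ - α / 2) ≤ 1
  mass_le : (3 + 2 * (α / (1 - α))) * (n : ℝ) ^ (α - 1 + ζ) ≤ 1 / 4
  loss_le : 16 * D ^ 2 * (α / (1 - α) + 3) ^ 2 * (n : ℝ) ^ (α - 1 + 2 * ζ) ≤ 1 / 10000
  exceptional_le : 24 * ((n : ℝ) ^ 2 * exp (-(n : ℝ) ^ ζ)) ≤ 1 / 100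
  atypical_le : 4 * (2 / D + 3) * ((n : ℝ) ^ 2 * exp (-(n : ℝ) ^ (2 * η))) ≤ 1 / 100

namespace IsLargeSample

variable {α β D ζ η : ℝ} {k₀ n : ℕ}

section Ladder

variable (α D ζ n) in
/-- The logarithmic distance between two rungs. -/
def step : ℝ := D * (n : ℝ) ^ (-(α / 2))

variable (α D ζ n) in
/-- The number of rungs above the critical mass `1 / n`. -/
def startRung : ℕ := ⌈ζ * Real.log n / step α D n⌉₊

variable (h : IsLargeSample α β D ζ η k₀ n)

include h

lemma one_le_n : (1 : ℝ) ≤ n := Nat.one_le_cast.2 (one_le_two.trans h.two_le_n)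

lemma n_pos : (0 : ℝ) < n := one_pos.trans_le h.one_le_n

lemma step_pos : 0 < step α D n := mul_pos h.D_pos (Real.rpow_pos_of_pos h.n_pos _)

lemma one_le_rpow_ζ : 1 ≤ (n : ℝ) ^ ζ := Real.one_le_rpow h.one_le_n h.ζ_pos.le

lemma step_mul_rpow_ζ_le : step α D n * (n : ℝ) ^ ζ ≤ 1 / 4000 := by
  have := h.step_le
  rw [sub_eq_neg_add, Real.rpow_add h.n_pos] at this
  unfold step
  linarith

lemma step_le_one_div : step α D n ≤ 1 / 1000 := by
  have := le_mul_of_one_le_right h.step_pos.le h.one_le_rpow_ζ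
  linarith [h.step_mul_rpow_ζ_le]

lemma step_mul_rpow : step α D n * (n : ℝ) ^ α = D * (n : ℝ) ^ (α / 2) := by
  rw [step, mul_assoc, ← Real.rpow_add h.n_pos]
  ring_nf

lemma sq_step_mul_rpow : step α D n ^ 2 * (n : ℝ) ^ α = D ^ 2 := by
  rw [sq, mul_assoc, h.step_mul_rpow, step, mul_mul_mul_comm, ← Real.rpow_add h.n_pos,
    neg_add_cancel, Real.rpow_zero]
  ring

lemma startRung_pos : 0 < startRung α D ζ n :=
  Nat.ceil_pos.2 (div_pos (mul_pos h.ζ_pos (Real.log_pos (Nat.one_lt_cast.2 h.two_le_n)))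
    h.step_pos)

lemma startRung_lt : startRung α D ζ n < ζ * Real.log n / step α D n + 1 :=
  Nat.ceil_lt_add_one (div_nonneg (mul_nonneg h.ζ_pos.le (Real.log_nonneg h.one_le_n))
    h.step_pos.le)

lemma rpow_ζ_le_exp : (n : ℝ) ^ ζ ≤ exp (step α D n * startRung α D ζ n) := by
  rw [Real.rpow_def_of_pos h.n_pos, exp_le_exp, mul_comm, ← div_le_iff₀' h.step_pos]
  exact Nat.le_ceil _

lemma exp_le_rpow_ζ : exp (step α D n * startRung α D ζ n) ≤ 3 / 2 * (n : ℝ) ^ ζ := by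
  have exponent_le : step α D n * startRung α D ζ n ≤ step α D n + Real.log n * ζ := by
    have := mul_le_mul_of_nonneg_left h.startRung_lt.le h.step_pos.le
    rw [mul_add, mul_div_cancel₀ _ h.step_pos.ne'] at this
    linarith
  calc exp (step α D n * startRung α D ζ n) ≤ exp (step α D n + Real.log n * ζ) :=
        exp_le_exp.2 exponent_le
    _ = exp (step α D n) * (n : ℝ) ^ ζ := by rw [exp_add, Real.rpow_def_of_pos h.n_pos]
    _ ≤ 3 / 2 * (n : ℝ) ^ ζ := by gcongr; exact exp_le_three_div_two h.step_le_one_div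

lemma rpow_α_div : (n : ℝ) ^ α / n = (n : ℝ) ^ (α - 1) := (Real.rpow_sub_one h.n_pos.ne' α).symm

lemma rpow_mul_exp_div_le : (n : ℝ) ^ α * (exp (step α D n * startRung α D ζ n) / n)
    ≤ 3 / 2 * (n : ℝ) ^ (α - 1 + ζ) := by
  calc (n : ℝ) ^ α * (exp (step α D n * startRung α D ζ n) / n)
      = (n : ℝ) ^ (α - 1) * exp (step α D n * startRung α D ζ n) := by
        rw [← h.rpow_α_div]; ring
    _ ≤ (n : ℝ) ^ (α - 1) * (3 / 2 * (n : ℝ) ^ ζ) := by gcongr; exact h.exp_le_rpow_ζ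
    _ = 3 / 2 * (n : ℝ) ^ (α - 1 + ζ) := by rw [Real.rpow_add h.n_pos]; ring

lemma ratio_nonneg : 0 ≤ α / (1 - α) := div_nonneg h.α_mem.1.le (sub_nonneg.2 h.α_mem.2.le)

lemma total_mass_le : 2 * (n : ℝ) ^ α * (exp (step α D n * startRung α D ζ n) / n)
    + exp (step α D n) * (α / (1 - α) * ((k₀ : ℝ) ^ (1 - α⁻¹) + (n : ℝ) ^ α / n)) ≤ 1 / 2 := by
  have ladder_le := h.rpow_mul_exp_div_le
  have light_le : (n : ℝ) ^ α / n ≤ (n : ℝ) ^ (α - 1 + ζ) := by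
    rw [h.rpow_α_div]
    exact Real.rpow_le_rpow_of_exponent_le h.one_le_n (by linarith [h.ζ_pos])
  have fixed_le : exp (step α D n) * (α / (1 - α) * ((k₀ : ℝ) ^ (1 - α⁻¹) + (n : ℝ) ^ α / n))
      ≤ 3 / 2 * (1 / 8 + α / (1 - α) * (n : ℝ) ^ (α - 1 + ζ)) := by
    have := h.ratio_nonneg
    rw [mul_add]
    gcongr
    · exact exp_le_three_div_two h.step_le_one_div
    · exact h.heavy_le
  have := mul_nonneg h.ratio_nonneg (Real.rpow_nonneg h.n_pos.le (α - 1 + ζ))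
  linarith [h.mass_le]

/-- The ladder with power law masses that defeats the estimators from samples of size `n`. -/
def ladder : PowerLawLadder where
  α := α
  δ := step α D n
  n := n
  z₀ := startRung α D ζ n
  M := startRung α D ζ n + ⌈Real.log n / step α D n⌉₊
  k₀ := k₀
  α_pos := h.α_mem.1
  α_lt_one := h.α_mem.2
  δ_pos := h.step_pos
  n_pos := Nat.cast_pos.1 h.n_pos
  z₀_pos := h.startRung_pos
  z₀_le := Nat.le_add_right _ _
  log_n_le := by
    have := (div_le_iff₀' h.step_pos).1 (Nat.le_ceil (Real.log n / step α D n))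
    push_cast
    linarith [h.step_pos]
  k₀_pos := h.k₀_pos
  mass_le := h.total_mass_le

end Ladder

section Conditions

variable (h : IsLargeSample α β D ζ η k₀ n)

include h

lemma topRung_le : h.ladder.topRung ≤ 3 / 2 * (n : ℝ) ^ (ζ - 1) := by
  rw [Real.rpow_sub_one h.n_pos.ne', ← mul_div_assoc]
  exact div_le_div_of_nonneg_right h.exp_le_rpow_ζ h.n_pos.le

lemma topRung_le_half : h.ladder.topRung ≤ 1 / 2 := by
  have rpow_le : (n : ℝ) ^ (ζ - 1) ≤ (n : ℝ) ^ (α - 1 + ζ) :=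
    Real.rpow_le_rpow_of_exponent_le h.one_le_n (by linarith [h.α_mem.1])
  have := mul_nonneg h.ratio_nonneg (Real.rpow_nonneg h.n_pos.le (α - 1 + ζ))
  linarith [h.topRung_le, h.mass_le]

lemma step_mul_le : step α D n * (α + 2 * exp (step α D n * startRung α D ζ n)) ≤ 1 := by
  have : step α D n * (α + 2 * exp (step α D n * startRung α D ζ n))
      ≤ step α D n * (4 * (n : ℝ) ^ ζ) :=
    mul_le_mul_of_nonneg_left (by linarith [h.α_mem.2, h.one_le_rpow_ζ, h.exp_le_rpow_ζ])
      h.step_pos.le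
  linarith [h.step_mul_rpow_ζ_le]

lemma lossBound_le : 16 * (step α D n ^ 2 * (n : ℝ) ^ α) * ((n : ℝ) ^ α / n
    * (α / (1 - α) + 2 * exp (step α D n * startRung α D ζ n)) ^ 2) ≤ 1 / 10000 := by
  have ratio_nonneg := h.ratio_nonneg
  have factor_le : α / (1 - α) + 2 * exp (step α D n * startRung α D ζ n)
      ≤ (α / (1 - α) + 3) * (n : ℝ) ^ ζ := by
    have := mul_le_mul_of_nonneg_left h.one_le_rpow_ζ ratio_nonneg
    linarith [h.exp_le_rpow_ζ]
  have rpow_eq : (n : ℝ) ^ (α - 1) * ((n : ℝ) ^ ζ) ^ 2 = (n : ℝ) ^ (α - 1 + 2 * ζ) := by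
    rw [Real.rpow_add h.n_pos, mul_comm 2, Real.rpow_mul h.n_pos.le, Real.rpow_two]
  calc _ ≤ 16 * D ^ 2 * ((n : ℝ) ^ (α - 1) * ((α / (1 - α) + 3) * (n : ℝ) ^ ζ) ^ 2) := by
        rw [h.sq_step_mul_rpow, h.rpow_α_div]
        gcongr
    _ = 16 * D ^ 2 * (α / (1 - α) + 3) ^ 2 * (n : ℝ) ^ (α - 1 + 2 * ζ) := by
        rw [← rpow_eq]; ring
    _ ≤ 1 / 10000 := h.loss_le

lemma ladder_M_add_one_le : (h.ladder.M : ℝ) + 1 ≤ (2 / D + 3) * (n : ℝ) ^ 2 := by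
  have hD := h.D_pos
  have log_le : Real.log n / step α D n ≤ (n : ℝ) ^ 2 / D := by
    have log_le_n : Real.log n ≤ n := (Real.log_le_sub_one_of_pos h.n_pos).trans (by linarith)
    have inv_step : (step α D n)⁻¹ ≤ n / D := by
      rw [step, mul_inv, Real.rpow_neg h.n_pos.le, inv_inv, mul_comm, ← div_eq_mul_inv]
      gcongr
      exact Real.rpow_le_self_of_one_le h.one_le_n (by linarith [h.α_mem.2])
    calc Real.log n / step α D n ≤ n * (n / D) :=
          mul_le_mul log_le_n inv_step (inv_pos.2 h.step_pos).le h.n_pos.le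
      _ = (n : ℝ) ^ 2 / D := by ring
  have log_nonneg : 0 ≤ Real.log n / step α D n :=
    div_nonneg (Real.log_nonneg h.one_le_n) h.step_pos.le
  have start_lt := h.startRung_lt
  have ζ_le_one : ζ ≤ 1 := by linarith [h.ζ_le_η, h.β_add_le, h.β_pos, h.α_mem.2, h.ζ_pos]
  rw [mul_div_assoc] at start_lt
  have := mul_le_of_le_one_left log_nonneg ζ_le_one
  have := Nat.ceil_lt_add_one log_nonneg
  have one_le_sq := one_le_pow₀ h.one_le_n (n := 2)
  have M_eq : (h.ladder.M : ℝ) = startRung α D ζ n + ⌈Real.log n / step α D n⌉₊ := Nat.cast_add _ _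
  rw [M_eq, add_mul, div_mul_eq_mul_div, mul_div_assoc]
  linarith

lemma atypical_ladder_le :
    4 * ((h.ladder.M : ℝ) + 1) * exp (-(((n : ℝ) ^ (α / 2 + η)) ^ 2 / (n : ℝ) ^ α)) ≤ 1 / 100 := by
  have exponent_eq : ((n : ℝ) ^ (α / 2 + η)) ^ 2 / (n : ℝ) ^ α = (n : ℝ) ^ (2 * η) := by
    rw [← Real.rpow_two, ← Real.rpow_mul h.n_pos.le, ← Real.rpow_sub h.n_pos]
    ring_nf
  calc _ ≤ 4 * ((2 / D + 3) * (n : ℝ) ^ 2) * exp (-(n : ℝ) ^ (2 * η)) := by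
        rw [exponent_eq]
        gcongr
        exact h.ladder_M_add_one_le
    _ = 4 * (2 / D + 3) * ((n : ℝ) ^ 2 * exp (-(n : ℝ) ^ (2 * η))) := by ring
    _ ≤ 1 / 100 := h.atypical_le

lemma exceptional_ladder_le :
    24 * (n : ℝ) ^ 2 * exp (-exp (step α D n * startRung α D ζ n)) ≤ 1 / 100 := by
  refine le_trans ?_ h.exceptional_le
  rw [← mul_assoc]
  gcongr
  exact h.rpow_ζ_le_exp

end Conditions

section Membership

variable (h : IsLargeSample α β D ζ η k₀ n)

include h

lemma β_le_half : β ≤ α / 2 := by linarith [h.β_add_le, h.ζ_pos, h.ζ_le_η]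

lemma β_lt_α : β < α := by linarith [h.β_le_half, h.α_mem.1]

lemma step_le_mul_rpow {x : ℝ} (hx : h.ladder.topRung ≤ x) : step α D n ≤ D * x ^ β := by
  have inv_le : (n : ℝ)⁻¹ ≤ x := by
    refine le_trans ?_ hx
    rw [inv_eq_one_div]
    have := mul_nonneg h.step_pos.le (startRung α D ζ n).cast_nonneg
    exact div_le_div_of_nonneg_right (Real.one_le_exp this) h.n_pos.le
  refine mul_le_mul_of_nonneg_left ?_ h.D_pos.le
  calc (n : ℝ) ^ (-(α / 2)) ≤ (n : ℝ) ^ (-β) :=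
        Real.rpow_le_rpow_of_exponent_le h.one_le_n (neg_le_neg h.β_le_half)
    _ = (n : ℝ)⁻¹ ^ β := (Real.rpow_neg_eq_inv_rpow _ _)
    _ ≤ x ^ β := Real.rpow_le_rpow (inv_nonneg.2 h.n_pos.le) inv_le h.β_pos.le

lemma rpow_le_of_lt_topRung {x : ℝ} (hx : 0 < x) (hx' : x < h.ladder.topRung) :
    2 / 3 * (n : ℝ) ^ (α / 2 + η) ≤ x ^ (β - α) := by
  have exponent_le : α / 2 + η ≤ (ζ - 1) * (β - α) := by
    have := mul_le_of_le_one_right h.ζ_pos.le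
      (show α - β ≤ 1 by linarith [h.α_mem.2, h.β_pos])
    linarith [h.ζ_le_η, h.β_add_le]
  calc 2 / 3 * (n : ℝ) ^ (α / 2 + η)
      ≤ (3 / 2 : ℝ) ^ (β - α) * (n : ℝ) ^ ((ζ - 1) * (β - α)) := by
        gcongr
        · rw [show (2 / 3 : ℝ) = (3 / 2) ^ (-1 : ℝ) by norm_num [Real.rpow_neg_one]]
          exact Real.rpow_le_rpow_of_exponent_le (by norm_num) (by linarith [h.α_mem.2, h.β_pos])
        · exact h.one_le_n
    _ = (3 / 2 * (n : ℝ) ^ (ζ - 1)) ^ (β - α) := by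
        rw [Real.mul_rpow (by norm_num) (Real.rpow_nonneg h.n_pos.le _),
          ← Real.rpow_mul h.n_pos.le]
    _ ≤ x ^ (β - α) := Real.rpow_le_rpow_of_nonpos hx (hx'.le.trans h.topRung_le)
        (by linarith [h.β_lt_α])

lemma large_mass_le {x : ℝ} (hx : h.ladder.topRung ≤ x) (hx' : x < 1) :
    k₀ + 5 + 2 * (α * step α D n) * x ^ (-α)
      ≤ 3 / 2 * (k₀ + 7 + 2 * (α * D)) * x ^ (β - α) := by
  have hx0 := h.ladder.topRung_pos.trans_le hx
  have one_le : 1 ≤ x ^ (β - α) :=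
    Real.one_le_rpow_of_pos_of_le_one_of_nonpos hx0 hx'.le (by linarith [h.β_lt_α])
  have αD_pos := mul_pos h.α_mem.1 h.D_pos
  calc k₀ + 5 + 2 * (α * step α D n) * x ^ (-α)
      ≤ (k₀ + 5) * x ^ (β - α) + 2 * (α * (D * x ^ β)) * x ^ (-α) := by
        gcongr
        · exact le_mul_of_one_le_right (by positivity) one_le
        · exact h.α_mem.1.le
        · exact h.step_le_mul_rpow hx
    _ = (k₀ + 5 + 2 * (α * D)) * x ^ (β - α) := by
        rw [sub_eq_add_neg, Real.rpow_add hx0]; ring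
    _ ≤ 3 / 2 * (k₀ + 7 + 2 * (α * D)) * x ^ (β - α) := by
        gcongr
        linarith [k₀.cast_nonneg (α := ℝ)]

lemma small_mass_le {x : ℝ} (hx : 0 < x) (hx' : x < h.ladder.topRung) :
    k₀ + 6 + (n : ℝ) ^ (α / 2 + η) + 2 * ((n : ℝ) ^ α * (α * step α D n))
      ≤ 3 / 2 * (k₀ + 7 + 2 * (α * D)) * x ^ (β - α) := by
  have αD_pos := mul_pos h.α_mem.1 h.D_pos
  have η_nonneg : 0 ≤ η := h.ζ_pos.le.trans h.ζ_le_η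
  calc k₀ + 6 + (n : ℝ) ^ (α / 2 + η) + 2 * ((n : ℝ) ^ α * (α * step α D n))
      = k₀ + 6 + (n : ℝ) ^ (α / 2 + η) + 2 * (α * D) * (n : ℝ) ^ (α / 2) := by
        linear_combination 2 * α * h.step_mul_rpow
    _ ≤ (k₀ + 6) * (n : ℝ) ^ (α / 2 + η) + (n : ℝ) ^ (α / 2 + η)
          + 2 * (α * D) * (n : ℝ) ^ (α / 2 + η) := by
        gcongr
        · exact le_mul_of_one_le_right (by positivity)
            (Real.one_le_rpow h.one_le_n (by linarith [h.α_mem.1]))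
        · exact h.one_le_n
        · linarith
    _ = 3 / 2 * (k₀ + 7 + 2 * (α * D)) * (2 / 3 * (n : ℝ) ^ (α / 2 + η)) := by ring
    _ ≤ 3 / 2 * (k₀ + 7 + 2 * (α * D)) * x ^ (β - α) := by
        gcongr
        exact h.rpow_le_of_lt_topRung hx hx'

theorem isDefeated {C C' ε : ℝ} {r : ℕ} (hC : C ≤ 1)
    (hC' : 3 / 2 * (k₀ + 7 + 2 * (α * D)) ≤ C') (hr : 1 ≤ r) (hε : 0 < ε) (hε' : ε < 1 / 3)
    (hεD : 3 * ε ≤ D * (n : ℝ) ^ (-(α / 2)) * r) (g : ℝ → ℝ) (est : (Fin n → ℕ) → ℝ) :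
    IsDefeated α β C C' g r est ε := by
  have αδ_le : α * step α D n ≤ 1 := by nlinarith [h.α_mem.2, h.α_mem.1, h.step_le_one_div]
  refine h.ladder.isDefeated (t := (n : ℝ) ^ (α / 2 + η)) hr hε hε' hεD
    (Real.rpow_nonneg h.n_pos.le _) h.topRung_le_half h.step_le_one_div h.step_mul_le
    ((congrArg (α * ·) h.sq_step_mul_rpow).trans_le h.α_mul_sq_D_le) h.lossBound_le
    h.exceptional_ladder_le h.atypical_ladder_le (fun s z hz => ?_) g est
  refine h.ladder.inSigmaClass_of_typical s hz h.β_pos αδ_le hC (fun x hx hx' => ?_)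
    fun x hx hx' => ?_
  · exact (h.large_mass_le hx hx').trans (mul_le_mul_of_nonneg_right hC'
      (Real.rpow_nonneg (h.ladder.topRung_pos.le.trans hx) _))
  · exact (h.small_mass_le hx hx').trans (mul_le_mul_of_nonneg_right hC'
      (Real.rpow_nonneg hx.le _))

end Membership

end IsLargeSample

section Existence

variable {α β : ℝ}

lemma eventually_mul_sq_mul_exp_neg_rpow_le (a : ℝ) {b c : ℝ} (hb : 0 < b) (hc : 0 < c) :
    ∀ᶠ n : ℕ in atTop, a * ((n : ℝ) ^ 2 * exp (-(n : ℝ) ^ b)) ≤ c := by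
  have tendsto_zero : Tendsto (fun n : ℕ => a * ((n : ℝ) ^ 2 * exp (-(n : ℝ) ^ b))) atTop
      (nhds (a * 0)) := by
    refine (((tendsto_rpow_mul_exp_neg_mul_atTop_nhds_zero (2 / b) 1 one_pos).comp
      ((tendsto_rpow_atTop hb).comp tendsto_natCast_atTop_atTop)).congr fun n => ?_).const_mul a
    simp only [Function.comp_apply, neg_one_mul]
    rw [← Real.rpow_mul n.cast_nonneg, mul_div_cancel₀ _ hb.ne', Real.rpow_two]
  rw [mul_zero] at tendsto_zero
  exact tendsto_zero.eventually_le_const hc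

lemma exists_eventually_isLargeSample (hα : α ∈ Set.Ioo 0 1) (hβ : 0 < β) (hβα : β < α / 2) :
    ∃ ζ η k₀, ∀ᶠ n : ℕ in atTop, IsLargeSample α β (√((1 - α) / α) / 64) ζ η k₀ n := by
  obtain ⟨hα0, hα1⟩ := hα
  have ratio_pos : 0 < (1 - α) / α := div_pos (sub_pos.2 hα1) hα0
  set D := √((1 - α) / α) / 64 with hD
  set η := (α / 2 - β) / 2 with hη
  set ζ := min η ((1 - α) / 4)
  have ζ_le_η : ζ ≤ η := min_le_left _ _
  have ζ_le : ζ ≤ (1 - α) / 4 := min_le_right _ _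
  have ζ_pos : 0 < ζ := lt_min (by linarith) (by linarith)
  have sq_D : α * D ^ 2 = (1 - α) / 4096 := by
    rw [hD, div_pow, Real.sq_sqrt ratio_pos.le]
    field_simp
    norm_num
  obtain ⟨k₀, k₀_pos, heavy_le⟩ := exists_mul_natCast_rpow_le (α / (1 - α))
    (sub_neg.2 ((one_lt_inv₀ hα0).2 hα1)) (show (0 : ℝ) < 1 / 8 by norm_num)
  refine ⟨ζ, η, k₀, ?_⟩
  filter_upwards [eventually_ge_atTop 2,
    eventually_mul_natCast_rpow_le (4000 * D) (show ζ - α / 2 < 0 by linarith) one_pos,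
    eventually_mul_natCast_rpow_le (3 + 2 * (α / (1 - α))) (show α - 1 + ζ < 0 by linarith)
      (show (0 : ℝ) < 1 / 4 by norm_num),
    eventually_mul_natCast_rpow_le (16 * D ^ 2 * (α / (1 - α) + 3) ^ 2)
      (show α - 1 + 2 * ζ < 0 by linarith) (show (0 : ℝ) < 1 / 10000 by norm_num),
    eventually_mul_sq_mul_exp_neg_rpow_le 24 ζ_pos (show (0 : ℝ) < 1 / 100 by norm_num),
    eventually_mul_sq_mul_exp_neg_rpow_le (4 * (2 / D + 3)) (show 0 < 2 * η by linarith)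
      (show (0 : ℝ) < 1 / 100 by norm_num)]
    with n two_le_n step_le mass_le loss_le exceptional_le atypical_le
  exact ⟨⟨hα0, hα1⟩, hβ, by positivity, ζ_pos, ζ_le_η, by linarith, sq_D.le, k₀_pos, heavy_le,
    two_le_n, step_le, mass_le, loss_le, exceptional_le, atypical_le⟩

theorem exists_forall_isDefeated_of_ge (hα : α ∈ Set.Ioo 0 1) (hβ : 0 < β) (hβα : β < α / 2) :
    ∃ (K : ℝ) (n₀ : ℕ), ∀ n ≥ n₀, ∀ C ≤ 1, ∀ C' ≥ K, ∀ r : ℕ, 1 ≤ r → ∀ ε : ℝ, 0 < ε → ε < 1 / 3 →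
      3 * ε ≤ √((1 - α) / α) / 64 * (n : ℝ) ^ (-(α / 2)) * r →
      ∀ (h : ℝ → ℝ) (est : (Fin n → ℕ) → ℝ), IsDefeated α β C C' h r est ε := by
  obtain ⟨ζ, η, k₀, large⟩ := exists_eventually_isLargeSample hα hβ hβα
  obtain ⟨n₀, hn₀⟩ := eventually_atTop.1 large
  exact ⟨_, n₀, fun n hn C hC C' hC' r hr ε hε hε' hεD =>
    (hn₀ n hn).isDefeated hC hC' hr hε hε' hεD⟩

end Existence

/-! ### The minimax bound -/

section Minimax

variable {α β : ℝ}

lemma one_half_le_mul_Gamma (hα : α ∈ Set.Ioo 0 1) : 1 / 2 ≤ (1 - α) * Real.Gamma (1 - α) := by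
  obtain ⟨hα0, hα1⟩ := hα
  have Gamma_two_sub : Real.Gamma (2 - α) = (1 - α) * Real.Gamma (1 - α) := by
    rw [← Real.Gamma_add_one (by linarith)]; ring_nf
  have Gamma_three_sub : Real.Gamma (3 - α) = (2 - α) * Real.Gamma (2 - α) := by
    rw [← Real.Gamma_add_one (by linarith)]; ring_nf
  have convex := Real.convexOn_Gamma.2 (x := 2 - α) (y := 3 - α) (Set.mem_Ioi.2 (by linarith))
    (Set.mem_Ioi.2 (by linarith)) (sub_nonneg.2 hα1.le) hα0.le (sub_add_cancel 1 α)
  simp only [smul_eq_mul] at convex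
  rw [show (1 - α) * (2 - α) + α * (3 - α) = 2 by ring, Real.Gamma_two, Gamma_three_sub] at convex
  have Gamma_pos : 0 < Real.Gamma (2 - α) := Real.Gamma_pos_of_pos (by linarith)
  have weight_le : (1 - α) + α * (2 - α) ≤ 2 := by nlinarith
  rw [← Gamma_two_sub]
  linarith [mul_le_mul_of_nonneg_right weight_le Gamma_pos.le]

lemma le_of_le_one_div_mul_Gamma {C : ℝ} (hα : α ∈ Set.Ioo 0 1)
    (hC : C ≤ 1 / (64 * Real.pi * Real.Gamma (1 - α))) : C ≤ (1 - α) / 96 := by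
  have Gamma_pos : 0 < Real.Gamma (1 - α) := Real.Gamma_pos_of_pos (sub_pos.2 hα.2)
  refine hC.trans ?_
  rw [div_le_div_iff₀ (by positivity) (by norm_num)]
  nlinarith [Real.pi_gt_three, one_half_le_mul_Gamma hα]

/-- The multiplicative loss to be exceeded when `L_α(P) = 1`. -/
def lossThreshold (α C : ℝ) (r n : ℕ) : ℝ :=
  √C * min (r / (8 * √(6 * α))) ((n : ℝ) ^ (α / 2) / 2) / (n : ℝ) ^ (α / 2)

variable {C : ℝ} {r n : ℕ}

lemma lossThreshold_pos (hα : 0 < α) (hC : 0 < C) (hr : 1 ≤ r) (hn : 1 ≤ n) :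
    0 < lossThreshold α C r n := by
  unfold lossThreshold
  positivity

lemma lossThreshold_lt (hα : 0 < α) (hC : C ≤ (1 - α) / 96) (hn : 1 ≤ n) :
    lossThreshold α C r n < 1 / 3 := by
  have sqrt_C_le : √C ≤ 1 / 2 := Real.sqrt_le_iff.2 ⟨by norm_num, by linarith⟩
  have : 0 < (n : ℝ) ^ (α / 2) := Real.rpow_pos_of_pos (Nat.cast_pos.2 hn) _
  calc lossThreshold α C r n ≤ 1 / 2 * ((n : ℝ) ^ (α / 2) / 2) / (n : ℝ) ^ (α / 2) := by
        unfold lossThreshold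
        gcongr
        exact min_le_right _ _
    _ = 1 / 4 := by field_simp; norm_num
    _ < 1 / 3 := by norm_num

lemma three_mul_lossThreshold_le (hα : α ∈ Set.Ioo 0 1) (hC : C ≤ (1 - α) / 96) :
    3 * lossThreshold α C r n ≤ √((1 - α) / α) / 64 * (n : ℝ) ^ (-(α / 2)) * r := by
  obtain ⟨hα0, hα1⟩ := hα
  have ratio_le : √C / √(6 * α) ≤ √((1 - α) / α) / 24 := by
    rw [← Real.sqrt_div' _ (by positivity)]
    refine Real.sqrt_le_iff.2 ⟨by positivity, ?_⟩
    rw [div_pow, Real.sq_sqrt (div_nonneg (sub_nonneg.2 hα1.le) hα0.le)]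
    calc C / (6 * α) ≤ (1 - α) / 96 / (6 * α) := by gcongr
      _ = (1 - α) / α / 24 ^ 2 := by field_simp; norm_num
  calc 3 * lossThreshold α C r n ≤ 3 * (√C * (r / (8 * √(6 * α))) / (n : ℝ) ^ (α / 2)) := by
        unfold lossThreshold
        gcongr
        exact min_le_left _ _
    _ = 3 / 8 * (√C / √(6 * α)) * (n : ℝ) ^ (-(α / 2)) * r := by
        rw [Real.rpow_neg n.cast_nonneg]; ring
    _ ≤ 3 / 8 * (√((1 - α) / α) / 24) * (n : ℝ) ^ (-(α / 2)) * r := by gcongr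
    _ = √((1 - α) / α) / 64 * (n : ℝ) ^ (-(α / 2)) * r := by ring

lemma IsDefeated.one_div_four_le_iSup {C' : ℝ} {h : ℝ → ℝ} {est : (Fin n → ℕ) → ℝ} {c : ℝ}
    (hc : 0 ≤ c) (hn : 1 ≤ n) (defeated : IsDefeated α β C C' h r est (c / (n : ℝ) ^ (α / 2))) :
    (1 / 4 : ℝ≥0∞) ≤ ⨆ (P : PMF ℕ) (Lα : ℝ) (_ : inSigmaClass α β C C' P Lα),
      sampleMeasure P n {ω | √((n : ℝ) ^ α * Lα) *
        mloss h (est ω) (missingMass (pReal P) r ω) > c} := by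
  obtain ⟨P, L, hL, hmem, hP⟩ := defeated
  have n_pos : (0 : ℝ) < n := Nat.cast_pos.2 hn
  have rpow_pos : 0 < (n : ℝ) ^ (α / 2) := Real.rpow_pos_of_pos n_pos _
  have rpow_le_sqrt : (n : ℝ) ^ (α / 2) ≤ √((n : ℝ) ^ α * L) := by
    refine Real.le_sqrt_of_sq_le ?_
    rw [← Real.rpow_mul_natCast n_pos.le, Nat.cast_two, div_mul_cancel₀ _ two_ne_zero]
    exact le_mul_of_one_le_right (Real.rpow_nonneg n_pos.le _) hL
  have prob_le : ENNReal.ofReal (1 / 4) ≤ sampleMeasure P n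
      {ω | c / (n : ℝ) ^ (α / 2) < mloss h (est ω) (missingMass (pReal P) r ω)} :=
    ENNReal.ofReal_le_of_le_toReal hP
  have of_real : (1 / 4 : ℝ≥0∞) = ENNReal.ofReal (1 / 4) := by
    rw [ENNReal.ofReal_div_of_pos (by norm_num)]
    norm_num
  refine (of_real.trans_le prob_le).trans ((measure_mono fun ω hω => ?_).trans
    (le_iSup_of_le P (le_iSup_of_le L (le_iSup_of_le hmem le_rfl))))
  have loss_gt : c / (n : ℝ) ^ (α / 2) < mloss h (est ω) (missingMass (pReal P) r ω) := hω
  calc c < (n : ℝ) ^ (α / 2) * mloss h (est ω) (missingMass (pReal P) r ω) :=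
        (div_lt_iff₀' rpow_pos).1 loss_gt
    _ ≤ √((n : ℝ) ^ α * L) * mloss h (est ω) (missingMass (pReal P) r ω) :=
        mul_le_mul_of_nonneg_right rpow_le_sqrt ((div_nonneg hc rpow_pos.le).trans loss_gt.le)

end Minimax

theorem missingMass_minimax_lower_bound_general
    (α β : ℝ) (hα : α ∈ Set.Ioo (0 : ℝ) 1) (hβ : 0 < β) (hβα : β < α / 2) :
    ∃ Cab : ℝ, ∀ n : ℕ, 1 ≤ n → ∀ r : ℕ, 1 ≤ r → ∀ C : ℝ, 0 < C → C ≤ (1 - α) / 96 →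
      ∀ C' : ℝ, Cab < C' → ∀ (est : (Fin n → ℕ) → ℝ) (h : ℝ → ℝ),
      (1 / 4 : ℝ≥0∞) ≤
        ⨆ (P : PMF ℕ) (Lα : ℝ) (_ : inSigmaClass α β C C' P Lα),
          sampleMeasure P n
            {ω | √((n : ℝ) ^ α * Lα) * mloss h (est ω) (missingMass (pReal P) r ω) >
              √C * min (r / (8 * √(6 * α))) ((n : ℝ) ^ (α / 2) / 2)} := by
  obtain ⟨K₁, n₀, large⟩ := exists_forall_isDefeated_of_ge hα hβ hβα
  obtain ⟨K₂, small⟩ := exists_forall_isDefeated_of_le hα hβ (by linarith [hα.1]) n₀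
  refine ⟨max K₁ K₂, fun n hn r hr C hC hC_le C' hC' est h => ?_⟩
  have C_le_one : C ≤ 1 := by linarith [hα.1]
  have ε_pos := lossThreshold_pos hα.1 hC hr hn
  have ε_lt := lossThreshold_lt (r := r) hα.1 hC_le hn
  have defeated : IsDefeated α β C C' h r est (lossThreshold α C r n) := by
    rcases le_total n n₀ with n_le | le_n
    · exact small n hn n_le C C_le_one C' ((le_max_right _ _).trans hC'.le) r hr _ ε_pos ε_lt h est
    · exact large n le_n C C_le_one C' ((le_max_left _ _).trans hC'.le) r hr _ ε_pos ε_lt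
        (three_mul_lossThreshold_le hα hC_le) h est
  exact defeated.one_div_four_le_iSup (by positivity) hn

/-- Minimax lower bound over the second-order regularly varying class `Σ(α,β,C,C')` for the
estimation of the `r`-order missing mass. -/
theorem missingMass_minimax_lower_bound
    (α β : ℝ) (hα : α ∈ Set.Ioo (0 : ℝ) 1) (hβ : 0 < β) (hβα : β < α / 2) :
    ∃ Cab : ℝ, ∀ n : ℕ, max 4 ((12 * α) ^ (1 / (1 - α))) ≤ (n : ℝ) →
      ∀ r : ℕ, 1 ≤ r →
      ∀ C : ℝ, 0 < C → C ≤ 1 / (64 * Real.pi * Real.Gamma (1 - α)) →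
      ∀ C' : ℝ, Cab < C' →
      ∀ est : (Fin n → ℕ) → ℝ, Measurable est →
      ∀ h : ℝ → ℝ, Measurable h →
      (1 / 4 : ℝ≥0∞) ≤
        ⨆ (P : PMF ℕ) (Lα : ℝ) (_ : inSigmaClass α β C C' P Lα),
          sampleMeasure P n
            {ω | Real.sqrt ((n : ℝ) ^ α * Lα) *
                  mloss h (est ω) (missingMass (pReal P) r ω) >
                Real.sqrt C * min ((r : ℝ) / (8 * Real.sqrt (6 * α))) ((n : ℝ) ^ (α / 2) / 2)} := by
  obtain ⟨Cab, bound⟩ := missingMass_minimax_lower_bound_general α β hα hβ hβα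
  exact ⟨Cab, fun n hn r hr C hC hC_le C' hC' est _ h _ => bound n
    (by exact_mod_cast (by linarith [(le_max_left _ _).trans hn] : (1 : ℝ) ≤ n)) r hr C hC
    (le_of_le_one_div_mul_Gamma hα hC_le) C' hC' est h⟩

end
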